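/- Let n ≥ 2 and r be integers with 2^{n−1} − 1 ≤ r ≤ 2^n − 2, and set N = r + n. Then a double cover of ℙ^N branched along a very general complex hypersurface of even degree d ≥ 2^{n+1} + 2n − 2 having multiplicity d − 2 along a fixed (r−1)-dimensional linear subspace is not stably rational. -/

import Mathlib

/-!
The proof degenerates to characteristic two and obstructs rationality with a determinant of
logarithmic derivatives.

*Degeneration.* A very general `F` has algebraically independent coefficients
(`veryGenerallyOn_of_injective`), so `ℂ` has a valuation ring `V` of residue characteristic two over
which `F` reduces to a prescribed member of the linear system (`exists_degen`). The one used is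
`∑_j c_j(x) y_j² + b(x) y_α y_β` (`FormData.form`, with `y_β = 1`), where modulo squares `c_j` is
the product of the `x_l / x_0` over `l ∈ I_j`, the `I_j` being distinct nonempty subsets of
`{1, …, n}`. There are `r + 1 ≤ 2 ^ n - 1` of them, so such subsets exist (`exists_formData`).

*Curves.* If the double cover is stably rational, the birational parametrisation restricted to a
line `u ↦ t + c u` gives, after clearing denominators, a polynomial curve `u ↦ (x(u), y(u))` over
the cone ring on which `F` is a square, whose value `x(0)` is proportional to the generic point and
whose top coefficient is proportional to a constant vector `κ ∈ ℂ ^ (n + 1)` (`exists_curve`).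

*Invariant.* In characteristic two the derivations `b ∂/∂x_j + (∂F/∂x_j) ∂/∂y_α` kill the special
form, hence extend to the function field `L` of the reduced double cover, killing `s`
(`baseDer`, `quadDer`). For `x ∈ L ^ (n + 1)` consider the determinant of the logarithmic derivatives
of the ratios `x_i / x_0` along these derivations (`logMat`, `Nondeg`). It is nonzero at the generic
point and zero at constant points.

*One edge.* For a curve over `L` on which the special form is a square, this determinant is a
rational function of `u`. At a finite place either all `x_i` have the same valuation and the
determinant is visibly integral, or the equation `s² = form`, whose squares are constants for every
derivation, yields a linear relation with a unit coefficient among the logarithmic derivatives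
(`exists_unit_relation`, `hasRel_of_form`), which again forces integrality
(`val_det_le_one_of_disc`). So the determinant is a polynomial in `u`; if it is nonzero at `u = 0`,
it does not vanish at infinity, and therefore the end coefficient vector of the curve is again
nondegenerate (`edge`).

*Newton polygon.* Over `V` the curve is cut along its Newton polygon into edges, each of which
reduces to a curve over `L`; nondegeneracy travels from the coefficient of `u ^ 0` to the top
coefficient (`chain`). The former is generic and the latter constant, a contradiction (`no_curve`,
`core`). That the cone ring is a domain also follows by reduction (`IsPlace.isDomain`,
`isDomain_quadratic`).
-/

noncomputable section
open MvPolynomial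

/-- The rational function field `ℂ(t₁, …, t_d)`. -/
abbrev RatFF (d : ℕ) : Type := FractionRing (MvPolynomial (Fin d) ℂ)

/-- An affine ℂ-algebra `R` (a chart, or an affine cone, of a variety `V`) has stably
rational fraction field: `Frac(R)(y₁,…,y_m) ≅ ℂ(t₁,…,t_d)` for some `m`, `d`.
If `R` is the coordinate ring of the affine cone over a projective variety `V`
(so that `Frac R = ℂ(V)(t)` is stably birational to `ℂ(V)`), this holds if and only if
`V` is stably rational, i.e. `V × ℙᵐ` is birational to a projective space for some `m`. -/
def IsStablyRationalSpec (R : Type*) [CommRing R] [Algebra ℂ R] : Prop :=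
  ∃ m d : ℕ, Nonempty (FractionRing (MvPolynomial (Fin m) R) ≃ₐ[ℂ] RatFF d)

/-- The fraction field of the affine ℂ-algebra `R` embeds into a purely transcendental
extension of `ℂ`.  If `R` is the coordinate ring of the affine cone over a projective
variety `V`, this holds if and only if `V` is unirational. -/
def IsUnirationalSpec (R : Type*) [CommRing R] [Algebra ℂ R] : Prop :=
  ∃ d : ℕ, Nonempty (FractionRing R →ₐ[ℂ] RatFF d)

/-- `Z` is an algebraic (Zariski closed) subset of a parameter space `V` with coordinates
`coords`: it is the common zero locus of a set of polynomial functions in the coordinates. -/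
def IsAlgSubsetOn {V : Type*} (coords : Set (V → ℂ)) (Z : Set V) : Prop :=
  ∃ S : Set (V → ℂ),
    S ⊆ ↑(Algebra.adjoin ℂ coords) ∧ Z = {v | ∀ f ∈ S, f v = 0}

/-- `P` holds for a very general point of the parameter space `V`: it holds away from a
countable union of proper algebraic subsets. -/
def VeryGenerallyOn {V : Type*} (coords : Set (V → ℂ)) (P : V → Prop) : Prop :=
  ∃ Z : ℕ → Set V,
    (∀ m, IsAlgSubsetOn coords (Z m) ∧ Z m ≠ Set.univ) ∧ ∀ v, (∀ m, v ∉ Z m) → P v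

noncomputable section
open MvPolynomial

/-- Homogeneous coordinate ring `ℂ[x₀,…,xₙ, y₀,…,y_{r-1}]` of `ℙᴺ` with `N = n + r`;
the fixed `(r-1)`-plane is `P = {x₀ = ⋯ = xₙ = 0}`. -/
abbrev DCAmb (n r : ℕ) := MvPolynomial (Fin (n+1) ⊕ Fin r) ℂ

/-- The linear system of hypersurfaces `D = {F = 0} ⊂ ℙᴺ` (`N = n + r`) of degree `d`
with multiplicity at least `d - 2` along the `(r-1)`-plane `P = {x = 0}`. -/
def BranchSpace (n r d : ℕ) : Type :=
  {F : DCAmb n r // ∀ m : (Fin (n+1) ⊕ Fin r) →₀ ℕ, coeff m F ≠ 0 →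
    (∑ i, m (Sum.inl i)) + (∑ j, m (Sum.inr j)) = d ∧ d - 2 ≤ ∑ i, m (Sum.inl i)}

/-- The coefficients, as coordinates on this linear system. -/
def branchCoords (n r d : ℕ) : Set (BranchSpace n r d → ℂ) :=
  {f | ∃ m : (Fin (n+1) ⊕ Fin r) →₀ ℕ, f = fun F => coeff m F.1}

/-- The coordinate ring `ℂ[x, y, s]/(s² - F)` of the affine cone over the double cover
`X → ℙᴺ` branched along `D = {F = 0}` (`s` has weight `d/2`); the corresponding affine
variety is stably birational to `X`. -/
def DoubleCoverConeRing {n r d : ℕ} (F : BranchSpace n r d) : Type :=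
  MvPolynomial ((Fin (n+1) ⊕ Fin r) ⊕ Fin 1) ℂ ⧸
    Ideal.span {X (Sum.inr 0) ^ 2 - rename Sum.inl F.1}

instance {n r d : ℕ} (F : BranchSpace n r d) : CommRing (DoubleCoverConeRing F) :=
  Ideal.Quotient.commRing _
instance {n r d : ℕ} (F : BranchSpace n r d) : Algebra ℂ (DoubleCoverConeRing F) :=
  Ideal.Quotient.algebra ℂ

end
end

/-! ### Logarithmic derivatives and valuations -/

section LocalLemma

variable {E : Type*} [Field E] {Γ₀ : Type*} [LinearOrderedCommGroupWithZero Γ₀]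

theorem deriv_prod_log {ι : Type*} (D : Derivation ℤ E E) (z : ι → E)
    (s : Finset ι) (hz : ∀ i ∈ s, z i ≠ 0) :
    D (∏ i ∈ s, z i) = (∏ i ∈ s, z i) * ∑ i ∈ s, D (z i) / z i := by
  classical
  induction s using Finset.induction_on with
  | empty => simp
  | insert a s ha ih =>
    have h0 := hz a (Finset.mem_insert_self _ _)
    rw [Finset.prod_insert ha, Finset.sum_insert ha, D.leibniz,
      ih fun i hi => hz i (Finset.mem_insert_of_mem hi)]
    simp only [smul_eq_mul]
    field_simp
    ring

theorem deriv_sq_char_two [CharP E 2] (D : Derivation ℤ E E) (b : E) : D (b ^ 2) = 0 := by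
  rw [D.leibniz_pow]
  have : (2 : ℕ) • (b ^ (2 - 1) • D b) = 0 := by
    rw [nsmul_eq_mul, CharP.cast_eq_zero, zero_mul]
  exact this

/-- A term `g * ∏ z_i * b²` has logarithmic derivative independent of `b` in characteristic two. -/
theorem deriv_term [CharP E 2] {n : ℕ} (D : Derivation ℤ E E) (z : Fin n → E)
    (hz : ∀ i, z i ≠ 0) (g b : E) (hg : g ≠ 0) (I : Finset (Fin n)) :
    D (g * (∏ i ∈ I, z i) * b ^ 2) =
      (g * (∏ i ∈ I, z i) * b ^ 2) * (D g / g + ∑ i ∈ I, D (z i) / z i) := by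
  rw [D.leibniz, deriv_sq_char_two, D.leibniz, deriv_prod_log D z I fun i _ => hz i]
  simp only [smul_eq_mul]
  field_simp
  ring

/-- Suppose integral terms `a_j = g ∏_{i ∈ I_j} z_i b_j²`, at least one of them a unit, have a sum
`ε` in the maximal ideal. Differentiating this sum gives a linear relation among the logarithmic
derivatives of the `z_i`, with coefficients `θ_i` the sum of the `a_l` with `i ∈ I_l`. After passing
to a minimal subfamily some `θ_i` is a unit: it is a proper subsum that contains a unit term. -/
theorem exists_unit_relation [CharP E 2] {n : ℕ} {J : Type*}
    (v : Valuation E Γ₀) (z : Fin n → E) (hz : ∀ i, z i ≠ 0) (g : E) (hg : g ≠ 0)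
    (I : J → Finset (Fin n)) (hI : Function.Injective I) (b : J → E) (S : Finset J)
    (a : J → E) (ha : ∀ j ∈ S, a j = g * (∏ i ∈ I j, z i) * b j ^ 2)
    (hle : ∀ j ∈ S, v (a j) ≤ 1) (hu : ∃ j ∈ S, v (a j) = 1) (hsum : v (∑ j ∈ S, a j) < 1) :
    ∃ (θ : Fin n → E) (ε : E) (i₀ : Fin n), v (θ i₀) = 1 ∧ v ε < 1 ∧
      ∀ D : Derivation ℤ E E, ∑ i, θ i * (D (z i) / z i) = D ε - ε * (D g / g) := by
  classical
  -- a minimal subfamily with a unit term and non-unit sum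
  induction S using Finset.strongInduction with
  | H S ih =>
    by_cases hmin : ∃ T ⊂ S, (∃ j ∈ T, v (a j) = 1) ∧ v (∑ j ∈ T, a j) < 1
    · obtain ⟨T, hT, hTu, hTs⟩ := hmin
      exact ih T hT (fun j hj => ha j (hT.1 hj)) (fun j hj => hle j (hT.1 hj)) hTu hTs
    · push Not at hmin
      obtain ⟨j, hjS, hj⟩ := hu
      obtain ⟨k, hkS, hkj, hk⟩ : ∃ k ∈ S, k ≠ j ∧ v (a k) = 1 := by
        by_contra hcon
        push Not at hcon
        have h1 : v (∑ l ∈ S.erase j, a l) < 1 := by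
          refine v.map_sum_lt one_ne_zero fun l hl => ?_
          have := Finset.mem_erase.1 hl
          exact lt_of_le_of_ne (hle l this.2) (hcon l this.2 this.1)
        rw [← Finset.add_sum_erase S a hjS, v.map_add_eq_of_lt_left (by rw [hj]; exact h1), hj]
          at hsum
        exact lt_irrefl _ hsum
      have hIne : I j ≠ I k := fun h => hkj (hI h).symm
      obtain ⟨i₀, hi₀⟩ : ∃ i, (i ∈ I j ∧ i ∉ I k) ∨ (i ∈ I k ∧ i ∉ I j) := by
        by_contra hcon
        push Not at hcon
        exact hIne (Finset.ext fun i => ⟨(hcon i).1, (hcon i).2⟩)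
      refine ⟨fun i => ∑ l ∈ S with i ∈ I l, a l, ∑ l ∈ S, a l, i₀, ?_, hsum, ?_⟩
      · have hle' : v (∑ l ∈ S with i₀ ∈ I l, a l) ≤ 1 :=
          v.map_sum_le fun l hl => hle l (Finset.mem_filter.1 hl).1
        refine le_antisymm hle' (hmin _ ?_ ?_)
        · rw [Finset.filter_ssubset]
          rcases hi₀ with h | h
          · exact ⟨k, hkS, h.2⟩
          · exact ⟨j, hjS, h.2⟩
        · rcases hi₀ with h | h
          · exact ⟨j, Finset.mem_filter.2 ⟨hjS, h.1⟩, hj⟩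
          · exact ⟨k, Finset.mem_filter.2 ⟨hkS, h.1⟩, hk⟩
      · intro D
        have h1 : D (∑ l ∈ S, a l) =
            ∑ l ∈ S, (a l * (D g / g) + ∑ i, if i ∈ I l then a l * (D (z i) / z i) else 0) := by
          rw [map_sum]
          refine Finset.sum_congr rfl fun l hl => ?_
          rw [Finset.sum_ite_mem, Finset.univ_inter, ← Finset.mul_sum, ← mul_add, ha l hl]
          exact deriv_term D z hz g (b l) hg (I l)
        rw [h1, Finset.sum_add_distrib, Finset.sum_comm, ← Finset.sum_mul, add_sub_cancel_left]
        refine Finset.sum_congr rfl fun i _ => ?_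
        rw [Finset.sum_mul, Finset.sum_filter]

/-- The matrix of logarithmic derivatives `D_j(z_i) / z_i`. -/
def logMat {n : ℕ} (D : Fin n → Derivation ℤ E E) (z : Fin n → E) : Matrix (Fin n) (Fin n) E :=
  Matrix.of fun i j => D j (z i) / z i

theorem val_det_le_one {n : ℕ} (v : Valuation E Γ₀) (M : Matrix (Fin n) (Fin n) E)
    (h : ∀ i j, v (M i j) ≤ 1) : v M.det ≤ 1 := by
  rw [Matrix.det_apply]
  refine v.map_sum_le fun σ _ => ?_
  rw [Units.smul_def, zsmul_eq_mul, map_mul, map_prod]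
  refine mul_le_one' ?_ (Finset.prod_le_one' fun i _ => h _ _)
  rcases Int.units_eq_one_or (Equiv.Perm.sign σ) with h | h <;> simp [h, Valuation.map_neg]

/-- Replacing a row by a linear combination `ρ` of the rows multiplies the determinant by `θ i₀`. -/
theorem smul_det_eq_of_relation {n : ℕ} (D : Fin n → Derivation ℤ E E) (z θ : Fin n → E)
    (i₀ : Fin n) (ρ : Fin n → E) (h : ∀ j, ∑ i, θ i * (D j (z i) / z i) = ρ j) :
    θ i₀ * (logMat D z).det = ((logMat D z).updateRow i₀ ρ).det := by
  have h2 : ρ = ∑ k, θ k • (logMat D z) k := by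
    ext j
    rw [← h j, Finset.sum_apply]
    rfl
  rw [h2, Matrix.det_updateRow_sum]
  rfl

/-- For logarithmic derivations (those not increasing the valuation), a relation with a unit
coefficient puts the determinant into the maximal ideal. -/
theorem val_det_lt_one_of_log {n : ℕ} (v : Valuation E Γ₀) (D : Fin n → Derivation ℤ E E)
    (hlog : ∀ j x, v (D j x) ≤ v x) (z θ : Fin n → E) (hz : ∀ i, z i ≠ 0) (g ε : E) (hg : g ≠ 0)
    (i₀ : Fin n) (hθ : v (θ i₀) = 1) (hε : v ε < 1)
    (h : ∀ D : Derivation ℤ E E, ∑ i, θ i * (D (z i) / z i) = D ε - ε * (D g / g)) :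
    v (logMat D z).det < 1 := by
  have hdl : ∀ j x, x ≠ 0 → v (D j x / x) ≤ 1 := fun j x hx => by
    rw [map_div₀]; exact div_le_one_of_le₀ (hlog j x) zero_le
  have h1 := smul_det_eq_of_relation D z θ i₀ _ fun j => h (D j)
  have h2 : v (logMat D z).det = v (θ i₀ * (logMat D z).det) := by rw [map_mul, hθ, one_mul]
  have hρ : ∀ j, v (D j ε - ε * (D j g / g)) ≤ v ε := fun j => by
    refine v.map_sub_le (hlog j ε) ?_
    rw [map_mul]
    exact mul_le_of_le_one_right' (hdl j g hg)
  rw [h2, h1]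
  by_cases hε0 : ε = 0
  · have : (fun j => D j ε - ε * (D j g / g)) = 0 := by ext j; simp [hε0]
    rw [this, Matrix.det_eq_zero_of_row_eq_zero i₀ (by simp)]
    simp
  · have h3 : (fun j => D j ε - ε * (D j g / g)) =
        ε • fun j => (D j ε - ε * (D j g / g)) / ε := by
      ext j; simp only [Pi.smul_apply, smul_eq_mul]; field_simp
    rw [h3, Matrix.det_updateRow_smul, map_mul]
    refine lt_of_le_of_lt (mul_le_of_le_one_right' ?_) hε
    refine val_det_le_one v _ fun i j => ?_
    by_cases hi : i = i₀
    · subst hi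
      rw [Matrix.updateRow_self, map_div₀]
      exact div_le_one_of_le₀ (hρ j) zero_le
    · rw [Matrix.updateRow_ne hi]
      exact hdl j _ (hz i)


/-- For a discrete valuation and a derivation preserving integrality, logarithmic derivatives are
bounded as soon as that of the uniformizer `π` is. -/
theorem val_logDeriv_aux (v : Valuation E Γ₀) (π : E) (hπ0 : π ≠ 0)
    (hdisc : ∀ x, x ≠ 0 → ∃ k : ℤ, v x = v π ^ k) (D : Derivation ℤ E E)
    (hD : ∀ x, v x ≤ 1 → v (D x) ≤ 1) (c : Γ₀) (hc1 : 1 ≤ c) (hc : v (D π / π) ≤ c)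
    (x : E) (hx : x ≠ 0) : v (D x / x) ≤ c := by
  obtain ⟨k, hk⟩ := hdisc x hx
  have hπk : π ^ k ≠ 0 := zpow_ne_zero k hπ0
  obtain ⟨y, rfl⟩ : ∃ y, x = π ^ k * y := ⟨x / π ^ k, by field_simp⟩
  have hy0 : y ≠ 0 := right_ne_zero_of_mul hx
  have hy : v y = 1 := by
    have h0 : v (π ^ k) ≠ 0 := (Valuation.ne_zero_iff v).2 hπk
    rw [map_mul, ← map_zpow₀] at hk
    exact mul_left_cancel₀ h0 (by rw [hk, mul_one])
  have h1 : D (π ^ k * y) / (π ^ k * y) = (k : E) * (D π / π) + D y / y := by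
    rw [D.leibniz, D.leibniz_zpow]
    simp only [smul_eq_mul, zsmul_eq_mul]
    rw [zpow_sub₀ hπ0, zpow_one]
    field_simp
    ring
  rw [h1]
  have hkle : v (k : E) ≤ 1 := intCast_mem v.integer k
  refine (v.map_add _ _).trans (max_le ?_ ?_)
  · rw [map_mul]
    exact (mul_le_of_le_one_left' hkle).trans hc
  · rw [map_div₀, hy, div_one]
    exact (hD y hy.le).trans hc1

/-- Integrality of a determinant after multiplying column `j₀` by `π` and row `i₀` by `π⁻¹`. -/
theorem val_det_scale {n : ℕ} (v : Valuation E Γ₀) (π : E) (hπ0 : π ≠ 0)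
    (M : Matrix (Fin n) (Fin n) E) (i₀ j₀ : Fin n)
    (h00 : v (M i₀ j₀) ≤ 1) (h01 : ∀ j, j ≠ j₀ → v (M i₀ j) ≤ v π)
    (h10 : ∀ i, i ≠ i₀ → v (M i j₀) * v π ≤ 1)
    (h11 : ∀ i j, i ≠ i₀ → j ≠ j₀ → v (M i j) ≤ 1) : v M.det ≤ 1 := by
  have hv0 : v π ≠ 0 := (Valuation.ne_zero_iff v).2 hπ0
  have h1 : (Matrix.of fun i j => (if i = i₀ then π⁻¹ else 1) *
      (Matrix.of fun i j => (if j = j₀ then π else 1) * M i j) i j).det = M.det := by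
    rw [Matrix.det_mul_column, Matrix.det_mul_row, Finset.prod_ite_eq' , Finset.prod_ite_eq']
    simp [hπ0]
  rw [← h1]
  refine val_det_le_one v _ fun i j => ?_
  simp only [Matrix.of_apply, map_mul]
  by_cases hi : i = i₀ <;> by_cases hj : j = j₀
  · subst hi hj
    simp only [if_true, map_inv₀]
    rw [← mul_assoc, inv_mul_cancel₀ hv0, one_mul]; exact h00
  · subst hi
    simp only [if_true, hj, if_false, map_inv₀, map_one, one_mul]
    rw [← inv_mul_cancel₀ hv0]
    exact mul_le_mul_right (h01 j hj) _
  · subst hj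
    simp only [if_true, hi, if_false, map_one, one_mul]
    rw [mul_comm]; exact h10 i hi
  · simp only [hi, hj, if_false, map_one, one_mul]
    exact h11 i j hi hj

/-- For a discrete valuation and derivations preserving integrality, a relation with a unit
coefficient makes the determinant integral, although logarithmic derivatives may have a simple
pole. -/
theorem val_det_le_one_of_disc {n : ℕ} (v : Valuation E Γ₀) (π : E) (hπ0 : π ≠ 0)
    (hπ1 : v π < 1) (hunif : ∀ x, v x < 1 → v x ≤ v π)
    (hdisc : ∀ x, x ≠ 0 → ∃ k : ℤ, v x = v π ^ k)
    (D : Fin n → Derivation ℤ E E) (hD : ∀ j x, v x ≤ 1 → v (D j x) ≤ 1)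
    (z θ : Fin n → E) (hz : ∀ i, z i ≠ 0) (g ε : E) (hg : g ≠ 0)
    (i₀ : Fin n) (hθ : v (θ i₀) = 1) (hε : v ε < 1)
    (h : ∀ D : Derivation ℤ E E, ∑ i, θ i * (D (z i) / z i) = D ε - ε * (D g / g)) :
    v (logMat D z).det ≤ 1 := by
  have hv0 : v π ≠ 0 := (Valuation.ne_zero_iff v).2 hπ0
  have hlogD : ∀ D : Derivation ℤ E E, (∀ x, v x ≤ 1 → v (D x) ≤ 1) → v (D π) < 1 →
      ∀ x, v (D x) ≤ v x := by
    intro D hD hDπ x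
    by_cases hx : x = 0
    · simp [hx]
    have := val_logDeriv_aux v π hπ0 hdisc D hD 1 le_rfl (by
      rw [map_div₀]; exact div_le_one_of_le₀ (hunif _ hDπ) zero_le) x hx
    rw [map_div₀] at this
    exact (div_le_one₀ (zero_lt_iff.2 ((Valuation.ne_zero_iff v).2 hx))).1 this
  by_cases hall : ∀ j, v (D j π) < 1
  · exact (val_det_lt_one_of_log v D (fun j => hlogD (D j) (hD j) (hall j)) z θ hz g ε hg i₀ hθ
      hε h).le
  push Not at hall
  obtain ⟨j₀, hj₀⟩ := hall
  have hu : v (D j₀ π) = 1 := le_antisymm (hD _ _ hπ1.le) hj₀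
  have hu0 : D j₀ π ≠ 0 := fun h => by simp [h] at hu
  -- Column operations: subtracting multiples of `D j₀` makes all other derivations kill `π`, hence
  -- logarithmic, without changing the determinant.
  set c : Fin n → E := fun j => if j = j₀ then 0 else D j π / D j₀ π with hc
  have hcle : ∀ j, v (c j) ≤ 1 := fun j => by
    simp only [hc]; split_ifs
    · simp
    · rw [map_div₀, hu, div_one]; exact hD _ _ hπ1.le
  set D' : Fin n → Derivation ℤ E E := fun j => D j - c j • D j₀ with hD'
  have hD'0 : D' j₀ = D j₀ := by simp [hD', hc]
  have hD'O : ∀ j x, v x ≤ 1 → v (D' j x) ≤ 1 := fun j x hx => by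
    simp only [hD', Derivation.sub_apply, Derivation.smul_apply, smul_eq_mul]
    refine v.map_sub_le (hD _ _ hx) ?_
    rw [map_mul]
    exact mul_le_one' (hcle j) (hD _ _ hx)
  have hD'log : ∀ j, j ≠ j₀ → ∀ x, v (D' j x) ≤ v x := fun j hj => by
    refine hlogD _ (hD'O j) ?_
    simp only [hD', hc, hj, if_false, Derivation.sub_apply, Derivation.smul_apply, smul_eq_mul]
    rw [div_mul_cancel₀ _ hu0, sub_self, map_zero]
    exact zero_lt_one
  have hdet : (logMat D' z).det = (logMat D z).det := by
    symm
    rw [← Matrix.det_transpose, ← Matrix.det_transpose (logMat D' z)]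
    refine Matrix.det_eq_of_forall_row_eq_smul_add_const c j₀ (by simp [hc]) fun j i => ?_
    have : D j₀ (z i) = D' j₀ (z i) := by rw [hD'0]
    simp only [logMat, Matrix.transpose_apply, Matrix.of_apply]
    simp only [hD', Derivation.sub_apply, Derivation.smul_apply, smul_eq_mul]
    have hc0 : c j₀ = 0 := by simp [hc]
    rw [hc0]
    ring
  have h1 := smul_det_eq_of_relation D' z θ i₀ _ fun j => h (D' j)
  have h2 : v (logMat D z).det = v (θ i₀ * (logMat D' z).det) := by
    rw [map_mul, hθ, one_mul, hdet]
  have hdl : ∀ j x, j ≠ j₀ → x ≠ 0 → v (D' j x / x) ≤ 1 := fun j x hj hx => by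
    rw [map_div₀]; exact div_le_one_of_le₀ (hD'log j hj x) zero_le
  have hdl0 : ∀ x, x ≠ 0 → v (D' j₀ x / x) ≤ (v π)⁻¹ := fun x hx => by
    refine val_logDeriv_aux v π hπ0 hdisc _ (hD'O j₀) _ (one_le_inv₀ (zero_lt_iff.2 hv0) |>.2 hπ1.le)
      ?_ x hx
    rw [hD'0, map_div₀, hu, one_div]
  -- The row `i₀` of the relation absorbs the simple pole of the column `j₀`.
  rw [h2, h1]
  refine val_det_scale v π hπ0 _ i₀ j₀ ?_ ?_ ?_ ?_
  · rw [Matrix.updateRow_self]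
    refine v.map_sub_le (hD'O _ _ hε.le) ?_
    rw [map_mul]
    calc v ε * v (D' j₀ g / g) ≤ v π * (v π)⁻¹ := mul_le_mul' (hunif _ hε) (hdl0 g hg)
      _ = 1 := mul_inv_cancel₀ hv0
  · intro j hj
    rw [Matrix.updateRow_self]
    refine (v.map_sub_le (hD'log j hj ε) ?_).trans (hunif _ hε)
    rw [map_mul]
    exact mul_le_of_le_one_right' (hdl j g hj hg)
  · intro i hi
    rw [Matrix.updateRow_ne hi]
    calc v (D' j₀ (z i) / z i) * v π ≤ (v π)⁻¹ * v π := mul_le_mul' (hdl0 _ (hz i)) le_rfl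
      _ = 1 := inv_mul_cancel₀ hv0
  · intro i j hi hj
    rw [Matrix.updateRow_ne hi]
    exact hdl j _ hj (hz i)

end LocalLemma

/-! ### The special quadratic form in characteristic two -/

/-- Numerical data of the special form `∑_j c_j Y_j² + b Y_α Y_β` in characteristic two. Its fields
are distinct nonempty subsets `I j` of the coordinates `x_1, …, x_n`, the parameter `f` of the
factor `∑ x_i ^ (2 * (2 * f + 1))`, half-degrees `h j`, the exponents `hx j` of `x_0` in `c_j`, the
indices `α`, `β` of the mixed term and the exponent `kb` of `x_0` in `b`. The conditions `hx_add` and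
`kb_add` make `c_j` homogeneous of degree `2 * (h j + (2 * f + 1))` and `b` of degree half the sum of
those of `c_α` and `c_β`. -/
structure FormData (n : ℕ) (J : Type) where
  I : J → Finset (Fin n)
  I_inj : Function.Injective I
  I_ne : ∀ j, (I j).Nonempty
  f : ℕ
  le_f : n ≤ 2 * f + 1
  h : J → ℕ
  hx : J → ℕ
  hx_add : ∀ j, hx j + (I j).card = 2 * h j
  α : J
  β : J
  kb : ℕ
  kb_add : kb + 2 * n = h α + h β + 2 * (2 * f + 1)

namespace FormData

variable {n : ℕ} {J : Type} [Fintype J] (P : FormData n J)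

/-- The coefficient `c_j = ∏_{l ∈ I_j} x_l · x_0 ^ hx_j · ∑ x_i ^ (2 (2 f + 1))` of `Y_j²`. -/
def cf {K : Type*} [CommSemiring K] (x : Fin (n+1) → K) (j : J) : K :=
  (∏ l ∈ P.I j, x l.succ) * x 0 ^ P.hx j * ∑ i, x i ^ (2 * (2 * P.f + 1))

/-- The coefficient `b = x_0 ^ kb · (∏ x_i)²` of the mixed term. -/
def bf {K : Type*} [CommSemiring K] (x : Fin (n+1) → K) : K :=
  x 0 ^ P.kb * (∏ i : Fin n, x i.succ) ^ 2

/-- The form `∑_j c_j(x) Y_j² + b(x) Y_α Y_β`. -/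
def form {K : Type*} [CommSemiring K] (x : Fin (n+1) → K) (Y : J → K) : K :=
  ∑ j, P.cf x j * Y j ^ 2 + P.bf x * Y P.α * Y P.β

end FormData

section Dichotomy

variable {E : Type*} [Field E] {Γ₀ : Type*} [LinearOrderedCommGroupWithZero Γ₀]

/-- A linear relation, with one coefficient a unit, among the logarithmic derivatives of `z`. Its
right-hand side `D ε - ε (D g / g)` is small for logarithmic derivations since `ε` lies in the maximal
ideal, and the relation holds for all derivations simultaneously. -/
def HasRel {n : ℕ} (v : Valuation E Γ₀) (z : Fin n → E) : Prop :=
  ∃ (g : E) (θ : Fin n → E) (ε : E) (i₀ : Fin n), g ≠ 0 ∧ v (θ i₀) = 1 ∧ v ε < 1 ∧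
      ∀ D : Derivation ℤ E E, ∑ i, θ i * (D (z i) / z i) = D ε - ε * (D g / g)

variable {n : ℕ} {J : Type} [Fintype J] (P : FormData n J)

/-- Modulo squares, `c_j` is the product of the `x_l / x_0` over `l ∈ I_j`. -/
theorem FormData.cf_eq [CharP E 2] (x : Fin (n+1) → E) (hx : x 0 ≠ 0) (j : J) :
    P.cf x j = (∏ l ∈ P.I j, x l.succ / x 0) *
      (x 0 ^ P.h j * ∑ i, x i ^ (2 * P.f + 1)) ^ 2 := by
  have h1 : ∑ i, x i ^ (2 * (2 * P.f + 1)) = (∑ i, x i ^ (2 * P.f + 1)) ^ 2 := by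
    rw [sum_pow_char 2]
    exact Finset.sum_congr rfl fun i _ => by rw [← pow_mul, mul_comm]
  rw [FormData.cf, h1, Finset.prod_div_distrib, Finset.prod_const, mul_pow, ← pow_mul, mul_comm _ 2,
    ← P.hx_add, pow_add]
  field_simp

/-- If `∑ x_i ^ (2 f + 1)` is not a unit, it yields a relation itself: its terms are `x_i` times
squares, corresponding to the subsets `∅, {1}, …, {n}`. -/
theorem hasRel_of_G [CharP E 2] (v : Valuation E Γ₀) (x : Fin (n+1) → E) (hx0 : ∀ i, x i ≠ 0)
    (hle : ∀ i, v (x i) ≤ 1) (hu : ∃ i, v (x i) = 1) (f : ℕ)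
    (hG : v (∑ i, x i ^ (2 * f + 1)) < 1) : HasRel v fun i : Fin n => x i.succ / x 0 := by
  classical
  let I : Fin (n+1) → Finset (Fin n) := Fin.cases ∅ fun i => {i}
  have hI : Function.Injective I := by
    intro a b
    refine Fin.cases ?_ (fun a => ?_) a <;> refine Fin.cases ?_ (fun b => ?_) b <;>
      simp [I]
  obtain ⟨θ, ε, i₀, h1, h2, h3⟩ := exists_unit_relation v (fun i : Fin n => x i.succ / x 0)
    (fun i => div_ne_zero (hx0 _) (hx0 _)) (x 0) (hx0 0) I hI (fun i => x i ^ f) Finset.univ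
    (fun i => x i ^ (2 * f + 1)) (fun j _ => by
      refine Fin.cases ?_ (fun j => ?_) j
      · simp [I]; ring
      · have := hx0 0
        simp only [I, Fin.cases_succ, Finset.prod_singleton]; field_simp; ring)
    (fun j _ => by rw [map_pow]; exact pow_le_one' (hle j) _)
    (by obtain ⟨i, hi⟩ := hu; exact ⟨i, Finset.mem_univ _, by rw [map_pow, hi, one_pow]⟩) hG
  exact ⟨x 0, θ, ε, i₀, hx0 0, h1, h2, h3⟩

/-- If the `x_i` are integral, not all of them units, and `∑ x_i ^ (2 (2 f + 1))` is a unit, then the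
mixed coefficient satisfies `v(b)² < v(c_α) v(c_β)`. -/
theorem FormData.val_bf_lt (v : Valuation E Γ₀) (x : Fin (n+1) → E) 
    (hx0 : ∀ i, x i ≠ 0)
    (hle : ∀ i, v (x i) ≤ 1) (hlt : ∃ i, v (x i) < 1)
    (hG : v (∑ i, x i ^ (2 * (2 * P.f + 1))) = 1) :
    v (P.bf x) ^ 2 < v (P.cf x P.α) * v (P.cf x P.β) := by
  have hsub : ∀ I : Finset (Fin n), ∏ i : Fin n, v (x i.succ) ≤ ∏ i ∈ I, v (x i.succ) := fun I =>
    Finset.prod_le_prod_of_subset_of_le_one' (Finset.subset_univ I) fun i _ _ => hle _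
  have hprod0 : ∀ I : Finset (Fin n), 0 < ∏ i ∈ I, v (x i.succ) := fun I =>
    zero_lt_iff.2 (Finset.prod_ne_zero_iff.2 fun i _ => (Valuation.ne_zero_iff v).2 (hx0 _))
  have h00 : 0 < v (x 0) := zero_lt_iff.2 ((Valuation.ne_zero_iff v).2 (hx0 _))
  have hkb : P.hx P.α + P.hx P.β + 1 ≤ 2 * P.kb := by
    have h1 := P.hx_add P.α
    have h2 := P.hx_add P.β
    have h3 := (P.I_ne P.α).card_pos
    have h4 := (P.I_ne P.β).card_pos
    have h5 := P.kb_add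
    have h6 := P.le_f
    omega
  have hb : v (P.bf x) ^ 2 = v (x 0) ^ (2 * P.kb) *
      ((∏ i : Fin n, v (x i.succ)) * (∏ i : Fin n, v (x i.succ)) * (∏ i : Fin n, v (x i.succ)) ^ 2) := by
    simp only [FormData.bf, map_mul, map_pow, map_prod, mul_pow, ← pow_mul, mul_comm P.kb 2]
    simp only [pow_succ, pow_zero, one_mul, pow_mul]
    ac_rfl
  have hc : v (P.cf x P.α) * v (P.cf x P.β) = v (x 0) ^ (P.hx P.α + P.hx P.β) *
      ((∏ i ∈ P.I P.α, v (x i.succ)) * (∏ i ∈ P.I P.β, v (x i.succ))) := by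
    simp only [FormData.cf, map_mul, map_pow, map_prod, hG, mul_one, pow_add]; ac_rfl
  rw [hb, hc]
  have hall : ∏ i : Fin n, v (x i.succ) ≤ 1 := Finset.prod_le_one' fun i _ => hle _
  obtain ⟨m, hm⟩ := hlt
  have key : v (x 0) ^ (2 * P.kb) * (∏ i : Fin n, v (x i.succ)) ^ 2 < v (x 0) ^ (P.hx P.α + P.hx P.β) := by
    obtain ⟨t, ht⟩ := Nat.exists_eq_add_of_le hkb
    have e1 : v (x 0) ^ (2 * P.kb) * (∏ i : Fin n, v (x i.succ)) ^ 2 =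
      v (x 0) ^ (P.hx P.α + P.hx P.β) *
        (v (x 0) * (∏ i : Fin n, v (x i.succ)) * (v (x 0) ^ t * ∏ i : Fin n, v (x i.succ))) := by
      rw [ht, pow_add, pow_add, pow_one, sq]; ac_rfl
    rw [e1]
    refine mul_lt_of_lt_one_right (pow_pos h00 _) ?_
    refine lt_of_le_of_lt (mul_le_of_le_one_right' (mul_le_one' (pow_le_one' (hle 0) _) hall)) ?_
    rw [← Fin.prod_univ_succ (fun i => v (x i))]
    refine lt_of_le_of_lt ?_ hm
    have := Finset.prod_le_prod_of_subset_of_le_one' (Finset.subset_univ {m})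
      fun i _ _ => hle i
    simpa using this
  calc _ = (v (x 0) ^ (2 * P.kb) * (∏ i : Fin n, v (x i.succ)) ^ 2) *
        ((∏ i : Fin n, v (x i.succ)) * (∏ i : Fin n, v (x i.succ))) := by ac_rfl
    _ < v (x 0) ^ (P.hx P.α + P.hx P.β) * ((∏ i : Fin n, v (x i.succ)) * (∏ i : Fin n, v (x i.succ))) :=
        mul_lt_mul_of_pos_right key (mul_pos (hprod0 _) (hprod0 _))
    _ ≤ _ := mul_le_mul' le_rfl (mul_le_mul' (hsub _) (hsub _))

/-- The case of `hasRel_of_form` where the `x_i` are normalised to have maximal valuation `1`. -/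
theorem hasRel_of_form_aux [CharP E 2] (v : Valuation E Γ₀) (x : Fin (n+1) → E)
    (hx0 : ∀ i, x i ≠ 0)
    (hle : ∀ i, v (x i) ≤ 1) (hu : ∃ i, v (x i) = 1) (hlt : ∃ i, v (x i) < 1)
    (s : E) (Y : J → E) (hY : ∃ j, Y j ≠ 0) (hs : s ^ 2 = P.form x Y) :
    HasRel v fun i : Fin n => x i.succ / x 0 := by
  classical
  have hGle : v (∑ i, x i ^ (2 * P.f + 1)) ≤ 1 :=
    v.map_sum_le fun i _ => by rw [map_pow]; exact pow_le_one' (hle i) _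
  rcases hGle.lt_or_eq with hG | hG
  · exact hasRel_of_G v x hx0 hle hu P.f hG
  have hG2 : v (∑ i, x i ^ (2 * (2 * P.f + 1))) = 1 := by
    have h1 : ∑ i, x i ^ (2 * (2 * P.f + 1)) = (∑ i, x i ^ (2 * P.f + 1)) ^ 2 := by
      rw [sum_pow_char 2]
      exact Finset.sum_congr rfl fun i _ => by rw [← pow_mul, mul_comm]
    rw [h1, map_pow, hG, one_pow]
  have hG0 : ∑ i, x i ^ (2 * (2 * P.f + 1)) ≠ 0 := fun h => by simp [h] at hG2
  have hc0 : ∀ j, P.cf x j ≠ 0 := fun j =>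
    mul_ne_zero (mul_ne_zero (Finset.prod_ne_zero_iff.2 fun i _ => hx0 _) (pow_ne_zero _ (hx0 0)))
      hG0
  -- The terms `c_j Y_j²` together with `s²`, the latter indexed by `none` and belonging to the subset
  -- `∅`. Their sum is the mixed term `b Y_α Y_β`, which is strictly smaller than the largest term.
  let A : Option J → E := fun o => o.elim (s ^ 2) fun j => P.cf x j * Y j ^ 2
  obtain ⟨jm, -, hjm⟩ := Finset.exists_max_image Finset.univ (fun o => v (A o))
    ⟨none, Finset.mem_univ _⟩
  have hA0 : A jm ≠ 0 := by
    obtain ⟨j, hj⟩ := hY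
    intro h0
    have := hjm (some j) (Finset.mem_univ _)
    rw [h0, map_zero, le_zero_iff, Valuation.zero_iff] at this
    exact mul_ne_zero (hc0 j) (pow_ne_zero 2 hj) this
  have hvA0 : 0 < v (A jm) := zero_lt_iff.2 ((Valuation.ne_zero_iff v).2 hA0)
  have hsum : ∑ o, A o = P.bf x * Y P.α * Y P.β := by
    rw [Fintype.sum_option]
    simp only [A, Option.elim]
    rw [hs, FormData.form, add_comm (∑ j, _) (P.bf x * _ * _), add_assoc, CharTwo.add_self_eq_zero,
      add_zero]
  have hsumlt : v (∑ o, A o) < v (A jm) := by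
    rw [hsum]
    by_contra hcon
    push Not at hcon
    have h1 := P.val_bf_lt v x hx0 hle hlt hG2
    have hmain : v (P.bf x * Y P.α * Y P.β) ^ 2 = v (P.bf x) ^ 2 * (v (Y P.α) ^ 2 * v (Y P.β) ^ 2) := by
      simp only [map_mul, mul_pow]; ac_rfl
    have h2 : v (A jm) ^ 2 ≤ v (P.bf x) ^ 2 * (v (Y P.α) ^ 2 * v (Y P.β) ^ 2) := by
      rw [← hmain]; exact pow_le_pow_left' hcon 2
    have h3 : v (P.cf x P.α) * v (P.cf x P.β) * (v (Y P.α) ^ 2 * v (Y P.β) ^ 2) ≤ v (A jm) ^ 2 := by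
      have ha := hjm (some P.α) (Finset.mem_univ _)
      have hb := hjm (some P.β) (Finset.mem_univ _)
      simp only [A, Option.elim, map_mul, map_pow] at ha hb
      rw [sq (v (A jm))]
      refine le_trans (le_of_eq ?_) (mul_le_mul' ha hb)
      ac_rfl
    have hpos : 0 < v (Y P.α) ^ 2 * v (Y P.β) ^ 2 := by
      rw [zero_lt_iff]
      intro h0
      rw [h0, mul_zero] at h2
      exact absurd h2 (not_le.2 (pow_pos hvA0 2))
    have h4 := mul_lt_mul_of_pos_right h1 hpos
    exact absurd (h2.trans_lt h4) (not_lt.2 h3)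
  let I : Option J → Finset (Fin n) := fun o => o.elim ∅ P.I
  have hI : Function.Injective I := by
    intro a b hab
    cases a <;> cases b
    · rfl
    · exact absurd hab.symm (P.I_ne _).ne_empty
    · exact absurd hab (P.I_ne _).ne_empty
    · exact congrArg some (P.I_inj hab)
  obtain ⟨θ, ε, i₀, h1, h2, h3⟩ := exists_unit_relation v (fun i : Fin n => x i.succ / x 0)
    (fun i => div_ne_zero (hx0 _) (hx0 _)) (A jm)⁻¹ (inv_ne_zero hA0) I hI
    (fun o => o.elim s fun j => (x 0 ^ P.h j * ∑ i, x i ^ (2 * P.f + 1)) * Y j) Finset.univ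
    (fun o => A o / A jm) (fun o _ => by
      cases o with
      | none => simp only [A, I, Option.elim, Finset.prod_empty]; field_simp
      | some j =>
        simp only [A, I, Option.elim, P.cf_eq x (hx0 0)]
        ring)
    (fun j _ => by rw [map_div₀]; exact div_le_one_of_le₀ (hjm j (Finset.mem_univ _)) zero_le)
    ⟨jm, Finset.mem_univ _, by rw [div_self hA0, map_one]⟩ (by
      rw [← Finset.sum_div, map_div₀]
      exact (div_lt_one₀ hvA0).2 hsumlt)
  exact ⟨_, θ, ε, i₀, inv_ne_zero hA0, h1, h2, h3⟩

/-- Rescaling `x` by `c` can be compensated by rescaling the quadratic variables. -/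
theorem FormData.form_smul {K : Type*} [Field K] (x : Fin (n+1) → K) (Y : J → K) (c : K)
    (hc : c ≠ 0) :
    P.form (fun i => c * x i) (fun j => (c ^ (P.h j + (2 * P.f + 1)))⁻¹ * Y j) = P.form x Y := by
  have hcf : ∀ j, P.cf (fun i => c * x i) j = (c ^ (P.h j + (2 * P.f + 1))) ^ 2 * P.cf x j := by
    intro j
    simp only [FormData.cf, mul_pow, Finset.prod_mul_distrib, Finset.prod_const, ← Finset.mul_sum]
    have : (c ^ (P.h j + (2 * P.f + 1))) ^ 2 = c ^ (P.I j).card * c ^ P.hx j *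
        c ^ (2 * (2 * P.f + 1)) := by
      rw [← pow_mul, ← pow_add, ← pow_add]
      congr 1
      have := P.hx_add j
      omega
    rw [this]; ring
  have hbf : P.bf (fun i => c * x i) = c ^ (P.h P.α + (2 * P.f + 1)) *
      c ^ (P.h P.β + (2 * P.f + 1)) * P.bf x := by
    simp only [FormData.bf, mul_pow, Finset.prod_mul_distrib, Finset.prod_const, Finset.card_univ,
      Fintype.card_fin]
    have : c ^ (P.h P.α + (2 * P.f + 1)) * c ^ (P.h P.β + (2 * P.f + 1)) =
        c ^ P.kb * (c ^ n) ^ 2 := by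
      rw [← pow_mul, ← pow_add, ← pow_add]
      congr 1
      have := P.kb_add
      omega
    rw [this]; ring
  simp only [FormData.form, hcf, hbf]
  have hp : ∀ k, c ^ k ≠ 0 := fun k => pow_ne_zero k hc
  congr 1
  · refine Finset.sum_congr rfl fun j _ => ?_
    have := hp (P.h j + (2 * P.f + 1))
    generalize c ^ (P.h j + (2 * P.f + 1)) = t at *
    field_simp
  · have h1 := hp (P.h P.α + (2 * P.f + 1))
    have h2 := hp (P.h P.β + (2 * P.f + 1))
    generalize c ^ (P.h P.α + (2 * P.f + 1)) = t at *
    generalize c ^ (P.h P.β + (2 * P.f + 1)) = t' at *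
    field_simp

/-- If the valuations of the `x_i` are not all equal, a nontrivial solution of `s² = form(x, Y)`
yields a relation among the logarithmic derivatives of the ratios `x_i / x_0`. -/
theorem hasRel_of_form [CharP E 2] (v : Valuation E Γ₀) (x : Fin (n+1) → E)
    (hx0 : ∀ i, x i ≠ 0) (hne : ∃ i j, v (x i) ≠ v (x j))
    (s : E) (Y : J → E) (hY : ∃ j, Y j ≠ 0) (hs : s ^ 2 = P.form x Y) :
    HasRel v fun i : Fin n => x i.succ / x 0 := by
  obtain ⟨m, -, hm⟩ := Finset.exists_max_image Finset.univ (fun i => v (x i))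
    ⟨0, Finset.mem_univ _⟩
  have hc : (x m)⁻¹ ≠ 0 := inv_ne_zero (hx0 m)
  have hvm : 0 < v (x m) := zero_lt_iff.2 ((Valuation.ne_zero_iff v).2 (hx0 m))
  have hv : ∀ i, v ((x m)⁻¹ * x i) = v (x i) / v (x m) := fun i => by
    rw [map_mul, map_inv₀, div_eq_inv_mul]
  have h := hasRel_of_form_aux P v (fun i => (x m)⁻¹ * x i) (fun i => mul_ne_zero hc (hx0 i))
    (fun i => by rw [hv]; exact div_le_one_of_le₀ (hm i (Finset.mem_univ _)) zero_le)
    ⟨m, by rw [hv, div_self hvm.ne']⟩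
    (by
      by_contra hcon
      push Not at hcon
      have : ∀ i, v (x i) = v (x m) := fun i => by
        refine le_antisymm (hm i (Finset.mem_univ _)) ?_
        have := hcon i
        rw [hv] at this
        exact (one_le_div₀ hvm).1 this
      obtain ⟨i, j, hij⟩ := hne
      exact hij (by rw [this i, this j]))
    s (fun j => (((x m)⁻¹) ^ (P.h j + (2 * P.f + 1)))⁻¹ * Y j)
    (by
      obtain ⟨j, hj⟩ := hY
      exact ⟨j, mul_ne_zero (inv_ne_zero (pow_ne_zero _ hc)) hj⟩)
    (by rw [hs, P.form_smul x Y _ hc])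
  have he : (fun i : Fin n => (x m)⁻¹ * x i.succ / ((x m)⁻¹ * x 0)) =
      fun i : Fin n => x i.succ / x 0 := by
    ext i; exact mul_div_mul_left _ _ hc
  rwa [he] at h

end Dichotomy

/-! ### Extension of derivations and comparison at an endpoint -/

section FracDer

variable {A : Type*} [CommRing A] [IsDomain A] (K : Type*) [Field K] [Algebra A K]
  [IsFractionRing A K]

/-- A derivation `D` of a domain, viewed as the ring homomorphism `a ↦ a + ε D a` to dual numbers,
extends to the fraction field. -/
theorem exists_fracDer_hom (D : Derivation ℤ A A) : ∃ φ : K →+* TrivSqZeroExt K K,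
    (∀ a : A, (φ (algebraMap A K a)).snd = algebraMap A K (D a)) ∧ ∀ x, (φ x).fst = x := by
  let ψ : A →+* TrivSqZeroExt K K :=
    { toFun := fun a => (algebraMap A K a, algebraMap A K (D a))
      map_one' := Prod.ext (map_one _) (by simp; rfl)
      map_zero' := Prod.ext (map_zero _) (by simp; rfl)
      map_add' := fun a b => Prod.ext (map_add _ _ _) (by simp; rfl)
      map_mul' := fun a b => Prod.ext (map_mul _ _ _) (by
        change _ = algebraMap A K a • algebraMap A K (D b) +
          MulOpposite.op (algebraMap A K b) • algebraMap A K (D a)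
        simp only [D.leibniz, map_add, smul_eq_mul, map_mul, MulOpposite.smul_eq_mul_unop,
          MulOpposite.unop_op]
        ring) }
  have hψ : ∀ y : nonZeroDivisors A, IsUnit (ψ y) := fun y => by
    rw [TrivSqZeroExt.isUnit_iff_isUnit_fst, isUnit_iff_ne_zero]
    exact IsFractionRing.to_map_ne_zero_of_mem_nonZeroDivisors y.2
  refine ⟨IsLocalization.lift hψ, fun a => ?_, ?_⟩
  · rw [IsLocalization.lift_eq]; rfl
  · have h : ((TrivSqZeroExt.fstHom K K K : TrivSqZeroExt K K →+* K).comp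
        (IsLocalization.lift hψ)) = RingHom.id K := by
      refine IsLocalization.ringHom_ext (nonZeroDivisors A) ?_
      ext a
      simp only [RingHom.comp_apply, IsLocalization.lift_eq]
      rfl
    intro x
    exact congrArg (fun f : K →+* K => f x) h

/-- The extension of a derivation of a domain to its fraction field. -/
noncomputable def fracDer (D : Derivation ℤ A A) : Derivation ℤ K K where
  toFun x := ((exists_fracDer_hom K D).choose x).snd
  map_add' x y := by rw [map_add]; rfl
  map_smul' c x := by rw [map_zsmul]; rfl
  map_one_eq_zero' := by
    change ((exists_fracDer_hom K D).choose 1).snd = 0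
    rw [map_one]; rfl
  leibniz' x y := by
    change ((exists_fracDer_hom K D).choose (x * y)).snd =
      x * ((exists_fracDer_hom K D).choose y).snd + y * ((exists_fracDer_hom K D).choose x).snd
    have h := (exists_fracDer_hom K D).choose_spec.2
    rw [map_mul, TrivSqZeroExt.snd_mul, h, h, MulOpposite.smul_eq_mul_unop, MulOpposite.unop_op,
      smul_eq_mul, mul_comm y]

@[simp]
theorem fracDer_algebraMap (D : Derivation ℤ A A) (a : A) :
    fracDer K D (algebraMap A K a) = algebraMap A K (D a) :=
  (exists_fracDer_hom K D).choose_spec.1 a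

variable {K}
theorem der_div (D : Derivation ℤ K K) (a b : K) (hb : b ≠ 0) :
    D (a / b) = D a / b - (a / b) * (D b / b) := by
  have h : D a = D (a / b * b) := by rw [div_mul_cancel₀ _ hb]
  rw [h, D.leibniz]
  simp only [smul_eq_mul]
  field_simp
  ring

/-- A derivation that does not increase the valuation on `A` does not increase it on the fraction field. -/
theorem fracDer_log {Γ₀ : Type*} [LinearOrderedCommGroupWithZero Γ₀] (v : Valuation K Γ₀)
    (D : Derivation ℤ A A) (h : ∀ a, v (algebraMap A K (D a)) ≤ v (algebraMap A K a)) (x : K) :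
    v (fracDer K D x) ≤ v x := by
  obtain ⟨a, b, hb, rfl⟩ := IsFractionRing.div_surjective (A := A) x
  have hb0 := IsFractionRing.to_map_ne_zero_of_mem_nonZeroDivisors (K := K) hb
  have hvb : 0 < v (algebraMap A K b) := zero_lt_iff.2 ((Valuation.ne_zero_iff v).2 hb0)
  rw [der_div _ _ _ hb0, fracDer_algebraMap, fracDer_algebraMap]
  refine v.map_sub_le ?_ ?_
  · rw [map_div₀, map_div₀]
    exact div_le_div_of_nonneg_right (h a) zero_le
  · rw [map_mul]
    refine mul_le_of_le_one_right' ?_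
    rw [map_div₀]
    exact div_le_one_of_le₀ (h b) zero_le

/-- A derivation of a Dedekind domain preserves integrality at each height one prime after extension
to the fraction field. -/
theorem fracDer_integral {A : Type*} [CommRing A] [Algebra A K] [IsFractionRing A K]
    [IsDedekindDomain A] (p : IsDedekindDomain.HeightOneSpectrum A)
    (D : Derivation ℤ A A) (x : K) (hx : p.valuation K x ≤ 1) :
    p.valuation K (fracDer K D x) ≤ 1 := by
  obtain ⟨a, b, hab⟩ := p.exists_primeCompl_mul_eq_of_integer x hx
  have hb1 : p.valuation K (algebraMap A K b) = 1 :=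
    (IsDedekindDomain.HeightOneSpectrum.valuation_eq_one_iff_notMem p).2 b.2
  have hb0 : algebraMap A K b ≠ 0 := fun h => by simp [h] at hb1
  have hx' : x = algebraMap A K a / algebraMap A K b := by
    rw [eq_div_iff hb0]; exact hab
  rw [hx', der_div _ _ _ hb0, fracDer_algebraMap, fracDer_algebraMap, ← hx']
  refine Valuation.map_sub_le _ ?_ ?_
  · rw [map_div₀, hb1, div_one]; exact p.valuation_le_one _
  · rw [map_mul, map_div₀, hb1, div_one]
    exact mul_le_one' hx (p.valuation_le_one _)

end FracDer

section PolyDer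
open Polynomial
variable {L : Type*} [Field L]

/-- The absolute derivations of a commutative ring; the `ℤ`-algebra structure is always the one
coming from the ring structure, also for rings such as `L[X]` which carry another instance. -/
abbrev ZDer (A : Type*) [CommRing A] : Type _ := Derivation ℤ A A

/-- A derivation applied to the coefficients of a polynomial. -/
noncomputable def polyDer (D : Derivation ℤ L L) : ZDer L[X] :=
  letI : Differential L := ⟨D⟩
  Differential.mapCoeffs

@[simp]
theorem coeff_polyDer (D : Derivation ℤ L L) (p : L[X]) (i : ℕ) :
    (polyDer D p).coeff i = D (p.coeff i) := rfl

@[simp]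
theorem polyDer_C (D : Derivation ℤ L L) (c : L) : polyDer D (C c) = C (D c) := by
  ext i
  rw [coeff_polyDer, coeff_C, coeff_C]
  split_ifs <;> simp

end PolyDer

section Endpoint

variable {E : Type*} [Field E] {Γ₀ : Type*} [LinearOrderedCommGroupWithZero Γ₀]

theorem val_det_sub_lt {n : ℕ} (v : Valuation E Γ₀) (M N : Matrix (Fin n) (Fin n) E)
    (hM : ∀ i j, v (M i j) ≤ 1) (hN : ∀ i j, v (N i j) ≤ 1) (h : ∀ i j, v (M i j - N i j) < 1) :
    v (M.det - N.det) < 1 := by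
  let O := v.valuationSubring
  let M' : Matrix (Fin n) (Fin n) O := Matrix.of fun i j => ⟨M i j, hM i j⟩
  let N' : Matrix (Fin n) (Fin n) O := Matrix.of fun i j => ⟨N i j, hN i j⟩
  have hM' : M.det = algebraMap O E M'.det := by
    rw [RingHom.map_det]; rfl
  have hN' : N.det = algebraMap O E N'.det := by
    rw [RingHom.map_det]; rfl
  have hlt : ∀ x : O, x ∈ IsLocalRing.maximalIdeal O ↔ v (x : E) < 1 := fun x =>
    Valuation.mem_maximalIdeal_iff E v
  have hmap : M'.map (IsLocalRing.residue O) = N'.map (IsLocalRing.residue O) := by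
    ext i j
    simp only [Matrix.map_apply]
    rw [← sub_eq_zero, ← map_sub, IsLocalRing.residue_eq_zero_iff, hlt]
    exact h i j
  have h2 : IsLocalRing.residue O (M'.det - N'.det) = 0 := by
    rw [map_sub, RingHom.map_det, RingHom.map_det]
    change (M'.map (IsLocalRing.residue O)).det - (N'.map (IsLocalRing.residue O)).det = 0
    rw [hmap, sub_self]
  rw [IsLocalRing.residue_eq_zero_iff, hlt] at h2
  rw [hM', hN', ← map_sub]
  exact h2

/-- If `x / c` is congruent modulo the maximal ideal to a vector `l` of units, then for logarithmic
derivations the determinants attached to `x` and to `l` are congruent. -/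
theorem endpoint_unit {n : ℕ} (v : Valuation E Γ₀) (D : Fin n → Derivation ℤ E E)
    (hlog : ∀ j x, v (D j x) ≤ v x) (x l : Fin (n+1) → E) (c : E) (hc : c ≠ 0)
    (hl : ∀ i, v (l i) = 1) (hx : ∀ i, v (x i / c - l i) < 1) :
    v ((logMat D fun i : Fin n => x i.succ / x 0).det -
      (logMat D fun i : Fin n => l i.succ / l 0).det) < 1 := by
  have hl0 : ∀ i, l i ≠ 0 := fun i h => by have := hl i; simp [h] at this
  have hxc : ∀ i, v (x i / c) = 1 := fun i => by
    have := v.map_add_eq_of_lt_right (x := x i / c - l i) (y := l i) (by rw [hl i]; exact hx i)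
    rw [sub_add_cancel, hl] at this
    exact this
  have hx0 : ∀ i, x i ≠ 0 := fun i h => by have := hxc i; simp [h] at this
  have hdl : ∀ j y, y ≠ 0 → v (D j y / y) ≤ 1 := fun j y hy => by
    rw [map_div₀]; exact div_le_one_of_le₀ (hlog j y) zero_le
  refine val_det_sub_lt v _ _ (fun i j => hdl _ _ (div_ne_zero (hx0 _) (hx0 _)))
    (fun i j => hdl _ _ (div_ne_zero (hl0 _) (hl0 _))) fun i j => ?_
  simp only [logMat, Matrix.of_apply]
  set z := x i.succ / x 0 with hz
  set ζ := l i.succ / l 0 with hζ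
  have hz0 : z ≠ 0 := div_ne_zero (hx0 _) (hx0 _)
  have hζ0 : ζ ≠ 0 := div_ne_zero (hl0 _) (hl0 _)
  have hvζ : v ζ = 1 := by rw [hζ, map_div₀, hl, hl, div_one]
  have hzζ : v (z - ζ) < 1 := by
    have hcx : z - ζ = ((x i.succ / c - l i.succ) * l 0 - l i.succ * (x 0 / c - l 0)) /
        ((x 0 / c) * l 0) := by
      have := hl0 0; have := hx0 0
      rw [hz, hζ]; field_simp; ring
    rw [hcx, map_div₀, map_mul, hxc, hl, mul_one, div_one]
    refine v.map_sub_lt ?_ ?_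
    · rw [map_mul, hl, mul_one]; exact hx _
    · rw [map_mul, hl, one_mul]; exact hx _
  have hvz : v z = 1 := by
    have := v.map_add_eq_of_lt_right (x := z - ζ) (y := ζ) (by rw [hvζ]; exact hzζ)
    rw [sub_add_cancel, hvζ] at this
    exact this
  have key : D j z / z - D j ζ / ζ = (D j (z - ζ) * ζ - D j ζ * (z - ζ)) / (z * ζ) := by
    rw [map_sub]; field_simp; ring
  rw [key, map_div₀, map_mul, hvz, hvζ, mul_one, div_one]
  refine v.map_sub_lt ?_ ?_
  · rw [map_mul, hvζ, mul_one]; exact (hlog _ _).trans_lt hzζ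
  · rw [map_mul]
    refine lt_of_le_of_lt (mul_le_of_le_one_left' ?_) hzζ
    rw [← hvζ]; exact hlog _ _

end Endpoint

/-! ### Curves over the residue field -/

section Edge
open Polynomial

variable {E : Type*} [Field E] {Γ₀ : Type*} [LinearOrderedCommGroupWithZero Γ₀]

theorem val_logMat_le_one_of_eq {n : ℕ} (v : Valuation E Γ₀) (D : Fin n → Derivation ℤ E E)
    (hD : ∀ j x, v x ≤ 1 → v (D j x) ≤ 1) (z : Fin n → E) (hz : ∀ i, v (z i) = 1) :
    v (logMat D z).det ≤ 1 := by
  refine val_det_le_one v _ fun i j => ?_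
  simp only [logMat, Matrix.of_apply]
  rw [map_div₀, hz, div_one]
  exact hD j _ (hz i).le

variable {n : ℕ} {J : Type} [Fintype J] (P : FormData n J)

theorem HasRel.det_lt_one {v : Valuation E Γ₀} {z : Fin n → E} (h : HasRel v z)
    (hz : ∀ i, z i ≠ 0) (D : Fin n → Derivation ℤ E E) (hlog : ∀ j x, v (D j x) ≤ v x) :
    v (logMat D z).det < 1 := by
  obtain ⟨g, θ, ε, i₀, hg, hθ, hε, hrel⟩ := h
  exact val_det_lt_one_of_log v D hlog z θ hz g ε hg i₀ hθ hε hrel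

/-- At every finite place the determinant along a solution of `s² = form` is integral. -/
theorem val_adic_le_one {A K : Type*} [CommRing A] [IsDedekindDomain A] [Field K] [Algebra A K]
    [IsFractionRing A K] [CharP K 2] (p : IsDedekindDomain.HeightOneSpectrum A)
    (D : Fin n → Derivation ℤ A A) (x : Fin (n+1) → K) (hx0 : ∀ i, x i ≠ 0)
    (s : K) (Y : J → K) (hY : ∃ j, Y j ≠ 0) (hs : s ^ 2 = P.form x Y) :
    p.valuation K (logMat (fun j => fracDer K (D j)) fun i : Fin n => x i.succ / x 0).det ≤ 1 := by
  have hD : ∀ j y, p.valuation K y ≤ 1 → p.valuation K (fracDer K (D j) y) ≤ 1 := fun j y hy =>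
    fracDer_integral p (D j) y hy
  by_cases hne : ∃ i j, p.valuation K (x i) ≠ p.valuation K (x j)
  · obtain ⟨g, θ, ε, i₀, hg, hθ, hε, hrel⟩ := hasRel_of_form P (p.valuation K) x hx0 hne s Y hY hs
    obtain ⟨π, hπ⟩ := p.valuation_exists_uniformizer K
    have hπ0 : π ≠ 0 := fun h => by
      rw [h, map_zero] at hπ
      exact WithZero.exp_ne_zero hπ.symm
    refine val_det_le_one_of_disc (p.valuation K) π hπ0 ?_ ?_ ?_ _ hD _ θ
      (fun i => div_ne_zero (hx0 _) (hx0 _)) g ε hg i₀ hθ hε hrel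
    · rw [hπ, ← WithZero.exp_zero]
      exact WithZero.exp_lt_exp.2 (by norm_num)
    · intro y hy
      rw [hπ]
      by_cases hy0 : p.valuation K y = 0
      · rw [hy0]; exact zero_le
      · rw [← WithZero.exp_log hy0, ← WithZero.exp_zero, WithZero.exp_lt_exp] at hy
        rw [← WithZero.exp_log hy0, WithZero.exp_le_exp]
        omega
    · intro y hy
      have hy0 : p.valuation K y ≠ 0 := (Valuation.ne_zero_iff _).2 hy
      refine ⟨-WithZero.log (p.valuation K y), ?_⟩
      rw [hπ, ← WithZero.exp_zsmul]
      simp [WithZero.exp_log hy0]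
  · push Not at hne
    refine val_logMat_le_one_of_eq _ _ hD _ fun i => ?_
    rw [map_div₀, hne i.succ 0, div_self]
    exact (Valuation.ne_zero_iff _).2 (hx0 _)

variable {L : Type*} [Field L]

/-- All coordinates of `l` are nonzero, and so is the determinant of the logarithmic derivatives of
the ratios `l_i / l_0`. The condition depends only on `l` up to scaling. -/
def Nondeg (D : Fin n → Derivation ℤ L L) (l : Fin (n+1) → L) : Prop :=
  (∀ i, l i ≠ 0) ∧ (logMat D fun i : Fin n => l i.succ / l 0).det ≠ 0

theorem logMat_map {K : Type*} [Field K] (φ : L →+* K) (D : Fin n → Derivation ℤ L L)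
    (D' : Fin n → Derivation ℤ K K) (h : ∀ j a, D' j (φ a) = φ (D j a)) (z : Fin n → L) :
    (logMat D' fun i => φ (z i)).det = φ (logMat D z).det := by
  rw [RingHom.map_det]
  congr 1
  ext i j
  simp [logMat, h]

/-- The statement `edge`, for a fraction field `K` of `L[X]` with a valuation `v₁` at infinity. -/
theorem edge_aux [CharP L 2] (K : Type*) [Field K] [Algebra L[X] K] [IsFractionRing L[X] K]
    (v₁ : Valuation K (WithZero (Multiplicative ℤ)))
    (hv₁ : ∀ a : L[X], a ≠ 0 → v₁ (algebraMap L[X] K a) = WithZero.exp (a.natDegree : ℤ))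
    (D : Fin n → Derivation ℤ L L) (x : Fin (n+1) → L[X])
    (s : L[X]) (Y : J → L[X]) (hY : ∃ j, Y j ≠ 0) (hs : s ^ 2 = P.form x Y)
    (m m' : ℕ) (hm : ∀ i, X ^ m ∣ x i) (hm' : ∀ i, (x i).natDegree ≤ m')
    (h0 : Nondeg D fun i => (x i).coeff m) (h1 : ∃ i, (x i).coeff m' ≠ 0) :
    Nondeg D fun i => (x i).coeff m' := by
  classical
  let ι : L[X] →+* K := algebraMap L[X] K
  have hι : Function.Injective ι := IsFractionRing.injective L[X] K
  have : CharP K 2 := charP_of_injective_ringHom hι 2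
  let D' : Fin n → Derivation ℤ K K := fun j => fracDer K (polyDer (D j))
  let c : L →+* K := ι.comp C
  have hD'c : ∀ j a, D' j (c a) = c (D j a) := fun j a => by
    exact (fracDer_algebraMap K (polyDer (D j)) (C a)).trans (by rw [polyDer_C]; rfl)
  have hx0 : ∀ i, ι (x i) ≠ 0 := fun i h => by
    rw [map_eq_zero_iff ι hι] at h
    exact h0.1 i (by simp [h])
  set W := (logMat D' fun i : Fin n => ι (x i.succ) / ι (x 0)).det with hW
  have hform : ι s ^ 2 = P.form (fun i => ι (x i)) (fun j => ι (Y j)) := by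
    rw [← map_pow, hs]
    simp [FormData.form, FormData.cf, FormData.bf]
  have hY' : ∃ j, ι (Y j) ≠ 0 := by
    obtain ⟨j, hj⟩ := hY
    exact ⟨j, fun h => hj ((map_eq_zero_iff ι hι).1 h)⟩
  -- the determinant has no finite pole
  obtain ⟨w, hw⟩ : W ∈ ι.range := by
    refine IsDedekindDomain.HeightOneSpectrum.mem_integers_of_valuation_le_one K W fun p => ?_
    exact val_adic_le_one P p (fun j => polyDer (D j)) (fun i => ι (x i)) hx0 (ι s) _ hY' hform
  -- behaviour at `0`
  let v₀ := (Polynomial.idealX L).valuation K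
  have hv₀X : ∀ a : L[X], v₀ (ι a) < 1 ↔ X ∣ a := fun a => by
    rw [IsDedekindDomain.HeightOneSpectrum.valuation_lt_one_iff_mem]
    exact Ideal.mem_span_singleton
  have hlog₀ : ∀ j y, v₀ (D' j y) ≤ v₀ y := fun j => by
    refine fracDer_log v₀ (polyDer (D j)) fun a => ?_
    by_cases ha : a = 0
    · simp [ha]
    obtain ⟨q, hq, hqX⟩ := exists_eq_pow_rootMultiplicity_mul_and_not_dvd a ha 0
    rw [C_0, sub_zero] at hq hqX
    generalize rootMultiplicity 0 a = k at hq
    have e : polyDer (D j) a = X ^ k * polyDer (D j) q := by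
      ext i
      rw [hq, coeff_polyDer, coeff_X_pow_mul', coeff_X_pow_mul']
      split_ifs <;> simp
    have hq1 : 1 ≤ v₀ (ι q) := not_lt.1 fun h => hqX ((hv₀X q).1 h)
    rw [e, hq, map_mul, map_mul, map_mul, map_mul]
    exact mul_le_mul' le_rfl
      ((IsDedekindDomain.HeightOneSpectrum.valuation_le_one _ _).trans hq1)
  have hv₀c : ∀ a, a ≠ 0 → v₀ (c a) = 1 := fun a ha => by
    refine le_antisymm (IsDedekindDomain.HeightOneSpectrum.valuation_le_one _ _) ?_
    by_contra hcon
    have := (hv₀X _).1 (not_le.1 hcon)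
    rw [X_dvd_iff, coeff_C_zero] at this
    exact ha this
  set W₀ := (logMat D fun i : Fin n => (x i.succ).coeff m / (x 0).coeff m).det with hW₀
  have hend₀ : v₀ (W - c W₀) < 1 := by
    have := endpoint_unit v₀ D' hlog₀ (fun i => ι (x i)) (fun i => c ((x i).coeff m)) (ι (X ^ m))
      (fun h => pow_ne_zero m X_ne_zero ((map_eq_zero_iff ι hι).1 h)) (fun i => hv₀c _ (h0.1 i))
      (fun i => by
        obtain ⟨q, hq⟩ := hm i
        have hX : ι (X ^ m) ≠ 0 := fun h => pow_ne_zero m X_ne_zero ((map_eq_zero_iff ι hι).1 h)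
        have e : ι (x i) / ι (X ^ m) - c ((x i).coeff m) = ι (q - C ((x i).coeff m)) := by
          rw [hq, map_mul, mul_div_cancel_left₀ _ hX, map_sub]; rfl
        rw [e, hv₀X, X_dvd_iff, hq, coeff_sub, coeff_C_zero, coeff_X_pow_mul', if_pos le_rfl]
        simp)
    simp only [← map_div₀] at this
    rw [logMat_map c D D' hD'c (fun i : Fin n => (x i.succ).coeff m / (x 0).coeff m)] at this
    simpa only [map_div₀] using this
  -- behaviour at infinity
  replace hv₁ : ∀ a : L[X], a ≠ 0 → v₁ (ι a) = WithZero.exp (a.natDegree : ℤ) := hv₁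
  have hW₁lt : ¬ v₁ W < 1 := by
    have hw0 : w ≠ 0 := by
      rintro rfl
      rw [← hw, map_zero, zero_sub, Valuation.map_neg, hv₀c _ h0.2] at hend₀
      exact lt_irrefl _ hend₀
    rw [← hw, hv₁ w hw0, ← WithZero.exp_zero, WithZero.exp_lt_exp]
    omega
  have hlog₁ : ∀ j y, v₁ (D' j y) ≤ v₁ y := fun j => by
    refine fracDer_log v₁ (polyDer (D j)) fun a => ?_
    by_cases hDa : polyDer (D j) a = 0
    · rw [hDa, map_zero, map_zero]; exact zero_le
    have ha : a ≠ 0 := fun h => hDa (by rw [h, map_zero])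
    change v₁ (ι _) ≤ v₁ (ι _)
    rw [hv₁ _ hDa, hv₁ _ ha, WithZero.exp_le_exp, Nat.cast_le]
    refine natDegree_le_iff_coeff_eq_zero.2 fun N hN => ?_
    rw [coeff_polyDer, coeff_eq_zero_of_natDegree_lt hN, map_zero]
  have hv₁c : ∀ a, a ≠ 0 → v₁ (c a) = 1 := fun a ha => by
    have := hv₁ (C a) (C_ne_zero.2 ha)
    rw [natDegree_C, Nat.cast_zero, WithZero.exp_zero] at this
    exact this
  have hX' : ι (X ^ m') ≠ 0 := fun h => pow_ne_zero m' X_ne_zero ((map_eq_zero_iff ι hι).1 h)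
  have hvX' : v₁ (ι (X ^ m')) ≠ 0 := (Valuation.ne_zero_iff _).2 hX'
  have hx₁ : ∀ i, v₁ (ι (x i) / ι (X ^ m') - c ((x i).coeff m')) < 1 := fun i => by
    have e : ι (x i) / ι (X ^ m') - c ((x i).coeff m') =
        ι (x i - C ((x i).coeff m') * X ^ m') / ι (X ^ m') := by
      rw [map_sub, map_mul, sub_div, mul_div_cancel_right₀ _ hX']; rfl
    rw [e, map_div₀, div_lt_one₀ (zero_lt_iff.2 hvX')]
    by_cases hq0 : x i - C ((x i).coeff m') * X ^ m' = 0
    · rw [hq0, map_zero, map_zero]; exact zero_lt_iff.2 hvX'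
    · rw [hv₁ _ hq0, hv₁ _ (pow_ne_zero m' X_ne_zero), natDegree_X_pow, WithZero.exp_lt_exp,
        Nat.cast_lt]
      refine lt_of_le_of_ne (natDegree_sub_le_of_le (hm' i) (natDegree_C_mul_X_pow_le _ _)
        |>.trans (max_self _).le) fun hd => ?_
      have := leadingCoeff_ne_zero.2 hq0
      rw [leadingCoeff, hd] at this
      simp at this
  by_cases hall : ∀ i, (x i).coeff m' ≠ 0
  · refine ⟨hall, ?_⟩
    set W₁ := (logMat D fun i : Fin n => (x i.succ).coeff m' / (x 0).coeff m').det with hW₁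
    have hend₁ : v₁ (W - c W₁) < 1 := by
      have := endpoint_unit v₁ D' hlog₁ (fun i => ι (x i)) (fun i => c ((x i).coeff m'))
        (ι (X ^ m')) hX' (fun i => hv₁c _ (hall i)) hx₁
      simp only [← map_div₀] at this
      rw [logMat_map c D D' hD'c (fun i : Fin n => (x i.succ).coeff m' / (x 0).coeff m')] at this
      simpa only [map_div₀] using this
    intro hW₁0
    rw [hW₁0, map_zero, sub_zero] at hend₁
    exact hW₁lt hend₁
  · exfalso
    have hlt : v₁ W < 1 := by
      push Not at hall
      obtain ⟨i₁, hi₁⟩ := hall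
      obtain ⟨i₂, hi₂⟩ := h1
      refine (hasRel_of_form P v₁ (fun i => ι (x i)) hx0 ⟨i₁, i₂, ?_⟩ (ι s) _ hY'
        hform).det_lt_one (fun i => div_ne_zero (hx0 _) (hx0 _)) D' hlog₁
      intro heq
      have e1 := hx₁ i₁
      rw [hi₁, map_zero, sub_zero, map_div₀, heq, ← map_div₀] at e1
      have e2 := Valuation.map_sub_lt v₁ e1 (hx₁ i₂)
      rw [sub_sub_cancel, hv₁c _ hi₂] at e2
      exact lt_irrefl _ e2
    exact hW₁lt hlt

/-- Let `x` be a polynomial curve over `L` along which the special form is a square, with coefficients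
in degrees `m, …, m'`. If the coefficient vector in degree `m` is nondegenerate and the one in degree
`m'` is nonzero, then the latter is nondegenerate as well. -/
theorem edge [CharP L 2] (D : Fin n → Derivation ℤ L L) (x : Fin (n+1) → L[X])
    (s : L[X]) (Y : J → L[X]) (hY : ∃ j, Y j ≠ 0) (hs : s ^ 2 = P.form x Y)
    (m m' : ℕ) (hm : ∀ i, X ^ m ∣ x i) (hm' : ∀ i, (x i).natDegree ≤ m')
    (h0 : Nondeg D fun i => (x i).coeff m) (h1 : ∃ i, (x i).coeff m' ≠ 0) :
    Nondeg D fun i => (x i).coeff m' := by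
  classical
  exact edge_aux P (RatFunc L) (RatFunc.inftyValuation L)
    (fun a ha => RatFunc.inftyValuation.polynomial L ha) D x s Y hY hs m m' hm hm' h0 h1

end Edge

/-! ### Reduction modulo a valuation ring -/

section Place
open Polynomial

variable {K : Type*} [Field K] {V : ValuationSubring K}
  {B O R : Type*} [CommRing B] [Algebra K B] [CommRing O] [Algebra V O] [CommRing R]

/-- A reduction of the `K`-algebra `B` modulo the maximal ideal of `V`: a model `O` of `B` over `V`
with a map `ρ` to a ring over the residue field, such that every nonzero element of `B` becomes,
after multiplication by a constant, an element of `O` with nonzero reduction. -/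
structure IsPlace (V : ValuationSubring K) [Algebra V O] (ι : O →+* B) (ρ : O →+* R) : Prop where
  inj : Function.Injective ι
  comm : ∀ c : V, ι (algebraMap V O c) = algebraMap K B c
  small : ∀ c : V, V.valuation c < 1 → ρ (algebraMap V O c) = 0
  scale : ∀ b : B, b ≠ 0 → ∃ c : K, c ≠ 0 ∧ ∃ b' : O, ι b' = algebraMap K B c * b ∧ ρ b' ≠ 0

namespace IsPlace

variable {ι : O →+* B} {ρ : O →+* R}

theorem comp_injective (h : IsPlace V ι ρ) {R' : Type*} [CommRing R'] (f : R →+* R')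
    (hf : Function.Injective f) : IsPlace V ι (f.comp ρ) where
  inj := h.inj
  comm := h.comm
  small c hc := by rw [RingHom.comp_apply, h.small c hc, map_zero]
  scale b hb := by
    obtain ⟨c, hc, b', h1, h2⟩ := h.scale b hb
    exact ⟨c, hc, b', h1, fun h => h2 ((map_eq_zero_iff f hf).1 h)⟩

/-- A finite family, not identically zero, becomes integral with nonzero reduction after scaling by a
common constant. -/
theorem scale_family (h : IsPlace V ι ρ) {T : Type*} [Finite T] (b : T → B)
    (hb : ∃ i, b i ≠ 0) : ∃ c : K, c ≠ 0 ∧ ∃ b' : T → O,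
      (∀ i, ι (b' i) = algebraMap K B c * b i) ∧ ∃ i, ρ (b' i) ≠ 0 := by
  classical
  have := Fintype.ofFinite T
  choose! c hc b' hb' hρ using fun i (hi : b i ≠ 0) => h.scale (b i) hi
  obtain ⟨i₀, hi₀, hmin⟩ := Finset.exists_min_image (Finset.univ.filter fun i => b i ≠ 0)
    (fun i => V.valuation (c i)) (by
      obtain ⟨i, hi⟩ := hb
      exact ⟨i, by simpa using hi⟩)
  simp only [Finset.mem_filter, Finset.mem_univ, true_and] at hi₀ hmin
  have hV : ∀ i, b i ≠ 0 → c i₀ / c i ∈ V := fun i hi => by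
    rw [← V.valuation_le_one_iff, map_div₀]
    exact div_le_one_of_le₀ (hmin i hi) zero_le
  refine ⟨c i₀, hc i₀ hi₀, fun i => if hi : b i ≠ 0 then
    algebraMap V O ⟨c i₀ / c i, hV i hi⟩ * b' i else 0, fun i => ?_, i₀, ?_⟩
  · dsimp only
    split_ifs with hi
    · rw [map_mul, h.comm, hb' i hi, ← mul_assoc, ← map_mul, div_mul_cancel₀ _ (hc i hi)]
    · push Not at hi
      rw [hi, map_zero, mul_zero]
  · have e : (⟨c i₀ / c i₀, hV i₀ hi₀⟩ : V) = 1 := Subtype.ext (div_self (hc i₀ hi₀))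
    dsimp only
    rw [dif_pos hi₀, e, map_one, one_mul]
    exact hρ i₀ hi₀

/-- Reduction coefficient by coefficient (the Gauss extension). -/
theorem polynomial (h : IsPlace V ι ρ) : IsPlace V (mapRingHom ι) (mapRingHom ρ) where
  inj := map_injective ι h.inj
  comm c := by
    simp only [Polynomial.algebraMap_apply, coe_mapRingHom, map_C, h.comm]
  small c hc := by
    simp only [Polynomial.algebraMap_apply, coe_mapRingHom, map_C, h.small c hc, C_0]
  scale p hp := by
    obtain ⟨c, hc, b', hb', i₀, hi₀⟩ := h.scale_family (fun i : Fin (p.natDegree + 1) => p.coeff i)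
      ⟨⟨p.natDegree, by omega⟩, by simpa using hp⟩
    refine ⟨c, hc, ∑ i : Fin (p.natDegree + 1), monomial (i : ℕ) (b' i), ?_, fun h => hi₀ ?_⟩
    · simp only [map_sum, coe_mapRingHom, map_monomial, hb', Polynomial.algebraMap_apply]
      conv_rhs => rw [p.as_sum_range]
      rw [Finset.mul_sum, ← Fin.sum_univ_eq_sum_range
        (fun i => C (algebraMap K B c) * monomial i (p.coeff i))]
      simp [C_mul_monomial]
    · have := congrArg (fun q => coeff q i₀) h
      simp only [coe_mapRingHom, coeff_map, finsetSum_coeff, coeff_monomial, coeff_zero] at this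
      rw [Finset.sum_eq_single i₀ (fun j _ hj => if_neg fun e => hj (Fin.ext e))
        (fun h => absurd (Finset.mem_univ _) h), if_pos rfl] at this
      exact this

/-- If `v a ≤ v c` and `c • b` is integral, then so is `a • b`. -/
theorem integral_of_le (h : IsPlace V ι ρ) {a c : K} (hc : c ≠ 0)
    (hac : V.valuation a ≤ V.valuation c) {b : B} {b' : O} (hb : ι b' = algebraMap K B c * b) :
    ∃ b'' : O, ι b'' = algebraMap K B a * b ∧ (V.valuation a < V.valuation c → ρ b'' = 0) := by
  have hc' : V.valuation c ≠ 0 := (Valuation.ne_zero_iff _).2 hc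
  have hV : a / c ∈ V := by
    rw [← V.valuation_le_one_iff, map_div₀]
    exact div_le_one_of_le₀ hac zero_le
  refine ⟨algebraMap V O ⟨a / c, hV⟩ * b', ?_, fun hlt => ?_⟩
  · rw [map_mul, h.comm, hb, ← mul_assoc, ← map_mul, div_mul_cancel₀ _ hc]
  · rw [map_mul, h.small, zero_mul]
    rw [map_div₀, div_lt_one₀ (zero_lt_iff.2 hc')]
    exact hlt

/-- `v a ≤ v c` if `a • b` is integral and `c • b` is integral with nonzero reduction. -/
theorem le_of_integral (h : IsPlace V ι ρ) {a c : K} {T : Type*} {b : T → B}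
    {b' b'' : T → O} (hb : ∀ i, ι (b' i) = algebraMap K B c * b i) (hρ : ∃ i, ρ (b' i) ≠ 0)
    (hb'' : ∀ i, ι (b'' i) = algebraMap K B a * b i) :
    V.valuation a ≤ V.valuation c := by
  by_contra! hlt
  have ha : a ≠ 0 := fun h0 => by simp [h0] at hlt
  obtain ⟨i, hi⟩ := hρ
  obtain ⟨z, hz, hz0⟩ := h.integral_of_le ha hlt.le (hb'' i)
  have : z = b' i := h.inj (by rw [hz, hb])
  exact hi (this ▸ hz0 hlt)

/-- Integral closedness: a square root of an element of `O` in `B` lies in `O`. -/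
theorem sqrt [IsDomain R] (h : IsPlace V ι ρ) (b : B) (g : O) (hb : b ^ 2 = ι g) :
    ∃ s : O, ι s = b ∧ s ^ 2 = g := by
  suffices ∃ s : O, ι s = b by
    obtain ⟨s, hs⟩ := this
    exact ⟨s, hs, h.inj (by rw [map_pow, hs, hb])⟩
  by_cases hb0 : b = 0
  · exact ⟨0, by rw [map_zero, hb0]⟩
  obtain ⟨c, hc, b', hb', hρ⟩ := h.scale b hb0
  by_cases hlt : V.valuation c < 1
  · exfalso
    have hV : c ∈ V := (V.valuation_le_one_iff c).1 hlt.le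
    have e : b' ^ 2 = algebraMap V O ⟨c, hV⟩ ^ 2 * g := h.inj (by
      rw [map_pow, hb', map_mul, map_pow, h.comm, mul_pow, hb])
    have e' := congrArg ρ e
    rw [map_pow, map_mul, map_pow, h.small _ hlt, zero_pow two_ne_zero, zero_mul] at e'
    exact hρ (pow_eq_zero_iff two_ne_zero |>.1 e')
  · obtain ⟨s, hs, -⟩ := h.integral_of_le (a := 1) hc (by simpa using hlt) hb'
    exact ⟨s, by rw [hs, map_one, one_mul]⟩

/-- If a reduction of `B` takes values in a domain, then `B` is a domain. -/
theorem isDomain [IsDomain R] (h : IsPlace V ι ρ) : IsDomain B := by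
  have : Nontrivial B := by
    have : Nontrivial O := by
      refine ⟨⟨1, 0, fun h10 => ?_⟩⟩
      have := congrArg ρ h10
      rw [map_one, map_zero] at this
      exact one_ne_zero this
    exact h.inj.nontrivial
  have : NoZeroDivisors B := by
    refine ⟨fun {a b} hab => ?_⟩
    by_contra! hcon
    obtain ⟨c, hc, a', ha', hρa⟩ := h.scale a hcon.1
    obtain ⟨d, hd, b', hb', hρb⟩ := h.scale b hcon.2
    have : a' * b' = 0 := h.inj (by
      rw [map_mul, ha', hb', mul_mul_mul_comm, hab, mul_zero, map_zero])
    have := congrArg ρ this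
    rw [map_mul, map_zero] at this
    exact mul_ne_zero hρa hρb this
  exact NoZeroDivisors.to_isDomain B

end IsPlace
end Place

/-! ### The Newton polygon argument -/

section Chain
open Polynomial

variable {K : Type*} [Field K] {V : ValuationSubring K}
  {B O L : Type*} [CommRing B] [Algebra K B] [CommRing O] [Algebra V O] [Field L]

/-- After scaling by `c`, the vector `b` is integral and its reduction is nondegenerate. -/
def NDegAt {n : ℕ} (ι : O →+* B) (ρ : O →+* L) (D : Fin n → Derivation ℤ L L) (c : K)
    (b : Fin (n + 1) → B) : Prop :=
  c ≠ 0 ∧ ∃ b' : Fin (n + 1) → O, (∀ i, ι (b' i) = algebraMap K B c * b i) ∧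
    Nondeg D fun i => ρ (b' i)

/-- The data of a quadratic-type equation over `B` with a model over `O` which reduces to the form
`P.form`. -/
structure RedForm {n : ℕ} {J : Type} [Fintype J] (P : FormData n J) (K : Type*) [Field K]
    {B O L : Type*} [CommRing B] [Algebra K B] [CommRing O] [Field L]
    (ι : O →+* B) (ρ : O →+* L) where
  /-- the form over `B[u]` -/
  fB : (Fin (n + 1) → B[X]) → (J → B[X]) → B[X]
  /-- the form over `O[u]` -/
  fO : (Fin (n + 1) → O[X]) → (J → O[X]) → O[X]
  /-- `fO` is a model of `fB` -/
  map_ι : ∀ x y, (fO x y).map ι = fB (fun i => (x i).map ι) (fun j => (y j).map ι)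
  /-- `fO` reduces to the special form -/
  map_ρ : ∀ x y, (fO x y).map ρ = P.form (fun i => (x i).map ρ) (fun j => (y j).map ρ)
  /-- weights of the quadratic variables -/
  w : J → ℕ
  /-- half of the degree -/
  h : ℕ
  /-- weighted homogeneity -/
  hom : ∀ (a b : K) x y, fB (fun i => C (algebraMap K B a) * x i)
    (fun j => C (algebraMap K B (b * a ^ w j)) * y j) =
      C (algebraMap K B (a ^ h * b)) ^ 2 * fB x y
  /-- compatibility with the substitution `u ↦ t u` -/
  comp : ∀ (t : B) x y, fB (fun i => (x i).comp (C t * X)) (fun j => (y j).comp (C t * X)) =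
      (fB x y).comp (C t * X)

variable {n : ℕ} {J : Type} [Fintype J] {P : FormData n J} {ι : O →+* B} {ρ : O →+* L}

theorem comp_C_mul_X_ne_zero [IsDomain B] {p : B[X]} (hp : p ≠ 0) {t : B} (ht : t ≠ 0) :
    p.comp (C t * X) ≠ 0 := fun h => by
  have := congrArg (fun q => coeff q p.natDegree) h
  simp only [comp_C_mul_X_coeff, coeff_zero] at this
  exact mul_ne_zero (leadingCoeff_ne_zero.2 hp) (pow_ne_zero _ ht) this

/-- One edge of the Newton polygon: after the substitution `u ↦ t u` and scaling by `a`, the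
reduction of `x` lives in degrees `m, …, m'`. -/
theorem chain_step [CharP L 2] (hpl : IsPlace V ι ρ) (Q : RedForm P K ι ρ)
    (D : Fin n → Derivation ℤ L L) (x : Fin (n + 1) → B[X]) (y : J → B[X]) (s : B[X])
    (hy : ∃ j, y j ≠ 0) (hs : s ^ 2 = Q.fB x y) (a t : K) (ha : a ≠ 0) (ht : t ≠ 0)
    (x' : Fin (n + 1) → O[X])
    (hx' : ∀ i, (x' i).map ι = C (algebraMap K B a) * (x i).comp (C (algebraMap K B t) * X))
    (m m' : ℕ) (hm : ∀ i, ∀ j < m, ρ ((x' i).coeff j) = 0)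
    (hm' : ∀ i, ∀ j, m' < j → ρ ((x' i).coeff j) = 0)
    (h0 : Nondeg D fun i => ρ ((x' i).coeff m)) (h1 : ∃ i, ρ ((x' i).coeff m') ≠ 0) :
    Nondeg D fun i => ρ ((x' i).coeff m') := by
  have : IsDomain B := hpl.isDomain
  have hinj := FaithfulSMul.algebraMap_injective K B
  have hne : ∀ {c : K}, c ≠ 0 → algebraMap K B c ≠ 0 := fun hc =>
    (map_ne_zero_iff _ hinj).2 hc
  let T : B[X] := C (algebraMap K B t) * X
  obtain ⟨b, hb, y', hy', hyρ⟩ := hpl.polynomial.scale_family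
    (fun j => C (algebraMap K B (a ^ Q.w j)) * (y j).comp T) (by
      obtain ⟨j, hj⟩ := hy
      exact ⟨j, mul_ne_zero (C_ne_zero.2 (hne (pow_ne_zero _ ha)))
        (comp_C_mul_X_ne_zero hj (hne ht))⟩)
  simp only [coe_mapRingHom] at hy' hyρ
  have key : (C (algebraMap K B (a ^ Q.h * b)) * s.comp T) ^ 2 = (Q.fO x' y').map ι := by
    rw [Q.map_ι, mul_pow, ← pow_comp, hs, ← Q.comp, ← Q.hom]
    congr 1
    · funext i; exact (hx' i).symm
    · funext j
      rw [hy', Polynomial.algebraMap_apply, ← mul_assoc, ← C_mul, ← map_mul]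
  obtain ⟨s', -, hs'⟩ := hpl.polynomial.sqrt _ _ key
  have hs'' := congrArg (Polynomial.map ρ) hs'
  rw [Polynomial.map_pow, Q.map_ρ] at hs''
  have := edge P D (fun i => (x' i).map ρ) _ _ hyρ hs'' m m'
    (fun i => X_pow_dvd_iff.2 fun j hj => by rw [coeff_map]; exact hm i j hj)
    (fun i => natDegree_le_iff_coeff_eq_zero.2 fun N hN => by rw [coeff_map]; exact hm' i N hN)
    (by simpa only [coeff_map] using h0) (by simpa only [coeff_map] using h1)
  simpa only [coeff_map] using this

/-- A polynomial over `B` with integral coefficients comes from `O[u]`. -/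
theorem exists_poly_lift (p : B[X]) (M : ℕ) (hp : p.natDegree ≤ M)
    (h : ∀ j ≤ M, ∃ c : O, ι c = p.coeff j) : ∃ q : O[X], q.map ι = p := by
  choose! c hc using h
  refine ⟨∑ j ∈ Finset.range (M + 1), monomial j (c j), ?_⟩
  rw [Polynomial.map_sum]
  conv_rhs => rw [p.as_sum_range' (M + 1) (by omega)]
  refine Finset.sum_congr rfl fun j hj => ?_
  rw [map_monomial, hc j (by simpa [Nat.lt_succ_iff] using hj)]

/-- Along a polynomial curve over `B` on which the form is a square, nondegeneracy of the reduction
passes from the coefficient vector in degree `0` to the one in the top degree `M`. The Newton polygon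
of the curve is traversed edge by edge with `chain_step`; slopes exist in `K` since it is
algebraically closed. -/
theorem chain [IsAlgClosed K] [CharP L 2] (hpl : IsPlace V ι ρ) (Q : RedForm P K ι ρ)
    (D : Fin n → Derivation ℤ L L) (x : Fin (n + 1) → B[X]) (y : J → B[X]) (s : B[X])
    (hy : ∃ j, y j ≠ 0) (hs : s ^ 2 = Q.fB x y) (M : ℕ) (hM : ∀ i, (x i).natDegree ≤ M)
    (hMne : ∃ i, (x i).coeff M ≠ 0) (c₀ : K) (h0 : NDegAt ι ρ D c₀ fun i => (x i).coeff 0) :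
    ∃ c : K, NDegAt ι ρ D c fun i => (x i).coeff M := by
  classical
  let v := V.valuation
  -- normalising constants for the coefficient vectors
  choose! c hc0 b hb hbρ using fun (j : ℕ) (hj : ∃ i, (x i).coeff j ≠ 0) =>
    hpl.scale_family (fun i => (x i).coeff j) hj
  let Z : ℕ → Prop := fun j => ∃ i, (x i).coeff j ≠ 0
  have hZM : ∀ j, Z j → j ≤ M := fun j ⟨i, hi⟩ =>
    (le_natDegree_of_ne_zero hi).trans (hM i)
  -- induction along the Newton polygon; `γ` bounds the preceding slope
  suffices H : ∀ k m, m + k = M → ∀ (a : K) (γ : V.ValueGroup),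
      NDegAt ι ρ D a (fun i => (x i).coeff m) →
      (∀ j, m < j → Z j → v a * γ ^ (j - m) < v (c j)) →
      (∀ j < m, Z j → v a ≤ v (c j) * γ ^ (m - j)) →
      ∃ c : K, NDegAt ι ρ D c fun i => (x i).coeff M by
    refine H M 0 (by omega) c₀ 0 h0 (fun j hj hZ => ?_) (fun j hj => absurd hj (by omega))
    rw [zero_pow (by omega), mul_zero]
    exact zero_lt_iff.2 ((Valuation.ne_zero_iff _).2 (hc0 j hZ))
  intro k
  induction k using Nat.strong_induction_on with
  | _ k ih =>
  intro m hmk a γ hND hgt hlt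
  rcases Nat.eq_zero_or_pos k with rfl | hk
  · rw [add_zero] at hmk
    subst hmk
    exact ⟨a, hND⟩
  obtain ⟨ha0, b₀, hb₀, hnd⟩ := hND
  replace hb₀ : ∀ i, ι (b₀ i) = algebraMap K B a * (x i).coeff m := hb₀
  have hva : v a ≠ 0 := (Valuation.ne_zero_iff _).2 ha0
  -- the candidates for the next slope
  have hroot : ∀ j, m < j → ∃ t : K, t ^ (j - m) = c j / a := fun j hj =>
    IsAlgClosed.exists_pow_nat_eq _ (by omega)
  choose! t ht using hroot
  let S : Finset ℕ := (Finset.range (M + 1)).filter fun j => m < j ∧ Z j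
  have hS : ∀ j, j ∈ S ↔ m < j ∧ Z j := fun j => by
    simp only [S, Finset.mem_filter, Finset.mem_range]
    exact ⟨fun h => h.2, fun h => ⟨Nat.lt_succ_of_le (hZM j h.2), h⟩⟩
  obtain ⟨j₀, hj₀, hmin⟩ := S.exists_min_image (fun j => v (t j))
    ⟨M, (hS M).2 ⟨by omega, hMne⟩⟩
  rw [hS] at hj₀
  set τ := t j₀ with hτ
  have hτpow : ∀ j, m < j → Z j → v a * v (t j) ^ (j - m) = v (c j) := fun j hj hZ => by
    rw [← map_pow, ht j hj, ← map_mul, mul_div_cancel₀ _ ha0]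
  have hτ0 : τ ≠ 0 := fun h => by
    have := ht j₀ hj₀.1
    rw [← hτ, h, zero_pow (by omega)] at this
    exact div_ne_zero (hc0 j₀ hj₀.2) ha0 this.symm
  have hvτ : v τ ≠ 0 := (Valuation.ne_zero_iff _).2 hτ0
  have hle : ∀ j, m < j → Z j → v a * v τ ^ (j - m) ≤ v (c j) := fun j hj hZ => by
    rw [← hτpow j hj hZ]
    exact mul_le_mul' le_rfl (pow_le_pow_left' (hmin j ((hS j).2 ⟨hj, hZ⟩)) _)
  have hγτ : γ < v τ := by
    by_contra! hcon
    have h1 := hgt j₀ hj₀.1 hj₀.2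
    rw [← hτpow j₀ hj₀.1 hj₀.2] at h1
    exact absurd (mul_le_mul' le_rfl (pow_le_pow_left' hcon _)) (not_le.2 h1)
  have hstrict : ∀ j < m, Z j → v a < v (c j) * v τ ^ (m - j) := fun j hj hZ =>
    (hlt j hj hZ).trans_lt <| mul_lt_mul_of_pos_left
      (pow_lt_pow_left₀ hγτ zero_le (by omega))
      (zero_lt_iff.2 ((Valuation.ne_zero_iff _).2 (hc0 j hZ)))
  -- the end of the edge
  let S' := S.filter fun j => v a * v τ ^ (j - m) = v (c j)
  obtain ⟨m', hm', hmax⟩ := S'.exists_max_image id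
    ⟨j₀, Finset.mem_filter.2 ⟨(hS j₀).2 hj₀, hτpow j₀ hj₀.1 hj₀.2⟩⟩
  simp only [S', Finset.mem_filter, hS, id] at hm' hmax
  obtain ⟨⟨hmm', hZm'⟩, hm'eq⟩ := hm'
  have hlt' : ∀ j, m' < j → Z j → v a * v τ ^ (j - m) < v (c j) := fun j hj hZ =>
    lt_of_le_of_ne (hle j (by omega) hZ) fun h =>
      absurd (hmax j ⟨⟨by omega, hZ⟩, h⟩) (by omega)
  -- the scaled coefficients are integral
  let A : K := a * (τ ^ m)⁻¹
  have hA0 : A ≠ 0 := mul_ne_zero ha0 (inv_ne_zero (pow_ne_zero _ hτ0))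
  have hAj : ∀ j, m ≤ j → A * τ ^ j = a * τ ^ (j - m) := fun j hj => by
    obtain ⟨l, rfl⟩ := Nat.exists_eq_add_of_le hj
    simp only [A, pow_add, Nat.add_sub_cancel_left]
    field_simp
  have hAj' : ∀ j, j ≤ m → A * τ ^ j * τ ^ (m - j) = a := fun j hj => by
    rw [mul_assoc, ← pow_add, Nat.add_sub_cancel' hj]
    simp only [A]
    field_simp
  have hvAlt : ∀ j < m, Z j → v (A * τ ^ j) < v (c j) := fun j hj hZ => by
    have h1 := hstrict j hj hZ
    rw [← hAj' j hj.le, map_mul, map_pow _ τ (m - j)] at h1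
    exact lt_of_mul_lt_mul_right' h1
  have hvAgt : ∀ j, m' < j → Z j → v (A * τ ^ j) < v (c j) := fun j hj hZ => by
    rw [hAj j (by omega), map_mul, map_pow]
    exact hlt' j hj hZ
  have hnorm : v a = v (c m) := by
    have hZm : Z m := by
      refine ⟨0, fun h => hnd.1 0 ?_⟩
      have := hb₀ 0
      rw [h, mul_zero, ← map_zero ι] at this
      dsimp only
      rw [hpl.inj this, map_zero]
    exact le_antisymm (hpl.le_of_integral (hb m hZm) (hbρ m hZm) hb₀)
      (hpl.le_of_integral hb₀ ⟨0, hnd.1 0⟩ (hb m hZm))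
  have hvAle : ∀ j, Z j → v (A * τ ^ j) ≤ v (c j) := fun j hZ => by
    rcases lt_trichotomy j m with h | rfl | h
    · exact (hvAlt j h hZ).le
    · rw [hAj j le_rfl, Nat.sub_self, pow_zero, mul_one, hnorm]
    · rw [hAj j h.le, map_mul, map_pow]
      exact hle j h hZ
  have hint : ∀ i j, ∃ z : O, ι z = algebraMap K B (A * τ ^ j) * (x i).coeff j ∧
      (v (A * τ ^ j) < v (c j) ∨ ¬ Z j → ρ z = 0) := fun i j => by
    by_cases hZ : Z j
    · obtain ⟨z, hz, hz'⟩ := hpl.integral_of_le (hc0 j hZ) (hvAle j hZ) (hb j hZ i)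
      exact ⟨z, hz, fun h => hz' (h.resolve_right (not_not.2 hZ))⟩
    · refine ⟨0, ?_, fun _ => map_zero ρ⟩
      have : (x i).coeff j = 0 := by
        by_contra h
        exact hZ ⟨i, h⟩
      rw [this, mul_zero, map_zero]
  choose z hz hzρ using hint
  have hcoeff : ∀ i j, (C (algebraMap K B A) *
      (x i).comp (C (algebraMap K B τ) * X)).coeff j = ι (z i j) := fun i j => by
    rw [coeff_C_mul, comp_C_mul_X_coeff, hz, map_mul _ A, map_pow]
    ring
  have hx' : ∀ i, ∃ q : O[X], q.map ι = C (algebraMap K B A) *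
      (x i).comp (C (algebraMap K B τ) * X) := fun i =>
    exists_poly_lift _ _ le_rfl fun j _ => ⟨z i j, (hcoeff i j).symm⟩
  choose x' hx' using hx'
  have hx'z : ∀ i j, (x' i).coeff j = z i j := fun i j => hpl.inj (by
    rw [← coeff_map, hx', hcoeff])
  have hxb₀ : ∀ i, (x' i).coeff m = b₀ i := fun i => by
    refine hpl.inj ?_
    rw [hx'z, hz, hb₀, hAj m le_rfl, Nat.sub_self, pow_zero, mul_one]
  have hρm' : ∃ i, ρ ((x' i).coeff m') ≠ 0 := by
    by_contra! hcon
    obtain ⟨i, hi⟩ := hbρ m' hZm'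
    have e : v (c m') ≤ v (A * τ ^ m') := by
      rw [hAj m' (by omega), map_mul, map_pow, hm'eq]
    obtain ⟨u, hu⟩ : ∃ u : V, (u : K) * (A * τ ^ m') = c m' := by
      refine ⟨⟨c m' / (A * τ ^ m'), ?_⟩, div_mul_cancel₀ _ (mul_ne_zero hA0 (pow_ne_zero _ hτ0))⟩
      rw [← V.valuation_le_one_iff, map_div₀]
      exact div_le_one_of_le₀ e zero_le
    have e2 : b m' i = algebraMap V O u * (x' i).coeff m' := hpl.inj (by
      rw [hb m' hZm', map_mul, hpl.comm, hx'z, hz, ← mul_assoc, ← map_mul, hu])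
    rw [e2, map_mul, hcon, mul_zero] at hi
    exact hi rfl
  have hstep := chain_step hpl Q D x y s hy hs A τ hA0 hτ0 x' hx' m m'
    (fun i j hj => by
      rw [hx'z]
      refine hzρ i j ?_
      by_cases hZ : Z j
      · exact Or.inl (hvAlt j hj hZ)
      · exact Or.inr hZ)
    (fun i j hj => by
      rw [hx'z]
      refine hzρ i j ?_
      by_cases hZ : Z j
      · exact Or.inl (hvAgt j hj hZ)
      · exact Or.inr hZ)
    (by simpa only [hxb₀] using hnd) hρm'
  have hm'M := hZM m' hZm'
  refine ih (M - m') (by omega) m' (by omega) (A * τ ^ m') (v τ)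
    ⟨mul_ne_zero hA0 (pow_ne_zero _ hτ0), fun i => (x' i).coeff m',
      fun i => by dsimp only; rw [hx'z, hz], hstep⟩ (fun j hj hZ => ?_) (fun j hj hZ => ?_)
  · rw [← map_pow, ← map_mul, mul_assoc, ← pow_add, Nat.add_sub_cancel' hj.le]
    exact hvAgt j hj hZ
  · have := mul_le_mul' (hvAle j hZ) (le_refl (v τ ^ (m' - j)))
    rwa [← map_pow, ← map_mul, mul_assoc, ← pow_add, Nat.add_sub_cancel' hj.le, map_pow] at this

end Chain

/-! ### Reductions of polynomial rings and quadratic extensions -/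

section PlaceInstances

variable {K : Type*} [Field K] (V : ValuationSubring K)

theorem isPlace_base : IsPlace V V.subtype (IsLocalRing.residue V) where
  inj := Subtype.val_injective
  comm _ := rfl
  small c hc := (IsLocalRing.residue_eq_zero_iff c).2 ((V.valuation_lt_one_iff c).2 hc)
  scale b hb := ⟨b⁻¹, inv_ne_zero hb, 1, by simp [hb], by simp⟩

variable {V} {B O R : Type*} [CommRing B] [Algebra K B] [CommRing O] [Algebra V O] [CommRing R]
  {ι : O →+* B} {ρ : O →+* R}

/-- Reduction coefficient by coefficient of polynomials in several variables. -/
theorem IsPlace.mvPolynomial (h : IsPlace V ι ρ) (σ : Type*) :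
    IsPlace V (MvPolynomial.map (σ := σ) ι) (MvPolynomial.map (σ := σ) ρ) where
  inj := MvPolynomial.map_injective ι h.inj
  comm c := by
    simp only [MvPolynomial.algebraMap_apply, MvPolynomial.map_C, h.comm]
  small c hc := by
    simp only [MvPolynomial.algebraMap_apply, MvPolynomial.map_C, h.small c hc, map_zero]
  scale p hp := by
    classical
    obtain ⟨m₀, hm₀⟩ := MvPolynomial.ne_zero_iff.1 hp
    obtain ⟨c, hc, b', hb', i₀, hi₀⟩ := h.scale_family
      (fun m : p.support => MvPolynomial.coeff (m : σ →₀ ℕ) p)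
      ⟨⟨m₀, MvPolynomial.mem_support_iff.2 hm₀⟩, hm₀⟩
    refine ⟨c, hc, ∑ m : p.support, MvPolynomial.monomial (m : σ →₀ ℕ) (b' m), ?_, fun h => hi₀ ?_⟩
    · simp only [map_sum, MvPolynomial.map_monomial, hb', MvPolynomial.algebraMap_apply]
      conv_rhs => rw [p.as_sum, Finset.mul_sum, ← Finset.sum_coe_sort]
      simp [MvPolynomial.C_mul_monomial]
    · have := congrArg (MvPolynomial.coeff (i₀ : σ →₀ ℕ)) h
      simp only [MvPolynomial.coeff_map, MvPolynomial.coeff_sum, MvPolynomial.coeff_monomial,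
        MvPolynomial.coeff_zero] at this
      rw [Finset.sum_eq_single i₀ (fun j _ hj => if_neg fun e => hj (Subtype.ext e))
        (fun h => absurd (Finset.mem_univ _) h), if_pos rfl] at this
      exact this

theorem re_algMap {S T : Type*} [CommRing S] [CommRing T] [Algebra S T] {F : T} (c : S) :
    (algebraMap S (QuadraticAlgebra T F 0) c).re = algebraMap S T c := rfl

theorem im_algMap {S T : Type*} [CommRing S] [CommRing T] [Algebra S T] {F : T} (c : S) :
    (algebraMap S (QuadraticAlgebra T F 0) c).im = 0 := rfl

open scoped QuadraticAlgebra in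
/-- Functoriality of the ring `S[s]/(s² - F)`. -/
def quadMap {S T : Type*} [CommRing S] [CommRing T] (f : S →+* T) {F : S} {G : T} (h : f F = G) :
    QuadraticAlgebra S F 0 →+* QuadraticAlgebra T G 0 where
  toFun z := ⟨f z.re, f z.im⟩
  map_one' := by ext <;> simp
  map_zero' := by ext <;> simp
  map_mul' x y := by ext <;> simp [h]
  map_add' x y := by ext <;> simp

/-- Reduction of `B[s]/(s² - F)`, computed on the components of the basis `1, s`. -/
theorem IsPlace.quadratic (h : IsPlace V ι ρ) {F : O} {FB : B} {FR : R} (hB : ι F = FB)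
    (hR : ρ F = FR) : IsPlace V (quadMap ι hB) (quadMap ρ hR) where
  inj x y hxy := by
    have h1 := congrArg QuadraticAlgebra.re hxy
    have h2 := congrArg QuadraticAlgebra.im hxy
    exact QuadraticAlgebra.ext (h.inj h1) (h.inj h2)
  comm c := QuadraticAlgebra.ext (h.comm c) (map_zero ι)
  small c hc := QuadraticAlgebra.ext (h.small c hc) (map_zero ρ)
  scale b hb := by
    obtain ⟨c, hc, b', hb', i₀, hi₀⟩ := h.scale_family (fun i : Fin 2 => ![b.re, b.im] i) (by
      by_contra! hcon
      exact hb (QuadraticAlgebra.ext (hcon 0) (hcon 1)))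
    refine ⟨c, hc, ⟨b' 0, b' 1⟩, ?_, fun h0 => hi₀ ?_⟩
    · ext
      · simp [quadMap, hb', re_algMap, im_algMap]
      · simp [quadMap, hb', re_algMap, im_algMap]
    · have h1 := congrArg QuadraticAlgebra.re h0
      have h2 := congrArg QuadraticAlgebra.im h0
      fin_cases i₀
      · exact h1
      · exact h2

end PlaceInstances

section QuadraticDer

variable {R : Type*} [CommRing R] [IsDomain R] [CharP R 2] {F : R}

/-- In characteristic two, a derivation not killing `F` shows that `F` is not a square in the fraction
field of `R`, so that `R[s]/(s² - F)` is a domain. -/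
theorem isDomain_quadratic (δ : Derivation ℤ R R) (hδ : δ F ≠ 0) :
    IsDomain (QuadraticAlgebra R F 0) := by
  have key : ∀ p q : R, p * p = F * (q * q) → p = 0 ∧ q = 0 := fun p q h => by
    have h2 : ∀ a : R, a + a = 0 := CharTwo.add_self_eq_zero
    have e := congrArg δ h
    rw [Derivation.leibniz, Derivation.leibniz, Derivation.leibniz, smul_eq_mul, smul_eq_mul,
      h2, h2, smul_eq_mul, mul_zero, zero_add] at e
    have hq : q = 0 := by
      rcases mul_eq_zero.1 e.symm with h | h
      · exact mul_self_eq_zero.1 h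
      · exact absurd h hδ
    rw [hq, mul_zero, mul_zero] at h
    exact ⟨mul_self_eq_zero.1 h, hq⟩
  have hN : ∀ z : QuadraticAlgebra R F 0, QuadraticAlgebra.norm z = 0 → z = 0 := fun z hz => by
    rw [QuadraticAlgebra.norm_def] at hz
    obtain ⟨h1, h2⟩ := key z.re z.im (by linear_combination hz)
    exact QuadraticAlgebra.ext h1 h2
  have : Nontrivial (QuadraticAlgebra R F 0) :=
    ⟨⟨1, 0, fun h => one_ne_zero (congrArg QuadraticAlgebra.re h)⟩⟩
  have : NoZeroDivisors (QuadraticAlgebra R F 0) := ⟨fun {a b} hab => by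
    have := congrArg QuadraticAlgebra.norm hab
    rw [map_mul, QuadraticAlgebra.norm_def 0] at this
    simp only [QuadraticAlgebra.re_zero, QuadraticAlgebra.im_zero, mul_zero, add_zero,
      sub_zero] at this
    rcases mul_eq_zero.1 this with h | h
    · exact Or.inl (hN a h)
    · exact Or.inr (hN b h)⟩
  exact NoZeroDivisors.to_isDomain _

/-- The extension of a derivation killing `F` to `R[s]/(s² - F)` which kills `s`. -/
def quadDer (δ : Derivation ℤ R R) (hδ : δ F = 0) : ZDer (QuadraticAlgebra R F 0) :=
  Derivation.mk' (R := ℤ) (A := QuadraticAlgebra R F 0) (M := QuadraticAlgebra R F 0)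
    { toFun := fun z => ⟨δ z.re, δ z.im⟩
      map_add' := fun x y => by ext <;> simp
      map_smul' := fun c x => by ext <;> simp }
    (fun x y => by
      ext
      · simp [hδ]; ring
      · simp; ring)

end QuadraticDer

/-! ### Homogenisation in the quadratic variables -/

section Homogenize
open MvPolynomial

variable {n r : ℕ} {A S : Type*} [CommRing A] [CommRing S]

/-- The monomial with exponent `m`, made quadratic in `y` with the help of the additional
variable `y none`. -/
def hmono (x : Fin (n + 1) → S) (y : Option (Fin r) → S) (m : Fin (n + 1) ⊕ Fin r →₀ ℕ) : S :=
  (∏ i, x i ^ m (Sum.inl i)) * (∏ j, y (some j) ^ m (Sum.inr j)) *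
    y none ^ (2 - ∑ j, m (Sum.inr j))

/-- Evaluation of the homogenisation of `F` with respect to the `y`-variables. -/
def hval (f : A →+* S) (F : MvPolynomial (Fin (n + 1) ⊕ Fin r) A) (x : Fin (n + 1) → S)
    (y : Option (Fin r) → S) : S :=
  ∑ m ∈ F.support, f (coeff m F) * hmono x y m

theorem hval_eq_sum (f : A →+* S) (F : MvPolynomial (Fin (n + 1) ⊕ Fin r) A)
    (x : Fin (n + 1) → S) (y : Option (Fin r) → S) (T : Finset (Fin (n + 1) ⊕ Fin r →₀ ℕ))
    (hT : F.support ⊆ T) : hval f F x y = ∑ m ∈ T, f (coeff m F) * hmono x y m := by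
  refine Finset.sum_subset hT fun m _ hm => ?_
  rw [notMem_support_iff.1 hm, map_zero, zero_mul]

theorem map_hval {S' : Type*} [CommRing S'] (g : S →+* S') (f : A →+* S)
    (F : MvPolynomial (Fin (n + 1) ⊕ Fin r) A) (x : Fin (n + 1) → S) (y : Option (Fin r) → S) :
    g (hval f F x y) = hval (g.comp f) F (fun i => g (x i)) (fun j => g (y j)) := by
  simp [hval, hmono]

theorem hval_map {A' : Type*} [CommRing A'] (φ : A →+* A') (f : A' →+* S)
    (F : MvPolynomial (Fin (n + 1) ⊕ Fin r) A) (x : Fin (n + 1) → S) (y : Option (Fin r) → S) :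
    hval f (map φ F) x y = hval (f.comp φ) F x y := by
  rw [hval_eq_sum f _ x y F.support (support_map_subset _ _), hval]
  simp [coeff_map]

theorem hval_add (f : A →+* S) (F G : MvPolynomial (Fin (n + 1) ⊕ Fin r) A)
    (x : Fin (n + 1) → S) (y : Option (Fin r) → S) :
    hval f (F + G) x y = hval f F x y + hval f G x y := by
  classical
  rw [hval_eq_sum f _ x y (F.support ∪ G.support) support_add,
    hval_eq_sum f F x y (F.support ∪ G.support) Finset.subset_union_left,
    hval_eq_sum f G x y (F.support ∪ G.support) Finset.subset_union_right,
    ← Finset.sum_add_distrib]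
  simp [add_mul]

theorem hval_sum (f : A →+* S) {T : Type*} (s : Finset T)
    (F : T → MvPolynomial (Fin (n + 1) ⊕ Fin r) A)
    (x : Fin (n + 1) → S) (y : Option (Fin r) → S) :
    hval f (∑ t ∈ s, F t) x y = ∑ t ∈ s, hval f (F t) x y := by
  classical
  induction s using Finset.induction_on with
  | empty => simp [hval]
  | insert a s ha ih => rw [Finset.sum_insert ha, Finset.sum_insert ha, hval_add, ih]

theorem hval_monomial (f : A →+* S) (m : Fin (n + 1) ⊕ Fin r →₀ ℕ) (a : A)
    (x : Fin (n + 1) → S) (y : Option (Fin r) → S) :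
    hval f (monomial m a) x y = f a * hmono x y m := by
  classical
  rw [hval_eq_sum f _ x y {m} support_monomial_subset]
  simp

/-- Homogenising a polynomial in `x` times a monomial in `y`. -/
theorem hval_rename_mul (f : A →+* S) (G : MvPolynomial (Fin (n + 1)) A) (b : Fin r →₀ ℕ)
    (x : Fin (n + 1) → S) (y : Option (Fin r) → S) :
    hval f (rename Sum.inl G * rename Sum.inr (monomial b 1)) x y =
      eval₂ f x G * ((∏ j, y (some j) ^ b j) * y none ^ (2 - ∑ j, b j)) := by
  induction G using MvPolynomial.induction_on' with
  | add p q hp hq => rw [map_add, add_mul, hval_add, hp, hq, eval₂_add, add_mul]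
  | monomial u a =>
    rw [rename_monomial, rename_monomial, monomial_mul, hval_monomial, eval₂_monomial, mul_one,
      hmono]
    have h1 : ∀ i, (u.mapDomain Sum.inl + b.mapDomain Sum.inr : Fin (n + 1) ⊕ Fin r →₀ ℕ)
        (Sum.inl i) = u i := fun i => by
      rw [Finsupp.add_apply, Finsupp.mapDomain_apply Sum.inl_injective,
        Finsupp.mapDomain_of_notMem_range _ _ (by simp), add_zero]
    have h2 : ∀ j, (u.mapDomain Sum.inl + b.mapDomain Sum.inr : Fin (n + 1) ⊕ Fin r →₀ ℕ)
        (Sum.inr j) = b j := fun j => by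
      rw [Finsupp.add_apply, Finsupp.mapDomain_apply Sum.inr_injective,
        Finsupp.mapDomain_of_notMem_range _ _ (by simp), zero_add]
    simp only [h1, h2]
    rw [Finsupp.prod_fintype _ _ (fun i => pow_zero _)]
    ring

/-- With `y none = 1` the homogenisation is the usual evaluation. -/
theorem hval_one (f : A →+* S) (F : MvPolynomial (Fin (n + 1) ⊕ Fin r) A) (x : Fin (n + 1) → S)
    (y : Option (Fin r) → S) (hy : y none = 1) :
    hval f F x y = eval₂ f (Sum.elim x fun j => y (some j)) F := by
  rw [eval₂_eq', hval]
  refine Finset.sum_congr rfl fun m _ => ?_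
  rw [hmono, hy, one_pow, mul_one, Fintype.prod_sum_type]
  rfl

/-- The weights of the variables `y`; the additional variable `y none` has weight `0`. -/
def yw {r : ℕ} : Option (Fin r) → ℕ := fun o => o.elim 0 fun _ => 1

/-- Weighted homogeneity of the homogenisation: scaling `x` by `a` and `y` by `b` and its weights
multiplies the value by the square of `a ^ h * b`. -/
theorem hval_hom (f : A →+* S) (F : MvPolynomial (Fin (n + 1) ⊕ Fin r) A) (h : ℕ)
    (hF : ∀ m, coeff m F ≠ 0 → (∑ i, m (Sum.inl i)) + (∑ j, m (Sum.inr j)) = 2 * h ∧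
      ∑ j, m (Sum.inr j) ≤ 2)
    (x : Fin (n + 1) → S) (y : Option (Fin r) → S) (a b : S) :
    hval f F (fun i => a * x i) (fun j => b * a ^ yw j * y j) =
      (a ^ h * b) ^ 2 * hval f F x y := by
  rw [hval, hval, Finset.mul_sum]
  refine Finset.sum_congr rfl fun m hm => ?_
  obtain ⟨h1, h2⟩ := hF m (mem_support_iff.1 hm)
  simp only [hmono, mul_pow, Finset.prod_mul_distrib, Finset.prod_pow_eq_pow_sum, yw,
    Option.elim_none, Option.elim_some, pow_one, pow_zero, mul_one]
  have e1 : (a ^ h) ^ 2 = a ^ (∑ i, m (Sum.inl i)) * a ^ (∑ j, m (Sum.inr j)) := by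
    rw [← pow_mul, ← pow_add, h1, mul_comm]
  have e2 : b ^ 2 = b ^ (∑ j, m (Sum.inr j)) * b ^ (2 - ∑ j, m (Sum.inr j)) := by
    rw [← pow_add, Nat.add_sub_cancel' h2]
  rw [e1, e2]
  ring

variable (P : FormData n (Option (Fin r)))

/-- The form attached to `P`, with the last quadratic variable set to `1`. -/
noncomputable def FormData.poly (k : Type*) [CommRing k] :
    MvPolynomial (Fin (n + 1) ⊕ Fin r) k :=
  P.form (fun i => X (Sum.inl i)) fun o => o.elim 1 fun j => X (Sum.inr j)

theorem hval_poly {k : Type*} [CommRing k] (f : k →+* S) (hα : P.α ≠ P.β)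
    (x : Fin (n + 1) → S) (y : Option (Fin r) → S) :
    hval f (P.poly k) x y = P.form x y := by
  have hcf : ∀ o, P.cf (fun i => (X (Sum.inl i) : MvPolynomial (Fin (n + 1) ⊕ Fin r) k)) o =
      rename Sum.inl (P.cf X o) := fun o => by simp [FormData.cf]
  have hbf : P.bf (fun i => (X (Sum.inl i) : MvPolynomial (Fin (n + 1) ⊕ Fin r) k)) =
      rename Sum.inl (P.bf X) := by simp [FormData.bf]
  have hcf' : ∀ o, eval₂ f x (P.cf X o) = P.cf x o := fun o => by
    rw [← coe_eval₂Hom]; simp [FormData.cf]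
  have hbf' : eval₂ f x (P.bf X) = P.bf x := by
    rw [← coe_eval₂Hom]; simp [FormData.bf]
  have hX : ∀ (j : Fin r) (e : ℕ), (X (Sum.inr j) : MvPolynomial (Fin (n + 1) ⊕ Fin r) k) ^ e =
      rename Sum.inr (monomial (Finsupp.single j e) 1) := fun j e => by
    rw [← X_pow_eq_monomial]; simp
  have h1 : (1 : MvPolynomial (Fin (n + 1) ⊕ Fin r) k) =
      rename Sum.inr (monomial (0 : Fin r →₀ ℕ) 1) := by simp
  have hprod : ∀ (j : Fin r) (e : ℕ), (∏ i, y (some i) ^ (Finsupp.single j e) i) =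
      y (some j) ^ e := fun j e => by
    rw [Finset.prod_eq_single j (fun i _ hi => by simp [hi.symm])
      (fun h => absurd (Finset.mem_univ _) h)]
    simp
  have hsum : ∀ (j : Fin r) (e : ℕ), (∑ i, (Finsupp.single j e) i) = e := fun j e => by
    rw [Finset.sum_eq_single j (fun i _ hi => by simp [hi.symm])
      (fun h => absurd (Finset.mem_univ _) h)]
    simp
  rw [FormData.poly, FormData.form, FormData.form, hval_add, hval_sum]
  congr 1
  · refine Finset.sum_congr rfl fun o _ => ?_
    rw [hcf]
    cases o with
    | none =>
      rw [Option.elim_none, one_pow, h1, hval_rename_mul, hcf']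
      simp
    | some j =>
      rw [Option.elim_some, hX, hval_rename_mul, hcf', hprod, hsum]
      simp
  · rw [hbf]
    generalize P.α = α at hα
    generalize P.β = β at hα
    cases α with
    | none =>
      cases β with
      | none => exact absurd rfl hα
      | some j =>
        rw [Option.elim_none, Option.elim_some, mul_one, ← pow_one (X (Sum.inr j)), hX,
          hval_rename_mul, hbf', hprod, hsum]
        ring
    | some i =>
      cases β with
      | none =>
        rw [Option.elim_none, Option.elim_some, mul_one, ← pow_one (X (Sum.inr i)), hX,
          hval_rename_mul, hbf', hprod, hsum]
        ring
      | some j =>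
        have e : (X (Sum.inr i) * X (Sum.inr j) : MvPolynomial (Fin (n + 1) ⊕ Fin r) k) =
            rename Sum.inr (monomial (Finsupp.single i 1 + Finsupp.single j 1) 1) := by
          rw [← pow_one (X (Sum.inr i)), ← pow_one (X (Sum.inr j)), hX, hX, ← map_mul,
            monomial_mul, one_mul]
        rw [Option.elim_some, Option.elim_some, mul_assoc, e, hval_rename_mul, hbf']
        simp only [Finsupp.add_apply, pow_add, Finset.prod_mul_distrib, hprod,
          Finset.sum_add_distrib, hsum]
        ring

end Homogenize

/-! ### Derivations killing the special form -/

section Derivations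

/-- Restriction of scalars of a derivation to `ℤ`. -/
def toZDer {k A : Type*} [CommRing k] [CommRing A] [Algebra k A] (δ : Derivation k A A) : ZDer A :=
  δ.restrictScalars ℤ

/-- The constants of a derivation. -/
def derKer {R : Type*} [CommRing R] (δ : Derivation ℤ R R) : Subring R where
  carrier := {a | δ a = 0}
  mul_mem' {a b} ha hb := by
    change δ a = 0 at ha
    change δ b = 0 at hb
    change δ (a * b) = 0
    rw [Derivation.leibniz, ha, hb, smul_zero, smul_zero, add_zero]
  one_mem' := δ.map_one_eq_zero
  add_mem' {a b} ha hb := by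
    change δ a = 0 at ha
    change δ b = 0 at hb
    change δ (a + b) = 0
    rw [map_add, ha, hb, add_zero]
  zero_mem' := map_zero δ
  neg_mem' {a} ha := by
    change δ a = 0 at ha
    change δ (-a) = 0
    rw [map_neg, ha, neg_zero]

variable {n : ℕ} {J : Type} [Fintype J] (P : FormData n J) {R : Type*} [CommRing R] [CharP R 2]

/-- A derivation killing all `x_i` only sees the mixed term of the form, in characteristic two. -/
theorem der_form (δ : Derivation ℤ R R) (x : Fin (n + 1) → R) (hx : ∀ i, δ (x i) = 0)
    (y : J → R) : δ (P.form x y) = P.bf x * (y P.α * δ (y P.β) + y P.β * δ (y P.α)) := by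
  have hx' : ∀ i, x i ∈ derKer δ := hx
  have hcf : ∀ o, δ (P.cf x o) = 0 := fun o => by
    change P.cf x o ∈ derKer δ
    exact mul_mem (mul_mem (prod_mem fun i _ => hx' _) (pow_mem (hx' _) _))
      (sum_mem fun i _ => pow_mem (hx' _) _)
  have hbf : δ (P.bf x) = 0 := by
    change P.bf x ∈ derKer δ
    exact mul_mem (pow_mem (hx' _) _) (pow_mem (prod_mem fun i _ => hx' _) _)
  have hsq : ∀ a : R, δ (a ^ 2) = 0 := fun a => by
    rw [pow_two, Derivation.leibniz]
    exact CharTwo.add_self_eq_zero _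
  rw [FormData.form, map_add, map_sum, Finset.sum_eq_zero, zero_add, Derivation.leibniz,
    Derivation.leibniz, hbf]
  · simp only [smul_eq_mul]; ring
  · intro o _
    rw [Derivation.leibniz, hcf, hsq, smul_zero, smul_zero, add_zero]

end Derivations

section Ders
open MvPolynomial

variable {n r : ℕ} (P : FormData n (Option (Fin r))) (k : Type*) [Field k] [CharP k 2] (j₀ : Fin r)

/-- The derivation `b ∂/∂x_j + (∂F/∂x_j) ∂/∂y_{j₀}`, which kills the form in characteristic `2`. -/
noncomputable def baseDer (j : Fin n) : ZDer (MvPolynomial (Fin (n + 1) ⊕ Fin r) k) :=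
  toZDer (k := k)
    (P.bf (fun i => (X (Sum.inl i) : MvPolynomial (Fin (n + 1) ⊕ Fin r) k)) •
        pderiv (R := k) (Sum.inl j.succ) +
      pderiv (R := k) (Sum.inl j.succ) (P.poly k) • pderiv (R := k) (Sum.inr j₀))

variable {P} in
theorem pderiv_poly (hα : P.α = some j₀) (hβ : P.β = none) :
    pderiv (Sum.inr j₀) (P.poly k) = P.bf (fun i => X (Sum.inl i)) := by
  have := der_form P (toZDer (pderiv (R := k) (Sum.inr j₀ : Fin (n + 1) ⊕ Fin r)))
    (fun i => X (Sum.inl i)) (fun i => pderiv_X_of_ne (by simp))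
    fun o => o.elim 1 fun j => X (Sum.inr j)
  refine this.trans ?_
  rw [hα, hβ]
  change _ * (_ * pderiv (Sum.inr j₀) 1 + 1 * pderiv (Sum.inr j₀) (X (Sum.inr j₀))) = _
  simp

variable {P} in
theorem baseDer_poly (hα : P.α = some j₀) (hβ : P.β = none) (j : Fin n) :
    baseDer P k j₀ j (P.poly k) = 0 := by
  change P.bf (fun i => X (Sum.inl i)) * pderiv (Sum.inl j.succ) (P.poly k) +
    pderiv (Sum.inl j.succ) (P.poly k) * pderiv (Sum.inr j₀) (P.poly k) = 0
  rw [pderiv_poly k j₀ hα hβ, mul_comm]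
  exact CharTwo.add_self_eq_zero _

theorem baseDer_X (j : Fin n) (i : Fin (n + 1)) :
    baseDer P k j₀ j (X (Sum.inl i)) =
      if i = j.succ then P.bf (fun i => X (Sum.inl i)) else 0 := by
  change P.bf (fun i => X (Sum.inl i)) * pderiv (Sum.inl j.succ) (X (Sum.inl i)) +
    pderiv (Sum.inl j.succ) (P.poly k) * pderiv (Sum.inr j₀) (X (Sum.inl i)) = _
  classical
  rw [pderiv_X, pderiv_X]
  split_ifs with h
  · subst h; simp
  · simp [h]

theorem baseDer_C (j : Fin n) (c : k) : baseDer P k j₀ j (C c) = 0 := by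
  change P.bf (fun i => X (Sum.inl i)) * pderiv (Sum.inl j.succ) (C c) +
    pderiv (Sum.inl j.succ) (P.poly k) * pderiv (Sum.inr j₀) (C c) = _
  simp

theorem bf_ne_zero : P.bf (fun i => (X (Sum.inl i) : MvPolynomial (Fin (n + 1) ⊕ Fin r) k)) ≠ 0 :=
  mul_ne_zero (pow_ne_zero _ (X_ne_zero _))
    (pow_ne_zero _ (Finset.prod_ne_zero_iff.2 fun _ _ => X_ne_zero _))

end Ders

/-! ### No curve joins the generic point to a constant point -/

section AbstractCore
open Polynomial

variable {K : Type*} [Field K] {V : ValuationSubring K}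
  {B O L : Type*} [CommRing B] [Algebra K B] [CommRing O] [Algebra V O] [Field L]
  {n : ℕ} {J : Type} [Fintype J] {P : FormData n J} {ι : O →+* B} {ρ : O →+* L}

/-- A polynomial curve on the double cover cannot join (a multiple of) a point with nondegenerate
reduction to a point defined over `K`. -/
theorem no_curve [IsAlgClosed K] [CharP L 2] (hpl : IsPlace V ι ρ) (Q : RedForm P K ι ρ)
    (hn : 0 < n) (D : Fin n → Derivation ℤ L L)
    (hD : ∀ j (c : V), D j (ρ (algebraMap V O c)) = 0) (x₀ : Fin (n + 1) → O)
    (hx₀ : Nondeg D fun i => ρ (x₀ i))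
    (x : Fin (n + 1) → B[X]) (y : J → B[X]) (s : B[X])
    (hy : ∃ j, y j ≠ 0) (hs : s ^ 2 = Q.fB x y) (M : ℕ) (hM : ∀ i, (x i).natDegree ≤ M)
    (H g : B) (hH : H ≠ 0) (hg : g ≠ 0) (κ : Fin (n + 1) → K) (hκ : ∃ i, κ i ≠ 0)
    (h0 : ∀ i, (x i).coeff 0 = H * ι (x₀ i))
    (h1 : ∀ i, (x i).coeff M = g * algebraMap K B (κ i)) : False := by
  have : IsDomain B := hpl.isDomain
  have hinj := FaithfulSMul.algebraMap_injective K B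
  obtain ⟨c₀, hc₀, H', hH', hρH⟩ := hpl.scale H hH
  have hstart : NDegAt ι ρ D c₀ fun i => (x i).coeff 0 := by
    refine ⟨hc₀, fun i => H' * x₀ i, fun i => ?_, fun i => ?_, ?_⟩
    · dsimp only
      rw [map_mul, hH', h0, mul_assoc]
    · dsimp only
      rw [map_mul]
      exact mul_ne_zero hρH (hx₀.1 i)
    · simp only [map_mul, mul_div_mul_left _ _ hρH]
      exact hx₀.2
  obtain ⟨c, hc, b', hb', hnz, hdet⟩ := chain hpl Q D x y s hy hs M hM
    (by
      obtain ⟨i, hi⟩ := hκ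
      exact ⟨i, by rw [h1]; exact mul_ne_zero hg ((map_ne_zero_iff _ hinj).2 hi)⟩) c₀ hstart
  dsimp only at hb' hnz hdet
  have hκ0 : ∀ i, κ i ≠ 0 := fun i hi => hnz i (by
    have : b' i = 0 := hpl.inj (by rw [hb', h1, hi]; simp)
    rw [this, map_zero])
  have hrat : ∀ i j, κ i / κ j ∈ V → ∃ a : V, ρ (b' i) / ρ (b' j) = ρ (algebraMap V O a) := by
    intro i j hij
    refine ⟨⟨_, hij⟩, ?_⟩
    rw [div_eq_iff (hnz j), ← map_mul]
    congr 1
    apply hpl.inj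
    rw [map_mul, hb', hb', h1, h1, hpl.comm]
    have : κ i = κ i / κ j * κ j := (div_mul_cancel₀ _ (hκ0 j)).symm
    conv_lhs => rw [this, map_mul]
    ring
  have hz : ∀ (i : Fin n) j, D j (ρ (b' i.succ) / ρ (b' 0)) = 0 := by
    intro i j
    rcases V.mem_or_inv_mem (κ i.succ / κ 0) with h | h
    · obtain ⟨a, ha⟩ := hrat _ _ h
      rw [ha, hD]
    · rw [inv_div] at h
      obtain ⟨a, ha⟩ := hrat _ _ h
      rw [der_div _ _ _ (hnz 0)]
      have e : ρ (b' 0) = ρ (algebraMap V O a) * ρ (b' i.succ) := by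
        rw [← ha, div_mul_cancel₀ _ (hnz _)]
      have hD0 : D j (ρ (b' 0)) = ρ (algebraMap V O a) * D j (ρ (b' i.succ)) := by
        rw [e, Derivation.leibniz, hD, smul_zero, add_zero, smul_eq_mul]
      have := hnz 0
      rw [e] at this
      have ha0 := left_ne_zero_of_mul this
      have := hnz i.succ
      rw [hD0, e]
      field_simp
      ring
  -- The ratios `ρ (b' i) / ρ (b' 0)` come from constants, so all their derivatives vanish.
  apply hdet
  have : logMat D (fun i : Fin n => ρ (b' i.succ) / ρ (b' 0)) = 0 := by
    ext i j
    simp [logMat, hz]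
  have : Nonempty (Fin n) := ⟨⟨0, hn⟩⟩
  simp only [*, Matrix.det_zero]

end AbstractCore

section Core
open MvPolynomial

/-- The standing situation: a polynomial over a valuation ring with residue characteristic `2`
whose reduction is the special form. -/
structure Degen {n r : ℕ} (P : FormData n (Option (Fin r))) {K : Type*} [Field K]
    (V : ValuationSubring K) (F : MvPolynomial (Fin (n + 1) ⊕ Fin r) K) where
  /-- the polynomial over `V` -/
  FV : MvPolynomial (Fin (n + 1) ⊕ Fin r) V
  map_sub : map V.subtype FV = F
  map_res : map (IsLocalRing.residue V) FV = P.poly (IsLocalRing.ResidueField V)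
  /-- half of the degree of `F` -/
  h : ℕ
  /-- `F` is homogeneous of degree `2 * h` and of degree at most two in `y` -/
  supp : ∀ m, coeff m F ≠ 0 → (∑ i, m (Sum.inl i)) + (∑ j, m (Sum.inr j)) = 2 * h ∧
      ∑ j, m (Sum.inr j) ≤ 2

variable {n r : ℕ} {P : FormData n (Option (Fin r))} {K : Type*} [Field K]
    {V : ValuationSubring K} {F : MvPolynomial (Fin (n + 1) ⊕ Fin r) K}

theorem charP_quadratic {R : Type*} [CommRing R] [CharP R 2] (G : R) :
    CharP (QuadraticAlgebra R G 0) 2 :=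
  charP_of_injective_ringHom (f := algebraMap R (QuadraticAlgebra R G 0))
    (fun a b h => congrArg QuadraticAlgebra.re h) 2

/-- The form over `B[u]` together with its reduction. -/
noncomputable def redForm (dg : Degen P V F) (hα : P.α ≠ P.β) {B O L : Type*} [CommRing B]
    [Algebra K B] [CommRing O] [Algebra V O] [Field L] {ι : O →+* B} {ρ : O →+* L}
    (hpl : IsPlace V ι ρ) (φ : IsLocalRing.ResidueField V →+* L)
    (hφ : ∀ c : V, ρ (algebraMap V O c) = φ (IsLocalRing.residue V c)) : RedForm P K ι ρ where
  fB x y := hval (Polynomial.C.comp (algebraMap K B)) F x y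
  fO x y := hval (Polynomial.C.comp (algebraMap V O)) dg.FV x y
  map_ι x y := by
    have e : ∀ x y, hval (Polynomial.C.comp (algebraMap K B)) F x y =
        hval ((Polynomial.C.comp (algebraMap K B)).comp V.subtype) dg.FV x y := fun x y => by
      rw [← hval_map V.subtype, dg.map_sub]
    rw [e, ← Polynomial.coe_mapRingHom, map_hval]
    congr 1
    ext c
    simp [hpl.comm c]
  map_ρ x y := by
    rw [← Polynomial.coe_mapRingHom, map_hval, ← hval_poly P (Polynomial.C.comp φ) hα,
      ← dg.map_res, hval_map]
    congr 1
    ext c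
    simp [hφ c]
  w := yw
  h := dg.h
  hom a b x y := by
    have := hval_hom (Polynomial.C.comp (algebraMap K B)) F dg.h dg.supp x y
      (Polynomial.C (algebraMap K B a)) (Polynomial.C (algebraMap K B b))
    simpa only [map_mul, map_pow] using this
  comp t x y := by
    rw [← Polynomial.coe_compRingHom_apply, map_hval]
    congr 1
    ext c
    simp

/-- The statement `core`, for a chosen function field `L` of the reduced double cover. -/
theorem core_aux [IsAlgClosed K] [CharP (IsLocalRing.ResidueField V) 2] (dg : Degen P V F)
    (hn : 0 < n) (j₀ : Fin r) (hα : P.α = some j₀) (hβ : P.β = none)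
    (L : Type*) [Field L] [Algebra (QuadraticAlgebra (MvPolynomial (Fin (n + 1) ⊕ Fin r) (IsLocalRing.ResidueField V)) (P.poly (IsLocalRing.ResidueField V)) 0) L]
    [IsFractionRing (QuadraticAlgebra (MvPolynomial (Fin (n + 1) ⊕ Fin r) (IsLocalRing.ResidueField V)) (P.poly (IsLocalRing.ResidueField V)) 0) L] :
    IsDomain (QuadraticAlgebra (MvPolynomial (Fin (n + 1) ⊕ Fin r) K) F 0) ∧
    ∀ (x : Fin (n + 1) → Polynomial (QuadraticAlgebra (MvPolynomial (Fin (n + 1) ⊕ Fin r) K) F 0))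
      (y : Option (Fin r) → Polynomial (QuadraticAlgebra (MvPolynomial (Fin (n + 1) ⊕ Fin r) K) F 0))
      (s : Polynomial (QuadraticAlgebra (MvPolynomial (Fin (n + 1) ⊕ Fin r) K) F 0))
      (hy : ∃ j, y j ≠ 0)
      (hs : s ^ 2 = hval (Polynomial.C.comp
        (algebraMap K (QuadraticAlgebra (MvPolynomial (Fin (n + 1) ⊕ Fin r) K) F 0))) F x y)
      (M : ℕ) (hM : ∀ i, (x i).natDegree ≤ M)
      (H g : QuadraticAlgebra (MvPolynomial (Fin (n + 1) ⊕ Fin r) K) F 0) (hH : H ≠ 0) (hg : g ≠ 0)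
      (κ : Fin (n + 1) → K) (hκ : ∃ i, κ i ≠ 0)
      (h0 : ∀ i, (x i).coeff 0 = H * algebraMap (MvPolynomial (Fin (n + 1) ⊕ Fin r) K) _
        (X (Sum.inl i)))
      (h1 : ∀ i, (x i).coeff M = g * algebraMap K _ (κ i)), False := by
  let k := IsLocalRing.ResidueField V
  let τ := Fin (n + 1) ⊕ Fin r
  let Bk := QuadraticAlgebra (MvPolynomial τ k) (P.poly k) 0
  have hbk : (P.bf fun i => (X (Sum.inl i) : MvPolynomial τ k)) ≠ 0 := bf_ne_zero P k
  have hdom : IsDomain Bk := isDomain_quadratic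
    (toZDer (pderiv (R := k) (Sum.inr j₀ : τ))) (by
      change pderiv (Sum.inr j₀) (P.poly k) ≠ 0
      rw [pderiv_poly k j₀ hα hβ]
      exact hbk)
  have hinj : Function.Injective (algebraMap Bk L) := IsFractionRing.injective Bk L
  have hch : CharP Bk 2 := charP_quadratic _
  have hchL : CharP L 2 := charP_of_injective_ringHom hinj 2
  have hpl := (((isPlace_base V).mvPolynomial τ).quadratic dg.map_sub dg.map_res).comp_injective
    (algebraMap Bk L) hinj
  refine ⟨hpl.isDomain, ?_⟩
  intro x y s hy hs M hM H g hH hg κ hκ h0 h1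
  let φ : k →+* L := (algebraMap Bk L).comp ((algebraMap (MvPolynomial τ k) Bk).comp C)
  let Q := redForm dg (by rw [hα, hβ]; simp) hpl φ (fun c => by
    change algebraMap Bk L _ = algebraMap Bk L _
    congr 1
    apply QuadraticAlgebra.ext
    · change map (IsLocalRing.residue V) (C c) = C (IsLocalRing.residue V c)
      rw [map_C]
    · change map (IsLocalRing.residue V) 0 = 0
      rw [map_zero])
  let D : Fin n → Derivation ℤ L L := fun j =>
    fracDer L (quadDer (baseDer P k j₀ j) (baseDer_poly k j₀ hα hβ j))
  have hDA : ∀ j (p : MvPolynomial τ k), D j (algebraMap Bk L (algebraMap (MvPolynomial τ k) Bk p)) =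
      algebraMap Bk L (algebraMap (MvPolynomial τ k) Bk (baseDer P k j₀ j p)) := fun j p => by
    refine (fracDer_algebraMap L _ _).trans (congrArg _ ?_)
    apply QuadraticAlgebra.ext
    · rfl
    · exact map_zero (baseDer P k j₀ j)
  have hmm : ∀ p : MvPolynomial τ V, (algebraMap Bk L).comp (quadMap _ dg.map_res)
      (algebraMap (MvPolynomial τ V) _ p) =
      algebraMap Bk L (algebraMap (MvPolynomial τ k) Bk (map (IsLocalRing.residue V) p)) :=
    fun p => by
    change algebraMap Bk L _ = algebraMap Bk L _
    refine congrArg _ (QuadraticAlgebra.ext rfl ?_)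
    change map (IsLocalRing.residue V) 0 = 0
    rw [map_zero]
  have hinj' : Function.Injective fun p : MvPolynomial τ k =>
      algebraMap Bk L (algebraMap (MvPolynomial τ k) Bk p) :=
    hinj.comp fun a b h => congrArg QuadraticAlgebra.re h
  have hinj0 : ∀ p : MvPolynomial τ k, p ≠ 0 →
      algebraMap Bk L (algebraMap (MvPolynomial τ k) Bk p) ≠ 0 := fun p hp h =>
    hp (hinj' (by simp only [h, map_zero]))
  refine no_curve hpl Q hn D (fun j c => ?_)
    (fun i => algebraMap (MvPolynomial τ V) (QuadraticAlgebra (MvPolynomial τ V) dg.FV 0)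
      (X (Sum.inl i))) ⟨fun i => ?_, ?_⟩ x y s hy hs M hM H g hH hg κ hκ (fun i => ?_) h1
  · have : D j ((algebraMap Bk L).comp (quadMap _ dg.map_res)
        (algebraMap (MvPolynomial τ V) _ (C c))) = 0 := by
      rw [hmm, hDA, map_C, baseDer_C, map_zero, map_zero]
    exact this
  · dsimp only
    rw [hmm, map_X]
    exact hinj0 _ (X_ne_zero _)
  · have hl : (logMat D fun i : Fin n =>
        algebraMap Bk L (algebraMap (MvPolynomial τ k) Bk (X (Sum.inl i.succ))) /
        algebraMap Bk L (algebraMap (MvPolynomial τ k) Bk (X (Sum.inl 0)))) =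
        Matrix.diagonal fun i => algebraMap Bk L (algebraMap (MvPolynomial τ k) Bk
          (P.bf fun i => X (Sum.inl i))) /
          algebraMap Bk L (algebraMap (MvPolynomial τ k) Bk (X (Sum.inl i.succ))) := by
      ext i j
      have h0 := hinj0 _ (X_ne_zero (R := k) (Sum.inl 0 : τ))
      have hi := hinj0 _ (X_ne_zero (R := k) (Sum.inl i.succ : τ))
      rw [logMat, Matrix.of_apply, der_div _ _ _ h0, hDA, hDA, baseDer_X, baseDer_X,
        if_neg (Fin.succ_ne_zero j).symm, map_zero, map_zero, zero_div, mul_zero, sub_zero]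
      rw [Matrix.diagonal_apply]
      by_cases hij : i = j
      · subst hij
        rw [if_pos rfl, if_pos rfl]
        field_simp
      · rw [if_neg hij, if_neg (by simpa using hij), map_zero, map_zero, zero_div, zero_div]
    have hl' : (fun i : Fin n =>
        (algebraMap Bk L).comp (quadMap _ dg.map_res)
          (algebraMap (MvPolynomial τ V) _ (X (Sum.inl i.succ))) /
        (algebraMap Bk L).comp (quadMap _ dg.map_res)
          (algebraMap (MvPolynomial τ V) _ (X (Sum.inl 0)))) = fun i : Fin n =>
        algebraMap Bk L (algebraMap (MvPolynomial τ k) Bk (X (Sum.inl i.succ))) /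
        algebraMap Bk L (algebraMap (MvPolynomial τ k) Bk (X (Sum.inl 0))) := by
      funext i
      rw [hmm, hmm, map_X, map_X]
    refine (congrArg (fun z => (logMat D z).det) hl').trans_ne ?_
    rw [hl, Matrix.det_diagonal]
    exact Finset.prod_ne_zero_iff.2 fun i _ => div_ne_zero (hinj0 _ hbk) (hinj0 _ (X_ne_zero _))
  · rw [h0]
    congr 1
    apply QuadraticAlgebra.ext
    · change X _ = map V.subtype (X _)
      rw [map_X]
    · change 0 = map V.subtype 0
      rw [map_zero]

/-- If `F` degenerates to the special form, then the ring `K[x, y, s]/(s² - F)` is a domain, and no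
polynomial curve over it on which `F` is a square joins a multiple of the generic point (the
coefficient of `u ^ 0`) to a multiple of a constant point (the coefficient of `u ^ M`). -/
theorem core [IsAlgClosed K] [CharP (IsLocalRing.ResidueField V) 2] (dg : Degen P V F)
    (hn : 0 < n) (j₀ : Fin r) (hα : P.α = some j₀) (hβ : P.β = none) :
    IsDomain (QuadraticAlgebra (MvPolynomial (Fin (n + 1) ⊕ Fin r) K) F 0) ∧
    ∀ (x : Fin (n + 1) → Polynomial (QuadraticAlgebra (MvPolynomial (Fin (n + 1) ⊕ Fin r) K) F 0))
      (y : Option (Fin r) → Polynomial (QuadraticAlgebra (MvPolynomial (Fin (n + 1) ⊕ Fin r) K) F 0))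
      (s : Polynomial (QuadraticAlgebra (MvPolynomial (Fin (n + 1) ⊕ Fin r) K) F 0))
      (hy : ∃ j, y j ≠ 0)
      (hs : s ^ 2 = hval (Polynomial.C.comp
        (algebraMap K (QuadraticAlgebra (MvPolynomial (Fin (n + 1) ⊕ Fin r) K) F 0))) F x y)
      (M : ℕ) (hM : ∀ i, (x i).natDegree ≤ M)
      (H g : QuadraticAlgebra (MvPolynomial (Fin (n + 1) ⊕ Fin r) K) F 0) (hH : H ≠ 0) (hg : g ≠ 0)
      (κ : Fin (n + 1) → K) (hκ : ∃ i, κ i ≠ 0)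
      (h0 : ∀ i, (x i).coeff 0 = H * algebraMap (MvPolynomial (Fin (n + 1) ⊕ Fin r) K) _
        (X (Sum.inl i)))
      (h1 : ∀ i, (x i).coeff M = g * algebraMap K _ (κ i)), False := by
  let k := IsLocalRing.ResidueField V
  let τ := Fin (n + 1) ⊕ Fin r
  let Bk := QuadraticAlgebra (MvPolynomial τ k) (P.poly k) 0
  have hbk : (P.bf fun i => (X (Sum.inl i) : MvPolynomial τ k)) ≠ 0 := bf_ne_zero P k
  have hdom : IsDomain Bk := isDomain_quadratic
    (toZDer (pderiv (R := k) (Sum.inr j₀ : τ))) (by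
      change pderiv (Sum.inr j₀) (P.poly k) ≠ 0
      rw [pderiv_poly k j₀ hα hβ]
      exact hbk)
  exact core_aux dg hn j₀ hα hβ (FractionRing Bk)

end Core

/-! ### The special form inside the linear system -/

section Instantiate
open MvPolynomial

variable {n r : ℕ}

theorem map_poly (P : FormData n (Option (Fin r))) {k k' : Type*} [CommRing k] [CommRing k']
    (φ : k →+* k') : map φ (P.poly k) = P.poly k' := by
  simp only [FormData.poly, FormData.form, FormData.cf, FormData.bf, map_add, map_sum, map_mul,
    map_pow, map_prod, map_X]
  have : ∀ o : Option (Fin r), map φ (o.elim 1 fun j => X (Sum.inr j) :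
      MvPolynomial (Fin (n + 1) ⊕ Fin r) k) = o.elim 1 fun j => X (Sum.inr j) := by
    rintro (_ | j) <;> simp
  simp only [this]

/-- The bidegree in the variables `x` and `y`. -/
def biw : Fin (n + 1) ⊕ Fin r → ℕ × ℕ := Sum.elim (fun _ => (1, 0)) fun _ => (0, 1)

theorem weight_biw (m : Fin (n + 1) ⊕ Fin r →₀ ℕ) :
    Finsupp.weight biw m = (∑ i, m (Sum.inl i), ∑ j, m (Sum.inr j)) := by
  rw [Finsupp.weight_apply, Finsupp.sum_fintype _ _ (by simp), Fintype.sum_sum_type]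
  simp [biw, Prod.ext_iff, Prod.fst_sum, Prod.snd_sum]

theorem cf_hom (P : FormData n (Option (Fin r))) (k : Type*) [CommRing k] (o : Option (Fin r)) :
    IsWeightedHomogeneous biw (P.cf (fun i => (X (Sum.inl i) : MvPolynomial (Fin (n + 1) ⊕ Fin r) k)) o)
      (2 * P.h o + 2 * (2 * P.f + 1), 0) := by
  have hX : ∀ i : Fin (n + 1), IsWeightedHomogeneous biw
      (X (Sum.inl i) : MvPolynomial (Fin (n + 1) ⊕ Fin r) k) (1, 0) := fun i =>
    isWeightedHomogeneous_X _ _ _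
  have := ((IsWeightedHomogeneous.prod (P.I o) (fun l => X (Sum.inl l.succ)) _
    (fun l _ => hX l.succ)).mul ((hX 0).pow (P.hx o))).mul
    (IsWeightedHomogeneous.sum Finset.univ _ _ fun i _ => (hX i).pow (2 * (2 * P.f + 1)))
  convert this using 1
  · rfl
  have := P.hx_add o
  simp [Prod.ext_iff, Prod.fst_sum, Prod.snd_sum]
  omega

theorem bf_hom (P : FormData n (Option (Fin r))) (k : Type*) [CommRing k] :
    IsWeightedHomogeneous biw (P.bf (fun i => (X (Sum.inl i) : MvPolynomial (Fin (n + 1) ⊕ Fin r) k)))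
      (P.kb + 2 * n, 0) := by
  have hX : ∀ i : Fin (n + 1), IsWeightedHomogeneous biw
      (X (Sum.inl i) : MvPolynomial (Fin (n + 1) ⊕ Fin r) k) (1, 0) := fun i =>
    isWeightedHomogeneous_X _ _ _
  have := ((hX 0).pow P.kb).mul
    ((IsWeightedHomogeneous.prod Finset.univ (fun l : Fin n => X (Sum.inl l.succ)) _
    (fun l _ => hX l.succ)).pow 2)
  convert this using 1
  · rfl
  simp [Prod.ext_iff, Prod.fst_sum, Prod.snd_sum]

/-- A special form exists inside the linear system. The `r + 1` indices (`r` variables `y` and the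
dehomogenised one) embed into the `2 ^ n - 1` nonempty subsets of `{1, …, n}`, and `d` is large
enough for all exponents to be nonnegative with `f = n / 2`. -/
theorem exists_formData (hn : 2 ≤ n) (hr1 : 2 ^ (n - 1) - 1 ≤ r) (hr2 : r ≤ 2 ^ n - 2)
    {d : ℕ} (hdeven : Even d) (hd : 2 ^ (n + 1) + 2 * n - 2 ≤ d) :
    ∃ (P : FormData n (Option (Fin r))) (j₀ : Fin r), P.α = some j₀ ∧ P.β = none ∧
      ∀ m, coeff m (P.poly ℤ) ≠ 0 →
        (∑ i, m (Sum.inl i)) + (∑ j, m (Sum.inr j)) = d ∧ d - 2 ≤ ∑ i, m (Sum.inl i) := by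
  classical
  have hcard : Fintype.card {s : Finset (Fin n) // s.Nonempty} = 2 ^ n - 1 := by
    have : Fintype.card {s : Finset (Fin n) // s ≠ ∅} = 2 ^ n - 1 := by
      rw [Fintype.card_subtype_compl]
      simp
    rw [← this]
    exact Fintype.card_congr (Equiv.subtypeEquivRight fun s => Finset.nonempty_iff_ne_empty)
  have h4 : 2 ^ 2 ≤ 2 ^ n := Nat.pow_le_pow_right (by norm_num) hn
  have h5 : 2 ^ 1 ≤ 2 ^ (n - 1) := Nat.pow_le_pow_right (by norm_num) (by omega)
  have h6 : n + 6 ≤ 2 ^ (n + 1) := by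
    clear * - hn
    induction n, hn using Nat.le_induction with
    | base => norm_num
    | succ m hm ih => rw [pow_succ]; omega
  obtain ⟨φ⟩ := Function.Embedding.nonempty_of_card_le
    (α := Option (Fin r)) (β := {s : Finset (Fin n) // s.Nonempty}) (by
      rw [hcard, Fintype.card_option, Fintype.card_fin]
      omega)
  have hcn : ∀ o, (φ o).1.card ≤ n := fun o => by
    simpa using Finset.card_le_univ (φ o).1
  obtain ⟨q, hq⟩ := hdeven
  let j₀ : Fin r := ⟨0, by omega⟩
  let f := n / 2
  let hh : Option (Fin r) → ℕ := fun o => o.elim (q - (2 * f + 1)) fun _ => q - 1 - (2 * f + 1)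
  have hf : f = n / 2 := rfl
  have hh0 : hh none = q - (2 * f + 1) := rfl
  have hh1 : ∀ j, hh (some j) = q - 1 - (2 * f + 1) := fun _ => rfl
  let P : FormData n (Option (Fin r)) :=
    { I := fun o => (φ o).1
      I_inj := fun a b h => φ.injective (Subtype.ext h)
      I_ne := fun o => (φ o).2
      f := f
      le_f := by omega
      h := hh
      hx := fun o => 2 * hh o - (φ o).1.card
      hx_add := fun o => by
        have := hcn o
        have : n ≤ 2 * hh o := by
          rcases o with _ | j
          · rw [hh0]; omega
          · rw [hh1]; omega
        omega
      α := some j₀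
      β := none
      kb := d - 1 - 2 * n
      kb_add := by
        rw [hh0, hh1]; omega }
  refine ⟨P, j₀, rfl, rfl, fun m hm => ?_⟩
  have hterm : ∀ (p : MvPolynomial (Fin (n + 1) ⊕ Fin r) ℤ) (a b : ℕ),
      IsWeightedHomogeneous biw p (a, b) → a + b = d → b ≤ 2 → coeff m p ≠ 0 →
        (∑ i, m (Sum.inl i)) + (∑ j, m (Sum.inr j)) = d ∧ d - 2 ≤ ∑ i, m (Sum.inl i) := by
    intro p a b hp hab hb hm
    have := hp hm
    rw [weight_biw, Prod.mk.injEq] at this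
    omega
  by_contra hcon
  apply hm
  have hPh : P.h = hh := rfl
  have hPf : P.f = f := rfl
  have hPk : P.kb = d - 1 - 2 * n := rfl
  have hX : ∀ j : Fin r, IsWeightedHomogeneous biw
      (X (Sum.inr j) : MvPolynomial (Fin (n + 1) ⊕ Fin r) ℤ) (0, 1) := fun i =>
    isWeightedHomogeneous_X _ _ _
  rw [FormData.poly, FormData.form, coeff_add, coeff_sum]
  have e2 : coeff m (P.bf (fun i => (X (Sum.inl i) : MvPolynomial (Fin (n + 1) ⊕ Fin r) ℤ)) *
      (P.α.elim 1 fun j => X (Sum.inr j)) * P.β.elim 1 fun j => X (Sum.inr j)) = 0 := by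
    by_contra h
    refine hcon (hterm _ (P.kb + 2 * n) 1 ?_ (by omega) (by omega) h)
    change IsWeightedHomogeneous biw (_ * X (Sum.inr j₀) * 1) _
    rw [mul_one]
    have := (bf_hom P ℤ).mul (hX j₀)
    simpa using this
  rw [e2, add_zero]
  refine Finset.sum_eq_zero fun o _ => ?_
  by_contra h
  rcases o with _ | j
  · refine hcon (hterm _ (2 * P.h none + 2 * (2 * P.f + 1)) 0 ?_ ?_ (by omega) h)
    · change IsWeightedHomogeneous biw (_ * 1 ^ 2) _
      rw [one_pow, mul_one]
      exact cf_hom P ℤ none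
    · rw [hPh, hPf, hh0]; omega
  · refine hcon (hterm _ (2 * P.h (some j) + 2 * (2 * P.f + 1)) 2 ?_ ?_ (by omega) h)
    · have := (cf_hom P ℤ (some j)).mul ((hX j).pow 2)
      simpa using this
    · rw [hPh, hPf, hh1]; omega

end Instantiate

/-! ### Very general members degenerate to the special form -/

section VeryGeneral
open MvPolynomial

/-- The exponents of the monomials of the linear system. -/
abbrev BExp (n r d : ℕ) : Type :=
  {m : (Fin (n + 1) ⊕ Fin r) →₀ ℕ //
    (∑ i, m (Sum.inl i)) + (∑ j, m (Sum.inr j)) = d ∧ d - 2 ≤ ∑ i, m (Sum.inl i)}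

variable {n r d : ℕ}

theorem finite_bexp (n r d : ℕ) : Finite (BExp n r d) := by
  refine Set.Finite.to_subtype ((Set.finite_Iic
    (Finsupp.equivFunOnFinite.symm fun _ : Fin (n + 1) ⊕ Fin r => d)).subset fun m hm => ?_)
  rw [Set.mem_Iic, Finsupp.le_def]
  have h1 := hm.1
  rintro (i | j)
  · have := Finset.single_le_sum (f := fun i => m (Sum.inl i)) (fun _ _ => Nat.zero_le _)
      (Finset.mem_univ i)
    simp only [Finsupp.equivFunOnFinite_symm_apply_apply]
    omega
  · have := Finset.single_le_sum (f := fun i => m (Sum.inr i)) (fun _ _ => Nat.zero_le _)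
      (Finset.mem_univ j)
    simp only [Finsupp.equivFunOnFinite_symm_apply_apply]
    omega

theorem countable_mvPolynomial_int (σ : Type) [Finite σ] : Countable (MvPolynomial σ ℤ) := by
  rw [← Cardinal.mk_le_aleph0_iff]
  refine MvPolynomial.cardinalMk_le_max.trans ?_
  simp

/-- Evaluation of integer polynomials at the coefficients of `F`; it is injective if and only if these
coefficients are algebraically independent over `ℤ`. -/
noncomputable def coeffEval (F : BranchSpace n r d) : MvPolynomial (BExp n r d) ℤ →+* ℂ :=
  eval₂Hom (Int.castRingHom ℂ) fun m => coeff m.1 F.1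

theorem isAlgSubsetOn_zero (p : MvPolynomial (BExp n r d) ℤ) :
    IsAlgSubsetOn (branchCoords n r d) {F | coeffEval F p = 0} := by
  refine ⟨{fun F => coeffEval F p}, ?_, by ext; simp⟩
  rw [Set.singleton_subset_iff]
  change (fun F => coeffEval F p) ∈ Algebra.adjoin ℂ (branchCoords n r d)
  induction p using MvPolynomial.induction_on with
  | C a =>
    have : (fun F : BranchSpace n r d => coeffEval F (C a)) = algebraMap ℂ _ (a : ℂ) := by
      funext F
      simp [coeffEval]
    rw [this]
    exact Subalgebra.algebraMap_mem _ _
  | add p q hp hq =>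
    simp only [map_add]
    exact add_mem hp hq
  | mul_X p m hp =>
    simp only [map_mul]
    refine mul_mem hp (Algebra.subset_adjoin ⟨m.1, ?_⟩)
    funext F
    simp [coeffEval]

theorem exists_coeffEval_ne_zero (p : MvPolynomial (BExp n r d) ℤ) (hp : p ≠ 0) :
    ∃ F : BranchSpace n r d, coeffEval F p ≠ 0 := by
  classical
  have := finite_bexp n r d
  have := Fintype.ofFinite (BExp n r d)
  have hp' : map (Int.castRingHom ℂ) p ≠ 0 := fun h =>
    hp (map_injective _ Int.cast_injective (by rw [h, map_zero]))
  obtain ⟨v, hv⟩ : ∃ v, eval v (map (Int.castRingHom ℂ) p) ≠ 0 := by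
    by_contra! h
    exact hp' (MvPolynomial.funext fun v => by rw [h, map_zero])
  have hc : ∀ m, coeff m (∑ m : BExp n r d, monomial m.1 (v m)) =
      if h : _ then v ⟨m, h⟩ else 0 := fun m => by
    rw [coeff_sum]
    simp only [coeff_monomial]
    split_ifs with h
    · rw [Finset.sum_eq_single ⟨m, h⟩ (fun b _ hb => if_neg fun e => hb (Subtype.ext e))
        (fun h => absurd (Finset.mem_univ _) h), if_pos rfl]
    · exact Finset.sum_eq_zero fun b _ => if_neg fun hb : b.1 = m => h (hb ▸ b.2)
  refine ⟨⟨∑ m : BExp n r d, monomial m.1 (v m), fun m hm => ?_⟩, ?_⟩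
  · by_contra h
    rw [hc, dif_neg h] at hm
    exact hm rfl
  · rw [eval_map] at hv
    convert hv using 1
    change eval₂ _ _ p = _
    congr 1
    funext m
    rw [hc, dif_pos m.2]

/-- The members of the linear system with algebraically dependent coefficients lie on the zero loci of
the countably many nonzero integer polynomials in the coefficients. -/
theorem veryGenerallyOn_of_injective {Q : BranchSpace n r d → Prop}
    (h : ∀ F, Function.Injective (coeffEval F) → Q F) :
    VeryGenerallyOn (branchCoords n r d) Q := by
  have := finite_bexp n r d
  have := countable_mvPolynomial_int (BExp n r d)
  have : Nonempty {p : MvPolynomial (BExp n r d) ℤ // p ≠ 0} := ⟨⟨1, one_ne_zero⟩⟩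
  obtain ⟨e, he⟩ := exists_surjective_nat {p : MvPolynomial (BExp n r d) ℤ // p ≠ 0}
  refine ⟨fun i => {F | coeffEval F (e i).1 = 0}, fun i => ⟨isAlgSubsetOn_zero _, fun hu => ?_⟩,
    fun F hF => h F ((injective_iff_map_eq_zero _).2 fun p hp => ?_)⟩
  · obtain ⟨F, hF⟩ := exists_coeffEval_ne_zero (e i).1 (e i).2
    exact hF (hu.ge (Set.mem_univ F))
  · by_contra h0
    obtain ⟨i, hi⟩ := he ⟨p, h0⟩
    refine hF i ?_
    change coeffEval F (e i).1 = 0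
    rw [hi]
    exact hp

/-- If the coefficients of `F` are algebraically independent, then `F` degenerates, with respect to
some valuation ring of residue characteristic `2`, to the special form. -/
theorem exists_degen (F : BranchSpace n r d) (hF : Function.Injective (coeffEval F))
    (P : FormData n (Option (Fin r)))
    (hP : ∀ m, coeff m (P.poly ℤ) ≠ 0 →
        (∑ i, m (Sum.inl i)) + (∑ j, m (Sum.inr j)) = d ∧ d - 2 ≤ ∑ i, m (Sum.inl i))
    (hd : 2 ≤ d) (hdeven : Even d) :
    ∃ V : ValuationSubring ℂ, CharP (IsLocalRing.ResidueField V) 2 ∧ Nonempty (Degen P V F.1) := by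
  -- The ring `A` generated by the coefficients of `F` is a polynomial ring, so it has a homomorphism
  -- `ψ'` to `ZMod 2` sending them to those of the special form; `V` is a valuation ring containing `A`
  -- whose maximal ideal contains the kernel of `ψ'`.
  let A : Subring ℂ := (coeffEval F).range
  let e : MvPolynomial (BExp n r d) ℤ ≃+* A :=
    RingEquiv.ofBijective (coeffEval F).rangeRestrict
      ⟨fun a b h => hF (congrArg Subtype.val h), (coeffEval F).rangeRestrict_surjective⟩
  have he : ∀ p, ((e p : A) : ℂ) = coeffEval F p := fun p => rfl
  let ψ : MvPolynomial (BExp n r d) ℤ →+* ZMod 2 :=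
    eval₂Hom (Int.castRingHom _) fun m => ((coeff m.1 (P.poly ℤ) : ℤ) : ZMod 2)
  let ψ' : A →+* ZMod 2 := ψ.comp e.symm.toRingHom
  obtain ⟨V, hAV, hV⟩ := (RingHom.ker ψ').image_subset_nonunits_valuationSubring
    (RingHom.ker_ne_top ψ')
  have hmem : ∀ p, coeffEval F p ∈ V := fun p => hAV (e p).2
  have hres : ∀ p (c : V), (c : ℂ) = coeffEval F p → ψ p = 0 → IsLocalRing.residue V c = 0 := by
    intro p c hc hp
    rw [IsLocalRing.residue_eq_zero_iff, ← V.coe_mem_nonunits_iff, hc]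
    refine hV ⟨e p, ?_, he p⟩
    change ψ (e.symm (e p)) = 0
    rw [e.symm_apply_apply, hp]
  have hchar : CharP (IsLocalRing.ResidueField V) 2 := by
    refine CharTwo.of_one_ne_zero_of_two_eq_zero one_ne_zero ?_
    have := hres 2 2 (by rw [map_ofNat]; rfl) (by rw [map_ofNat]; rfl)
    rwa [map_ofNat] at this
  refine ⟨V, hchar, ?_⟩
  have hcV : ∀ m, coeff m F.1 ∈ V := fun m => by
    by_cases h : coeff m F.1 = 0
    · rw [h]; exact V.zero_mem
    · have := hmem (X ⟨m, F.2 m h⟩)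
      simpa [coeffEval] using this
  obtain ⟨FV, hFV⟩ : ∃ FV, map V.subtype FV = F.1 := by
    have := (mem_range_map_iff_coeffs_subset (f := V.subtype) (x := F.1)).2 ?_
    · exact this
    · intro a ha
      obtain ⟨m, hm, rfl⟩ := mem_coeffs_iff.1 ha
      exact ⟨⟨_, hcV m⟩, rfl⟩
  obtain ⟨q, hq⟩ := hdeven
  have hco : ∀ m, ((coeff m FV : V) : ℂ) = coeff m F.1 := fun m => by
    rw [← hFV, coeff_map]; rfl
  refine ⟨⟨FV, hFV, ?_, q, fun m hm => ?_⟩⟩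
  · ext m
    rw [coeff_map, ← map_poly P (Int.castRingHom _), coeff_map]
    by_cases h : (∑ i, m (Sum.inl i)) + (∑ j, m (Sum.inr j)) = d ∧ d - 2 ≤ ∑ i, m (Sum.inl i)
    · have := hres (X ⟨m, h⟩ - C (coeff m (P.poly ℤ)))
        (coeff m FV - ((coeff m (P.poly ℤ) : ℤ) : V)) (by
          push_cast
          rw [hco, map_sub]
          simp [coeffEval]) (by
          rw [map_sub]
          change eval₂ _ _ _ - eval₂ _ _ _ = _
          rw [eval₂_X, eval₂_C]
          exact sub_self _)
      rw [map_sub, map_intCast, sub_eq_zero] at this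
      exact this
    · have h1 : coeff m F.1 = 0 := by
        by_contra h'; exact h (F.2 m h')
      have h2 : coeff m (P.poly ℤ) = 0 := by
        by_contra h'; exact h (hP m h')
      have h3 : coeff m FV = 0 := Subtype.ext ((hco m).trans h1)
      rw [h2, h3, map_zero, map_zero]
  · have := F.2 m hm
    omega

end VeryGeneral

/-! ### Restriction of polynomials to a line -/

section Shift

variable {k E : Type*} [Field k] [CommRing E] [Algebra k E] {D : ℕ}

theorem prod_natDegree_coeff {ι : Type*} (s : Finset ι) (f : ι → Polynomial E) (N : ι → ℕ)
    (h : ∀ i ∈ s, (f i).natDegree ≤ N i) : (∏ i ∈ s, f i).natDegree ≤ ∑ i ∈ s, N i ∧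
      (∏ i ∈ s, f i).coeff (∑ i ∈ s, N i) = ∏ i ∈ s, (f i).coeff (N i) := by
  classical
  induction s using Finset.induction_on with
  | empty => simp
  | insert a s ha ih =>
    obtain ⟨h1, h2⟩ := ih fun i hi => h i (Finset.mem_insert_of_mem hi)
    have h3 := h a (Finset.mem_insert_self _ _)
    rw [Finset.prod_insert ha, Finset.sum_insert ha, Finset.prod_insert ha]
    exact ⟨Polynomial.natDegree_mul_le_of_le h3 h1, by
      rw [Polynomial.coeff_mul_add_eq_of_natDegree_le h3 h1, h2]⟩

/-- Restriction of polynomials to the line `u ↦ t + c u`. -/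
noncomputable def shift (t : Fin D → E) (c : Fin D → k) :
    MvPolynomial (Fin D) k →ₐ[k] Polynomial E :=
  MvPolynomial.aeval fun l => Polynomial.C (t l) + Polynomial.C (algebraMap k E (c l)) * Polynomial.X

theorem shift_coeff_zero (t : Fin D → E) (c : Fin D → k) (p : MvPolynomial (Fin D) k) :
    (shift t c p).coeff 0 = MvPolynomial.aeval t p := by
  have : (Polynomial.constantCoeff (R := E)).comp (shift t c).toRingHom =
      (MvPolynomial.aeval (R := k) t).toRingHom := by
    refine MvPolynomial.ringHom_ext (fun a => ?_) fun l => ?_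
    · simp [Polynomial.algebraMap_apply]
    · simp [shift]
  exact congrArg (fun f => f p) this

theorem shift_monomial (t : Fin D → E) (c : Fin D → k) (m : Fin D →₀ ℕ) (a : k) :
    (shift t c (MvPolynomial.monomial m a)).natDegree ≤ m.degree ∧
    (shift t c (MvPolynomial.monomial m a)).coeff m.degree =
      algebraMap k E (MvPolynomial.eval c (MvPolynomial.monomial m a)) := by
  have hl : ∀ l, (Polynomial.C (t l) + Polynomial.C (algebraMap k E (c l)) *
      Polynomial.X).natDegree ≤ 1 := fun l => by
    rw [add_comm]; exact Polynomial.natDegree_linear_le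
  obtain ⟨h1, h2⟩ := prod_natDegree_coeff Finset.univ
    (fun l => (Polynomial.C (t l) + Polynomial.C (algebraMap k E (c l)) * Polynomial.X) ^ m l) m
    (fun l _ => by simpa using Polynomial.natDegree_pow_le_of_le (m l) (hl l))
  rw [← Finsupp.degree_eq_sum] at h1 h2
  have e : shift t c (MvPolynomial.monomial m a) = Polynomial.C (algebraMap k E a) *
      ∏ l, (Polynomial.C (t l) + Polynomial.C (algebraMap k E (c l)) * Polynomial.X) ^ m l := by
    rw [shift, MvPolynomial.aeval_monomial, Finsupp.prod_fintype _ _ (by simp),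
      Polynomial.algebraMap_apply]
  rw [e]
  refine ⟨(Polynomial.natDegree_C_mul_le _ _).trans h1, ?_⟩
  rw [Polynomial.coeff_C_mul, h2, MvPolynomial.eval_monomial, Finsupp.prod_fintype _ _ (by simp),
    map_mul, map_prod]
  congr 1
  refine Finset.prod_congr rfl fun l _ => ?_
  have := Polynomial.coeff_pow_of_natDegree_le (m := m l) (hl l)
  rw [mul_one] at this
  rw [this]
  simp

/-- The coefficient of `u ^ M` on the line `t + c u` is the value of the homogeneous component of degree
`M` at `c`, hence a constant. -/
theorem shift_natDegree (t : Fin D → E) (c : Fin D → k) (p : MvPolynomial (Fin D) k) {M : ℕ}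
    (hM : p.totalDegree ≤ M) : (shift t c p).natDegree ≤ M ∧
      (shift t c p).coeff M = algebraMap k E
        (MvPolynomial.eval c (MvPolynomial.homogeneousComponent M p)) := by
  have hp : shift t c p = ∑ m ∈ p.support, shift t c (MvPolynomial.monomial m (p.coeff m)) := by
    conv_lhs => rw [p.as_sum, map_sum]
  have hdeg : ∀ m ∈ p.support, m.degree ≤ M := fun m hm => by
    refine le_trans ?_ hM
    rw [Finsupp.degree_apply]
    exact MvPolynomial.le_totalDegree hm
  constructor
  · rw [hp]
    exact Polynomial.natDegree_sum_le_of_forall_le _ _ fun m hm =>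
      (shift_monomial t c m _).1.trans (hdeg m hm)
  · rw [hp, Polynomial.finsetSum_coeff, MvPolynomial.homogeneousComponent_apply, map_sum, map_sum,
      Finset.sum_filter]
    refine Finset.sum_congr rfl fun m hm => ?_
    split_ifs with h
    · rw [← h]
      exact (shift_monomial t c m _).2
    · exact Polynomial.coeff_eq_zero_of_natDegree_lt
        ((shift_monomial t c m _).1.trans_lt (lt_of_le_of_ne (hdeg m hm) h))

/-- A direction `c` in which the top degree part of a given family does not vanish entirely. -/
theorem exists_direction [Infinite k] {T : Type*} [Finite T] (p : T → MvPolynomial (Fin D) k)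
    (hp : ∃ i, p i ≠ 0) : ∃ (M : ℕ) (c : Fin D → k), (∀ i, (p i).totalDegree ≤ M) ∧
      ∃ i, MvPolynomial.eval c (MvPolynomial.homogeneousComponent M (p i)) ≠ 0 := by
  classical
  obtain ⟨i₁, hi₁⟩ := hp
  have := Fintype.ofFinite T
  obtain ⟨i₀, hi₀, hmax⟩ := Finset.exists_max_image (Finset.univ.filter fun i => p i ≠ 0)
    (fun i => (p i).totalDegree) ⟨i₁, by simpa using hi₁⟩
  simp only [Finset.mem_filter, Finset.mem_univ, true_and] at hi₀ hmax
  have hne : MvPolynomial.homogeneousComponent (p i₀).totalDegree (p i₀) ≠ 0 := by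
    obtain ⟨m, hm, hmd⟩ := Finset.exists_mem_eq_sup (p i₀).support
      (MvPolynomial.support_nonempty.2 hi₀) fun m => m.sum fun _ e => e
    intro h
    have h' := congrArg (MvPolynomial.coeff m) h
    rw [MvPolynomial.coeff_homogeneousComponent, if_pos, MvPolynomial.coeff_zero] at h'
    · exact MvPolynomial.mem_support_iff.1 hm h'
    · exact hmd.symm
  obtain ⟨c, hc⟩ : ∃ c, MvPolynomial.eval c
      (MvPolynomial.homogeneousComponent (p i₀).totalDegree (p i₀)) ≠ 0 := by
    by_contra! h
    exact hne (MvPolynomial.funext fun v => by rw [h, map_zero])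
  refine ⟨_, c, fun i => ?_, i₀, hc⟩
  by_cases h : p i = 0
  · rw [h, MvPolynomial.totalDegree_zero]; exact Nat.zero_le _
  · exact hmax i h

end Shift

/-! ### Curves obtained from stable rationality -/

section Curve
open MvPolynomial (aeval totalDegree IsHomogeneous)

theorem aeval_mul_of_isHomogeneous {k S τ : Type*} [Field k] [CommRing S] [Algebra k S]
    {F : MvPolynomial τ k} {N : ℕ} (hF : F.IsHomogeneous N) (a : S) (x : τ → S) :
    aeval (fun i => a * x i) F = a ^ N * aeval x F := by
  rw [MvPolynomial.aeval_def, MvPolynomial.aeval_def, MvPolynomial.eval₂_eq, MvPolynomial.eval₂_eq,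
    Finset.mul_sum]
  refine Finset.sum_congr rfl fun m hm => ?_
  have : ∑ i ∈ m.support, m i = N := by
    rw [← hF (MvPolynomial.mem_support_iff.1 hm), Finsupp.weight_apply, Finsupp.sum]
    simp
  simp only [mul_pow, Finset.prod_mul_distrib, Finset.prod_pow_eq_pow_sum]
  rw [this]
  ring

variable {k R τ : Type*} [Field k] [Infinite k] [CommRing R] [IsDomain R] [Algebra k R] [Finite τ]

/-- A point `(x, s)` with `s² = F(x)` over a field `E` isomorphic to a rational function field is, up to
a scalar `h`, the value at some `t` of a family `p` of polynomials for which `F(p)` is a square. -/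
theorem exists_parametrisation {E : Type*} [Field E] [Algebra k E] {F : MvPolynomial τ k} {q : ℕ}
    (hF : F.IsHomogeneous (2 * q)) (x : τ → E) (s : E) (hs : s ^ 2 = aeval x F) {D : ℕ}
    (Ψ : E ≃ₐ[k] FractionRing (MvPolynomial (Fin D) k)) :
    ∃ (t : Fin D → E) (p : τ → MvPolynomial (Fin D) k) (σ : MvPolynomial (Fin D) k) (h : E),
      h ≠ 0 ∧ σ ^ 2 = aeval p F ∧ ∀ a, aeval t (p a) = h * x a := by
  let A := MvPolynomial (Fin D) k
  let Kf := FractionRing A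
  have hinj : Function.Injective (algebraMap A Kf) := IsFractionRing.injective A Kf
  obtain ⟨b, hb⟩ := IsLocalization.exist_integer_multiples_of_finite (nonZeroDivisors A)
    (fun a => Ψ (x a))
  choose p hp using hb
  have hb0 : (b : A) ≠ 0 := nonZeroDivisors.ne_zero b.2
  have hp' : ∀ a, algebraMap A Kf (p a) = algebraMap A Kf b * Ψ (x a) := fun a => by
    rw [hp, Algebra.smul_def]
  have hσ : (algebraMap A Kf b ^ q * Ψ s) ^ 2 = algebraMap A Kf (aeval p F) := by
    have h1 : algebraMap A Kf (aeval p F) = aeval (fun a => algebraMap A Kf (p a)) F :=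
      (MvPolynomial.aeval_algebraMap_apply Kf p F).symm
    have h2 : Ψ (aeval x F) = aeval (fun a => Ψ (x a)) F := by
      have := MvPolynomial.comp_aeval_apply (R := k) x (Ψ : E →ₐ[k] Kf) F
      exact this
    rw [h1]
    simp only [hp']
    rw [aeval_mul_of_isHomogeneous hF, ← h2, ← hs, map_pow]
    ring
  obtain ⟨σ, hσ'⟩ := IsIntegrallyClosed.exists_algebraMap_eq_of_isIntegral_pow (R := A)
    (K := Kf) (x := algebraMap A Kf b ^ q * Ψ s) (n := 2) (by norm_num)
    (by rw [hσ]; exact isIntegral_algebraMap)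
  let ψ : A →ₐ[k] E := (Ψ.symm : Kf →ₐ[k] E).comp (IsScalarTower.toAlgHom k A Kf)
  have hψ : ∀ a, ψ a = Ψ.symm (algebraMap A Kf a) := fun _ => rfl
  have hψt : ∀ a, aeval (fun l => ψ (MvPolynomial.X l)) a = ψ a := fun a => by
    exact (DFunLike.congr_fun (MvPolynomial.aeval_unique ψ) a).symm
  refine ⟨fun l => ψ (MvPolynomial.X l), p, σ, ψ b, ?_, hinj ?_, fun a => ?_⟩
  · rw [hψ]
    exact (map_ne_zero_iff _ Ψ.symm.injective).2 ((map_ne_zero_iff _ hinj).2 hb0)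
  · rw [map_pow, hσ', hσ]
  · rw [hψt, hψ, hp', map_mul, Ψ.symm_apply_apply, hψ]

/-- Clearing denominators of a curve over the fraction field of a domain, and of one further element
`h`. -/
theorem clear_denominators {A E : Type*} [CommRing A] [IsDomain A] [Field E] [Algebra A E]
    [IsFractionRing A E] [Algebra k A] [Algebra k E] [IsScalarTower k A E]
    {F : MvPolynomial τ k} {q : ℕ} (hq : 0 < q)
    (hF : F.IsHomogeneous (2 * q)) (X : τ → Polynomial E) (S : Polynomial E) (h : E)
    (hS : S ^ 2 = aeval X F) :
    ∃ (g : A) (X' : τ → Polynomial A) (S' : Polynomial A) (H : A), g ≠ 0 ∧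
      S' ^ 2 = aeval X' F ∧ (∀ a, (X' a).map (algebraMap A E) = Polynomial.C (algebraMap A E g) * X a)
      ∧ algebraMap A E H = algebraMap A E g * h := by
  classical
  have hinj : Function.Injective (algebraMap A E) := IsFractionRing.injective A E
  have hn : ∀ p : Polynomial E, ∃ b : A, b ≠ 0 ∧ ∃ p' : Polynomial A,
      p'.map (algebraMap A E) = Polynomial.C (algebraMap A E b) * p := fun p => by
    obtain ⟨b, hb⟩ := IsLocalization.integerNormalization_map_to_map (nonZeroDivisors A) p
    refine ⟨b, nonZeroDivisors.ne_zero b.2, _, hb.trans ?_⟩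
    rw [← IsScalarTower.algebraMap_smul E (b : A) p, Polynomial.smul_eq_C_mul]
  have := Fintype.ofFinite τ
  choose b hb p' hp' using hn
  let g : A := (∏ a, b (X a)) * (b S * b (Polynomial.C h))
  have hdvd : ∀ a, b (X a) ∣ g := fun a =>
    (Finset.dvd_prod_of_mem (fun a => b (X a)) (Finset.mem_univ a)).mul_right _
  choose e he using hdvd
  obtain ⟨q', rfl⟩ : ∃ q', q = q' + 1 := ⟨q - 1, by omega⟩
  have hX : ∀ a, (Polynomial.C (e a) * p' (X a)).map (algebraMap A E) =
      Polynomial.C (algebraMap A E g) * X a := fun a => by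
    rw [Polynomial.map_mul, Polynomial.map_C, hp', he a, map_mul, map_mul]
    ring
  let gS : A := (∏ a, b (X a)) * b (Polynomial.C h)
  have hgS : g = b S * gS := by simp only [g, gS]; ring
  let gh : A := (∏ a, b (X a)) * b S
  have hgh : g = b (Polynomial.C h) * gh := by simp only [g, gh]; ring
  have hSm : (Polynomial.C (g ^ q' * gS) * p' S).map (algebraMap A E) =
      Polynomial.C (algebraMap A E g) ^ (q' + 1) * S := by
    rw [Polynomial.map_mul, Polynomial.map_C, hp', pow_succ]
    conv_rhs => rw [hgS]
    rw [hgS]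
    simp only [map_mul, map_pow]
    ring
  refine ⟨g, fun a => Polynomial.C (e a) * p' (X a), Polynomial.C (g ^ q' * gS) * p' S,
    gh * (p' (Polynomial.C h)).coeff 0, ?_, ?_, hX, ?_⟩
  · exact mul_ne_zero (Finset.prod_ne_zero_iff.2 fun a _ => hb _) (mul_ne_zero (hb _) (hb _))
  · apply Polynomial.map_injective _ hinj
    rw [Polynomial.map_pow, hSm, mul_pow, hS]
    have h1 : (aeval (fun a => Polynomial.C (e a) * p' (X a)) F).map (algebraMap A E) =
        aeval (fun a => (Polynomial.C (e a) * p' (X a)).map (algebraMap A E)) F :=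
      MvPolynomial.comp_aeval_apply (R := k) _
        (Polynomial.mapAlgHom (IsScalarTower.toAlgHom k A E)) F
    rw [h1]
    simp only [hX]
    rw [aeval_mul_of_isHomogeneous hF]
    ring
  · have h1 := congrArg (fun p => Polynomial.coeff p 0) (hp' (Polynomial.C h))
    simp only [Polynomial.coeff_map, Polynomial.coeff_C_mul, Polynomial.coeff_C_zero] at h1
    have h2 : algebraMap A E g = algebraMap A E (b (Polynomial.C h)) * algebraMap A E gh := by
      rw [← map_mul, ← hgh]
    rw [map_mul, h1, h2]
    ring

/-- If `R` becomes stably rational over `k`, then for a point `(x, s)` over `R` with `s² = F(x)` there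
is a polynomial curve over `R` on which `F` is a square, starting at a multiple of `x` and with top
coefficient (in the coordinates selected by `ι`) a multiple of a constant vector `κ`. The auxiliary
variables are specialised to elements of `R` where the denominators do not vanish. -/
theorem exists_curve {F : MvPolynomial τ k} {q : ℕ} (hq : 0 < q)
    (hF : F.IsHomogeneous (2 * q)) (x : τ → R) (s : R) (hs : s ^ 2 = aeval x F) {m D : ℕ}
    (Ψ : FractionRing (MvPolynomial (Fin m) R) ≃ₐ[k] FractionRing (MvPolynomial (Fin D) k))
    {T : Type*} [Finite T] (ι : T → τ) (hι : ∃ i, x (ι i) ≠ 0) :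
    ∃ (X : τ → Polynomial R) (S : Polynomial R) (M : ℕ) (H g : R) (κ : T → k),
      S ^ 2 = aeval X F ∧ (∀ i, (X (ι i)).natDegree ≤ M) ∧ H ≠ 0 ∧ g ≠ 0 ∧ (∃ i, κ i ≠ 0) ∧
      (∀ i, (X (ι i)).coeff 0 = H * x (ι i)) ∧
      ∀ i, (X (ι i)).coeff M = g * algebraMap k R (κ i) := by
  let Rz := MvPolynomial (Fin m) R
  let E := FractionRing Rz
  have hinjE : Function.Injective (algebraMap Rz E) := IsFractionRing.injective Rz E
  have hC : Function.Injective (algebraMap R Rz) := MvPolynomial.C_injective _ _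
  let xE : τ → E := fun a => algebraMap Rz E (algebraMap R Rz (x a))
  have hsE : (algebraMap Rz E (algebraMap R Rz s)) ^ 2 = aeval xE F := by
    rw [← map_pow, ← map_pow, hs]
    have h1 := MvPolynomial.aeval_algebraMap_apply (R := k) Rz x F
    have h2 := MvPolynomial.aeval_algebraMap_apply (R := k) E (fun a => algebraMap R Rz (x a)) F
    exact (congrArg (algebraMap Rz E) h1.symm).trans h2.symm
  obtain ⟨t, p, σ, h, hh, hσ, hp⟩ := exists_parametrisation hF xE _ hsE Ψ
  obtain ⟨M, c, hM, i₀, hi₀⟩ := exists_direction (fun i => p (ι i)) (by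
    obtain ⟨i, hi⟩ := hι
    refine ⟨i, fun h0 => ?_⟩
    have := hp (ι i)
    rw [h0, map_zero] at this
    refine mul_ne_zero hh ?_ this.symm
    exact (map_ne_zero_iff _ hinjE).2 ((map_ne_zero_iff _ hC).2 hi))
  have hS : (shift t c σ) ^ 2 = aeval (fun a => shift t c (p a)) F := by
    rw [← map_pow, hσ]
    exact MvPolynomial.comp_aeval_apply (R := k) _ (shift t c) F
  obtain ⟨g, X', S', H, hg, hS', hX', hH⟩ := clear_denominators (A := Rz) hq hF
    (fun a => shift t c (p a)) (shift t c σ) h hS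
  have hH0 : H ≠ 0 := fun h0 => by
    rw [h0, map_zero] at hH
    exact mul_ne_zero ((map_ne_zero_iff _ hinjE).2 hg) hh hH.symm
  have : Infinite R := Infinite.of_injective _ (FaithfulSMul.algebraMap_injective k R)
  obtain ⟨z, hz⟩ : ∃ z, MvPolynomial.eval z (g * H) ≠ 0 := by
    by_contra! h'
    exact mul_ne_zero hg hH0 (MvPolynomial.funext fun v => by rw [h', map_zero])
  rw [map_mul] at hz
  let ev : Rz →ₐ[k] R := (aeval (R := R) z).restrictScalars k
  have hev : ∀ a, ev a = MvPolynomial.eval z a := fun a => by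
    exact DFunLike.congr_fun (MvPolynomial.coe_aeval_eq_eval z) a
  refine ⟨fun a => (X' a).map (ev : Rz →+* R), S'.map (ev : Rz →+* R), M, ev H, ev g,
    fun i => MvPolynomial.eval c (MvPolynomial.homogeneousComponent M (p (ι i))), ?_, fun i => ?_,
    ?_, ?_, ⟨i₀, hi₀⟩, fun i => ?_, fun i => ?_⟩
  · rw [← Polynomial.map_pow, hS']
    exact MvPolynomial.comp_aeval_apply (R := k) _ (Polynomial.mapAlgHom ev) F
  · refine Polynomial.natDegree_map_le.trans ?_
    rw [← Polynomial.natDegree_map_eq_of_injective hinjE, hX']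
    exact (Polynomial.natDegree_C_mul_le _ _).trans (shift_natDegree t c _ (hM i)).1
  · rw [hev]; exact right_ne_zero_of_mul hz
  · rw [hev]; exact left_ne_zero_of_mul hz
  · have h1 : (X' (ι i)).coeff 0 = H * algebraMap R Rz (x (ι i)) := hinjE (by
      rw [← Polynomial.coeff_map, hX', Polynomial.coeff_C_mul, shift_coeff_zero, hp, map_mul, hH]
      exact (mul_assoc _ _ _).symm)
    rw [Polynomial.coeff_map, h1, map_mul]
    congr 1
    change ev (MvPolynomial.C _) = _
    rw [hev, MvPolynomial.eval_C]
  · have h1 : (X' (ι i)).coeff M = g * algebraMap k Rz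
        (MvPolynomial.eval c (MvPolynomial.homogeneousComponent M (p (ι i)))) := hinjE (by
      rw [← Polynomial.coeff_map, hX', Polynomial.coeff_C_mul, (shift_natDegree t c _ (hM i)).2,
        map_mul, ← IsScalarTower.algebraMap_apply k Rz E])
    rw [Polynomial.coeff_map, h1, map_mul]
    congr 1
    exact ev.commutes _

end Curve

/-! ### The cone ring -/

section ConeRing
open MvPolynomial

variable {n r d : ℕ}

/-- The quadratic extension `ℂ[x, y] ⊕ ℂ[x, y] √F`, a second model of the cone ring. -/
abbrev QuadCone (F : BranchSpace n r d) : Type := QuadraticAlgebra (DCAmb n r) F.1 0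

/-- The quotient map onto the cone ring. -/
noncomputable def coneMk (F : BranchSpace n r d) :
    MvPolynomial ((Fin (n + 1) ⊕ Fin r) ⊕ Fin 1) ℂ →ₐ[ℂ] DoubleCoverConeRing F :=
  Ideal.Quotient.mkₐ ℂ _

/-- The coordinate functions `x`, `y` on the cone. -/
noncomputable def coneVar (F : BranchSpace n r d) (a : Fin (n + 1) ⊕ Fin r) :
    DoubleCoverConeRing F :=
  coneMk F (X (Sum.inl a))

/-- The square root `s` of `F` on the cone. -/
noncomputable def coneSqrt (F : BranchSpace n r d) : DoubleCoverConeRing F :=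
  coneMk F (X (Sum.inr 0))

theorem mk_rename (F : BranchSpace n r d) (u : DCAmb n r) :
    coneMk F (rename Sum.inl u) = aeval (coneVar F) u := by
  have h : (coneMk F).comp (rename Sum.inl) = aeval (coneVar F) := by
    refine MvPolynomial.algHom_ext fun a => ?_
    rw [AlgHom.comp_apply, rename_X, aeval_X]
    rfl
  exact DFunLike.congr_fun h u

theorem coneSqrt_sq (F : BranchSpace n r d) : coneSqrt F ^ 2 = aeval (coneVar F) F.1 := by
  rw [← mk_rename]
  exact (Ideal.Quotient.eq (I := Ideal.span {X (Sum.inr 0) ^ 2 - rename Sum.inl F.1})).2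
    (Ideal.subset_span rfl)

/-- The comparison map `ℂ[x, y, s] / (s² - F) → ℂ[x, y] ⊕ ℂ[x, y] √F`. -/
noncomputable def coneMap (F : BranchSpace n r d) : DoubleCoverConeRing F →ₐ[ℂ] QuadCone F :=
  Ideal.Quotient.liftₐ (Ideal.span {X (Sum.inr 0) ^ 2 - rename Sum.inl F.1})
    (aeval (Sum.elim (fun a => algebraMap (DCAmb n r) (QuadCone F) (X a))
      fun _ => (⟨0, 1⟩ : QuadCone F))) (by
    intro a ha
    have hle : Ideal.span {X (Sum.inr 0) ^ 2 - rename Sum.inl F.1} ≤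
        RingHom.ker (aeval (R := ℂ) (Sum.elim
          (fun a => algebraMap (DCAmb n r) (QuadCone F) (X a))
          fun _ : Fin 1 => (⟨0, 1⟩ : QuadCone F))) := by
      rw [Ideal.span_singleton_le_iff_mem, RingHom.mem_ker, map_sub, map_pow, aeval_X,
        aeval_rename, sub_eq_zero]
      have h1 : aeval (R := ℂ) (fun a => algebraMap (DCAmb n r) (QuadCone F) (X a)) F.1 =
          algebraMap (DCAmb n r) (QuadCone F) F.1 := by
        exact (DFunLike.congr_fun (aeval_unique
          (IsScalarTower.toAlgHom ℂ (DCAmb n r) (QuadCone F))) F.1).symm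
      refine Eq.trans ?_ h1.symm
      refine QuadraticAlgebra.ext ?_ ?_
      · change (_ : QuadCone F).re = F.1
        simp [pow_two]
      · change (_ : QuadCone F).im = 0
        simp [pow_two]
    exact hle ha)

theorem coneMap_var (F : BranchSpace n r d) (a : Fin (n + 1) ⊕ Fin r) :
    coneMap F (coneVar F a) = algebraMap (DCAmb n r) (QuadCone F) (X a) := by
  refine (Ideal.Quotient.liftₐ_apply _ _ _ _).trans ?_
  exact aeval_X _ _

theorem coneMap_sqrt (F : BranchSpace n r d) : coneMap F (coneSqrt F) = ⟨0, 1⟩ := by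
  refine (Ideal.Quotient.liftₐ_apply _ _ _ _).trans ?_
  exact aeval_X _ _

theorem coneMap_aeval (F : BranchSpace n r d) (u : DCAmb n r) :
    coneMap F (aeval (coneVar F) u) = algebraMap (DCAmb n r) (QuadCone F) u := by
  have h1 : (coneMap F).comp (aeval (coneVar F)) =
      IsScalarTower.toAlgHom ℂ (DCAmb n r) (QuadCone F) := by
    refine MvPolynomial.algHom_ext fun a => ?_
    rw [AlgHom.comp_apply, aeval_X, coneMap_var]
    rfl
  exact DFunLike.congr_fun h1 u

/-- Every element of the cone ring is `u + v s` with `u`, `v` polynomials in `x`, `y`. -/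
theorem cone_normal_form (F : BranchSpace n r d) (z : DoubleCoverConeRing F) :
    ∃ u v : DCAmb n r, z = aeval (coneVar F) u + aeval (coneVar F) v * coneSqrt F := by
  obtain ⟨p, rfl⟩ : ∃ p, coneMk F p = z := Ideal.Quotient.mkₐ_surjective ℂ
    (Ideal.span {X (Sum.inr 0) ^ 2 - rename Sum.inl F.1}) z
  induction p using MvPolynomial.induction_on with
  | C c =>
    refine ⟨C c, 0, ?_⟩
    rw [map_zero, zero_mul, add_zero, ← mk_rename, rename_C]
  | add p q hp hq =>
    obtain ⟨u, v, h⟩ := hp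
    obtain ⟨u', v', h'⟩ := hq
    refine ⟨u + u', v + v', ?_⟩
    rw [map_add, map_add, map_add, h, h']
    ring
  | mul_X p a hp =>
    obtain ⟨u, v, h⟩ := hp
    rcases a with a | a
    · refine ⟨u * X a, v * X a, ?_⟩
      rw [map_mul, map_mul, map_mul, aeval_X, h, coneVar]
      ring
    · obtain rfl : a = 0 := Subsingleton.elim _ _
      refine ⟨v * F.1, u, ?_⟩
      have h1 : aeval (coneVar F) (v * F.1) = aeval (coneVar F) v * coneSqrt F ^ 2 := by
        rw [coneSqrt_sq]
        exact map_mul _ _ _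
      rw [map_mul, h, h1, coneSqrt]
      ring

theorem coneMap_injective (F : BranchSpace n r d) : Function.Injective (coneMap F) := by
  refine (injective_iff_map_eq_zero _).2 fun z hz => ?_
  obtain ⟨u, v, rfl⟩ := cone_normal_form F z
  rw [map_add, map_mul, coneMap_aeval, coneMap_aeval, coneMap_sqrt] at hz
  have h1 := congrArg QuadraticAlgebra.re hz
  have h2 := congrArg QuadraticAlgebra.im hz
  simp only [QuadraticAlgebra.re_add, QuadraticAlgebra.im_add, QuadraticAlgebra.re_mul,
    QuadraticAlgebra.im_mul, QuadraticAlgebra.re_zero, QuadraticAlgebra.im_zero] at h1 h2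
  have e1 : ∀ w : DCAmb n r, (algebraMap (DCAmb n r) (QuadCone F) w).re = w := fun _ => rfl
  have e2 : ∀ w : DCAmb n r, (algebraMap (DCAmb n r) (QuadCone F) w).im = 0 := fun _ => rfl
  simp only [e1, e2, mul_zero, zero_mul, mul_one, add_zero, zero_add] at h1 h2
  rw [h1, h2]
  simp

theorem branch_isHomogeneous (F : BranchSpace n r d) : F.1.IsHomogeneous d := by
  intro m hm
  rw [← (F.2 m hm).1, Finsupp.weight_apply, Finsupp.sum_fintype _ _ (by simp),
    Fintype.sum_sum_type]
  simp

/-- A member of the linear system that degenerates to the special form has an integral double cover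
that is not stably rational. -/
theorem main_of_degen (F : BranchSpace n r d) (hn : 0 < n) (hd : 2 ≤ d) (hdeven : Even d)
    {P : FormData n (Option (Fin r))} {V : ValuationSubring ℂ}
    [CharP (IsLocalRing.ResidueField V) 2] (dg : Degen P V F.1) (j₀ : Fin r)
    (hα : P.α = some j₀) (hβ : P.β = none) :
    IsDomain (DoubleCoverConeRing F) ∧ ¬ IsStablyRationalSpec (DoubleCoverConeRing F) := by
  obtain ⟨hB, hcore⟩ := core dg hn j₀ hα hβ
  have hB' : IsDomain (QuadCone F) := hB
  have hinj := coneMap_injective F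
  have hR : IsDomain (DoubleCoverConeRing F) := Function.Injective.isDomain
    (coneMap F).toRingHom hinj
  refine ⟨hR, ?_⟩
  rintro ⟨m, D, ⟨Ψ⟩⟩
  obtain ⟨q, hq⟩ := hdeven
  obtain ⟨Y, S, M, H, g, κ, hS, hM, hH, hg, hκ, h0, h1⟩ := exists_curve (q := q) (by omega)
    (by rw [two_mul, ← hq]; exact branch_isHomogeneous F) (coneVar F) (coneSqrt F)
    (coneSqrt_sq F) Ψ (Sum.inl : Fin (n + 1) → Fin (n + 1) ⊕ Fin r) ⟨0, fun h => by
      have h' := congrArg (coneMap F) h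
      rw [coneMap_var, map_zero] at h'
      exact X_ne_zero _ (congrArg QuadraticAlgebra.re h')⟩
  have hS' : (S.map (coneMap F : _ →+* QuadCone F)) ^ 2 =
      aeval (fun a => (Y a).map (coneMap F : _ →+* QuadCone F)) F.1 := by
    rw [← Polynomial.map_pow, hS]
    exact MvPolynomial.comp_aeval_apply (R := ℂ) _ (Polynomial.mapAlgHom (coneMap F)) F.1
  refine hcore (fun i => (Y (Sum.inl i)).map (coneMap F : _ →+* QuadCone F))
    (fun o => o.elim 1 fun j => (Y (Sum.inr j)).map (coneMap F : _ →+* QuadCone F))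
    (S.map (coneMap F : _ →+* QuadCone F)) ⟨none, one_ne_zero⟩ ?_ M
    (fun i => Polynomial.natDegree_map_le.trans (hM i)) (coneMap F H) (coneMap F g)
    ((map_ne_zero_iff _ hinj).2 hH) ((map_ne_zero_iff _ hinj).2 hg) κ hκ (fun i => ?_) fun i => ?_
  · rw [hval_one _ _ _ _ rfl, hS', aeval_def]
    congr 1
    funext a
    rcases a with a | a <;> rfl
  · rw [Polynomial.coeff_map, h0, ← coneMap_var]
    exact map_mul _ _ _
  · rw [Polynomial.coeff_map, h1]
    exact (map_mul _ _ _).trans (congrArg _ ((coneMap F).commutes _))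

theorem main_aux
    (n r : ℕ) (hn : 2 ≤ n)
    (hr1 : 2^(n-1) - 1 ≤ r) (hr2 : r ≤ 2^n - 2)
    (d : ℕ) (hdeven : Even d) (hd : 2^(n+1) + 2*n - 2 ≤ d) :
    VeryGenerallyOn (branchCoords n r d) fun F =>
      IsDomain (DoubleCoverConeRing F) ∧ ¬ IsStablyRationalSpec (DoubleCoverConeRing F) := by
  have hpow : 0 < 2 ^ (n + 1) := by positivity
  have hd2 : 2 ≤ d := by omega
  refine veryGenerallyOn_of_injective fun F hF => ?_
  obtain ⟨P, j₀, hα, hβ, hP⟩ := exists_formData hn hr1 hr2 hdeven hd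
  obtain ⟨V, hV, ⟨dg⟩⟩ := exists_degen F hF P hP hd2 hdeven
  exact main_of_degen F (by omega) hd2 hdeven dg j₀ hα hβ

end ConeRing

noncomputable section
open MvPolynomial

/-- **Corollary 7.4 (Schreieder).**  Let `n ≥ 2` and `r` be integers with
`2^{n-1} - 1 ≤ r ≤ 2ⁿ - 2`, and set `N = r + n`.  Then a double cover of `ℙᴺ` branched
along a very general complex hypersurface of even degree `d ≥ 2^{n+1} + 2n - 2` with
multiplicity `d - 2` along a fixed `(r-1)`-plane is not stably rational. -/
theorem very_general_double_cover_not_stably_rational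
    (n r : ℕ) (hn : 2 ≤ n)
    (hr1 : 2^(n-1) - 1 ≤ r) (hr2 : r ≤ 2^n - 2)
    (d : ℕ) (hdeven : Even d) (hd : 2^(n+1) + 2*n - 2 ≤ d) :
    VeryGenerallyOn (branchCoords n r d) fun F =>
      IsDomain (DoubleCoverConeRing F) ∧ ¬ IsStablyRationalSpec (DoubleCoverConeRing F) := by
  exact main_aux n r hn hr1 hr2 d hdeven hd
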